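/- arXiv:1902.10839 — 3 statements merged into one kernel-verified Lean document; each statement's English description precedes it below -/
import Mathlib

section
/- Let m, r, h, k be integers with m ≥ 1, 1 ≤ r < m, 0 ≤ h < k, gcd(h,k) = 1; set d := gcd(m,k), m' := m/d, k' := k/d, let ℏ be an integer with ℏ·m'h ≡ −1 (mod k'), and b := (ℏm'h + 1)/k'. Let z be a complex number with Re(z) > 0, τ := (h + iz)/k, λ := ⌈rh/d⌉ and λ* := λ − rh/d. Then rτ/(k'·mτ − m'h) = rd/(mk) − i·rh·d/(mkz), and rτ/(k'·mτ − m'h) + λ·(ℏ·mτ − b)/(k'·mτ − m'h) = rd/(mk) + λ·ℏd/k + i·λ*·d²/(mkz). -/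
open Complex

noncomputable section

/-- `λ_{m,r}(h,k) := ⌈rh/gcd(m,k)⌉` (with the convention `gcd(0,n) = n`). -/
def lamF (m r h k : ℕ) : ℤ := ⌈(r * h : ℚ) / (Nat.gcd m k : ℚ)⌉

/-- `λ*_{m,r}(h,k) := λ_{m,r}(h,k) − rh/gcd(m,k)`. -/
def lamStar (m r h k : ℕ) : ℚ := (lamF m r h k : ℚ) - (r * h : ℚ) / (Nat.gcd m k : ℚ)

/-! For a matrix with rows `(a, b)`, `(c, d)` of determinant `1` and `c ≠ 0`, the Möbius image is
`γ(x) = a/c - 1/(c(cx + d))`. At `x = mτ` the denominator `k'·mτ - m'h` collapses to `m'·(iz)`, so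
both `rτ/(k'·mτ - m'h)` and `γ(mτ)` are a constant plus a multiple of `1/z`; in the sum with weight
`λ` the coefficients of `1/z` combine to `λ - rh/d`. -/

section Field

variable {K : Type*} [Field K]

theorem moebius_eq_div_sub {a b c d x : K} (hdet : a * d - b * c = 1) (hc : c ≠ 0)
    (hx : c * x + d ≠ 0) :
    (a * x + b) / (c * x + d) = a / c - 1 / (c * (c * x + d)) := by
  have hcx := mul_ne_zero hc hx
  rw [div_sub_div _ _ hc hcx, div_eq_div_iff hx (mul_ne_zero hc hcx)]
  linear_combination -(c * (c * x + d)) * hdet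

theorem mul_mul_add_div_sub_eq_mul {m k m' k' : K} (hmk : k' * m = m' * k) (hk : k ≠ 0)
    (h w : K) : k' * (m * ((h + w) / k)) - m' * h = m' * w := by
  field_simp
  linear_combination (h + w) * hmk

theorem mul_add_div_div_mul {w : K} (hw : w ≠ 0) (r h k m' : K) :
    r * ((h + w) / k) / (m' * w) = r / (m' * k) + r * h / (m' * k * w) := by
  field_simp
  ring

theorem moebius_mul_add_div_eq {m k m' k' h ℏ b w : K} (hmk : k' * m = m' * k) (hk : k ≠ 0)
    (hk' : k' ≠ 0) (hm' : m' ≠ 0) (hw : w ≠ 0) (hb : b * k' = ℏ * (m' * h) + 1) :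
    (ℏ * (m * ((h + w) / k)) - b) / (k' * (m * ((h + w) / k)) - m' * h) =
      ℏ / k' - 1 / (k' * (m' * w)) := by
  have hden := mul_mul_add_div_sub_eq_mul hmk hk h w
  have hdet : ℏ * -(m' * h) - -b * k' = 1 := by linear_combination hb
  have hne : k' * (m * ((h + w) / k)) + -(m' * h) ≠ 0 := by
    rw [← sub_eq_add_neg, hden]
    exact mul_ne_zero hm' hw
  have hmoebius := moebius_eq_div_sub hdet hk' hne
  simpa only [← sub_eq_add_neg, hden] using hmoebius

end Field

theorem div_mul_I_mul (x y z : ℂ) : x / (y * (I * z)) = -(I * x / (y * z)) := by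
  rw [mul_left_comm, mul_comm I, ← div_div, div_I]
  ring

theorem gamma_star_identities_general {m k d z : ℂ} (hm : m ≠ 0) (hk : k ≠ 0) (hd : d ≠ 0)
    (hz : z ≠ 0) {h ℏ b : ℂ} (hb : b * (k / d) = ℏ * (m / d * h) + 1) (r l : ℂ) :
    r * ((h + I * z) / k) / (k / d * (m * ((h + I * z) / k)) - m / d * h) =
      r * d / (m * k) - I * r * h * d / (m * k * z) ∧
    r * ((h + I * z) / k) / (k / d * (m * ((h + I * z) / k)) - m / d * h) +
        l * ((ℏ * (m * ((h + I * z) / k)) - b) /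
          (k / d * (m * ((h + I * z) / k)) - m / d * h)) =
      r * d / (m * k) + l * ℏ * d / k + I * (l - r * h / d) * d ^ 2 / (m * k * z) := by
  have hIz : I * z ≠ 0 := mul_ne_zero I_ne_zero hz
  have hmk : k / d * m = m / d * k := by ring
  have hfirst : r * ((h + I * z) / k) / (m / d * (I * z)) =
      r * d / (m * k) - I * r * h * d / (m * k * z) := by
    rw [mul_add_div_div_mul hIz, div_mul_I_mul]
    field_simp
    ring
  have hmoebius : (ℏ * (m * ((h + I * z) / k)) - b) /
      (k / d * (m * ((h + I * z) / k)) - m / d * h) =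
        ℏ * d / k + I * d ^ 2 / (m * k * z) := by
    rw [moebius_mul_add_div_eq hmk hk (div_ne_zero hk hd) (div_ne_zero hm hd) hIz hb,
      ← mul_assoc, div_mul_I_mul]
    field_simp
    ring
  rw [hmoebius, mul_mul_add_div_sub_eq_mul hmk hk, hfirst]
  refine ⟨rfl, ?_⟩
  field_simp
  ring

/-- With `m ≥ 1`, `1 ≤ r < m`, `0 ≤ h < k`, `gcd(h,k) = 1`,
`d := gcd(m,k)`, `m' := m/d`, `k' := k/d`, `ℏ·m'h ≡ −1 (mod k')`, `b := (ℏm'h+1)/k'`,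
`Re(z) > 0`, `τ := (h+iz)/k`, `λ := ⌈rh/d⌉` and `λ* := λ − rh/d`, one has
`rτ/(k'·mτ − m'h) = rd/(mk) − i·rh·d/(mkz)` and
`rτ/(k'·mτ − m'h) + λ·(ℏ·mτ − b)/(k'·mτ − m'h) = rd/(mk) + λ·ℏd/k + i·λ*·d²/(mkz)`. -/
theorem gamma_star_identities (m r h k : ℕ) (hm : 1 ≤ m) (hr : 1 ≤ r) (hrm : r < m)
    (hhk : h < k) (hcop : Nat.gcd h k = 1) (ℏ b : ℤ)
    (hcong : ℏ * (((m / Nat.gcd m k) * h : ℕ) : ℤ) ≡ -1 [ZMOD ((k / Nat.gcd m k : ℕ) : ℤ)])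
    (hb : b * ((k / Nat.gcd m k : ℕ) : ℤ) = ℏ * (((m / Nat.gcd m k) * h : ℕ) : ℤ) + 1)
    (z : ℂ) (hz : 0 < z.re) :
    ((r : ℂ) * (((h : ℂ) + Complex.I * z) / (k : ℂ))) /
        (((k / Nat.gcd m k : ℕ) : ℂ) * ((m : ℂ) * (((h : ℂ) + Complex.I * z) / (k : ℂ))) -
          ((m / Nat.gcd m k : ℕ) : ℂ) * (h : ℂ)) =
      (r : ℂ) * (Nat.gcd m k : ℂ) / ((m : ℂ) * (k : ℂ)) -
        Complex.I * (r : ℂ) * (h : ℂ) * (Nat.gcd m k : ℂ) / ((m : ℂ) * (k : ℂ) * z) ∧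
    ((r : ℂ) * (((h : ℂ) + Complex.I * z) / (k : ℂ))) /
        (((k / Nat.gcd m k : ℕ) : ℂ) * ((m : ℂ) * (((h : ℂ) + Complex.I * z) / (k : ℂ))) -
          ((m / Nat.gcd m k : ℕ) : ℂ) * (h : ℂ)) +
      (lamF m r h k : ℂ) *
        (((ℏ : ℂ) * ((m : ℂ) * (((h : ℂ) + Complex.I * z) / (k : ℂ))) - (b : ℂ)) /
          (((k / Nat.gcd m k : ℕ) : ℂ) * ((m : ℂ) * (((h : ℂ) + Complex.I * z) / (k : ℂ))) -
            ((m / Nat.gcd m k : ℕ) : ℂ) * (h : ℂ))) =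
      (r : ℂ) * (Nat.gcd m k : ℂ) / ((m : ℂ) * (k : ℂ)) +
        (lamF m r h k : ℂ) * (ℏ : ℂ) * (Nat.gcd m k : ℂ) / (k : ℂ) +
        Complex.I * ((lamStar m r h k : ℚ) : ℂ) * (Nat.gcd m k : ℂ) ^ 2 /
          ((m : ℂ) * (k : ℂ) * z) := by
  have hd : ((Nat.gcd m k : ℕ) : ℂ) ≠ 0 := mod_cast (Nat.gcd_pos_of_pos_left k hm).ne'
  have hb' : (b : ℂ) * ((k / Nat.gcd m k : ℕ) : ℂ) = ℏ * (((m / Nat.gcd m k : ℕ) : ℂ) * h) + 1 := by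
    simpa only [Int.cast_mul, Int.cast_add, Int.cast_natCast, Int.cast_one, Nat.cast_mul]
      using congrArg (Int.cast : ℤ → ℂ) hb
  rw [Nat.cast_div (Nat.gcd_dvd_left m k) hd, Nat.cast_div (Nat.gcd_dvd_right m k) hd] at hb' ⊢
  simpa only [lamStar, Rat.cast_sub, Rat.cast_intCast, Rat.cast_div, Rat.cast_mul,
    Rat.cast_natCast] using gamma_star_identities_general (mod_cast (by omega : m ≠ 0))
    (mod_cast (by omega : k ≠ 0)) hd (ne_zero_of_re_pos hz) hb' r (lamF m r h k)
end
end

section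
/- Let m, r, h, k be integers with m ≥ 1, 1 ≤ r < m, 0 ≤ h < k ≠ 0, gcd(h,k) = 1; set d := gcd(m,k), m' := m/d, k' := k/d, let ℏ be an integer with ℏ·m'h ≡ −1 (mod k'). Let z be a complex number with Re(z) > 0 and τ := (h+iz)/k, and set λ := ⌈rh/d⌉, λ* := λ − rh/d, ς̃ := rd/(mk) + λℏd/k + i·λ*·d²/(mkz), τ̃ := ℏd/k + i·d²/(mkz). Then Zh(rτ; mτ) = i·(−1)^λ·e^{−2πi·s(m'h,k')} · exp(πi( rh/k − rd/(mk) + 2rdλ*/(mk) + (ℏd/k)(λ² − λ) )) · exp( (π/(12k))( (2m − 12r + 12r²/m)·z − (2d²/m + (12d²/m)(λ*² − λ*))·(1/z) ) ) · Zh(ς̃; τ̃). -/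
open Complex Finset

noncomputable section

/-- The sawtooth function `((x)) := x − ⌊x⌋ − 1/2` if `x ∉ ℤ`, and `0` if `x ∈ ℤ`. -/
def saw (x : ℝ) : ℝ := if Int.fract x = 0 then 0 else Int.fract x - 1 / 2

/-- The Dedekind sum `s(d,c) := Σ_{n mod c} ((dn/c))·((n/c))`. -/
def dedekindSum (d c : ℕ) : ℝ :=
  ∑ n ∈ Finset.range c, saw ((d : ℝ) * (n : ℝ) / (c : ℝ)) * saw ((n : ℝ) / (c : ℝ))

/-- `Zh(ς;τ) := ∏_{k≥0}(1 − ζq^k)(1 − ζ⁻¹q^{k+1})` with `q := e^{2πiτ}`, `ζ := e^{2πiς}`. -/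
def Zh (ς τ : ℂ) : ℂ :=
  ∏' k : ℕ, (1 - Complex.exp (2 * (Real.pi : ℂ) * Complex.I * ς) *
      Complex.exp (2 * (Real.pi : ℂ) * Complex.I * τ) ^ k) *
    (1 - (Complex.exp (2 * (Real.pi : ℂ) * Complex.I * ς))⁻¹ *
      Complex.exp (2 * (Real.pi : ℂ) * Complex.I * τ) ^ (k + 1))

/-!
By the Jacobi triple product, `exp(πi(τ/6 - ς)) Zh(ς; τ)` is the quotient of the odd Jacobi theta
function by the Dedekind eta function. The weight `1/2` factors of the two cancel, so the quotient
is covariant under `τ ↦ τ + 1` and `τ ↦ -1/τ` up to roots of unity and a Gaussian in `ς`. Running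
the Euclidean algorithm on the lower row of a matrix in `SL₂(ℤ)` then gives its transformation law,
and Dedekind reciprocity is exactly what makes the multiplier consistent from one step to the next.
With `w = i m' z`, the points `mτ` and `τ̃` are `(w + m'h)/k'` and `(ℏ - 1/w)/k'`, so the theorem is
this law for the lower row `(k', -m'h)`, followed by the elliptic translation by `λ τ̃`.
-/

open Filter Topology
open scoped Real

section FiniteTripleProduct

variable {K : Type*} [Field K] {q x : K}

/-- The `q`-Pochhammer symbol `(q; q)_n`. -/
def qPochhammer (q : K) (n : ℕ) : K := ∏ j ∈ range n, (1 - q ^ (j + 1))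

/-- The reciprocal `1 / (q; q)_k`, set to zero for `k < 0` so that the recursion
`qPochhammerInv_sub_one` holds for every integer `k`. -/
def qPochhammerInv (q : K) (k : ℤ) : K := if 0 ≤ k then (qPochhammer q k.toNat)⁻¹ else 0

/-- The `q`-binomial coefficient `[2n choose n + k]_q`, which vanishes for `|k| > n`. -/
def centralQBinomial (q : K) (n : ℕ) (k : ℤ) : K :=
  qPochhammer q (2 * n) * qPochhammerInv q (n + k) * qPochhammerInv q (n - k)

/-- The term `(-x)^k q^(k(k-1)/2)` of the Jacobi triple product series; the integer division is
exact. -/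
def tripleProductTerm (q x : K) (k : ℤ) : K := (-x) ^ k * q ^ (k * (k - 1) / 2)

lemma qPochhammer_succ (q : K) (n : ℕ) :
    qPochhammer q (n + 1) = qPochhammer q n * (1 - q ^ (n + 1)) :=
  prod_range_succ _ n

lemma qPochhammerInv_natCast (q : K) (n : ℕ) : qPochhammerInv q n = (qPochhammer q n)⁻¹ := by
  simp [qPochhammerInv]

lemma qPochhammerInv_of_neg (q : K) {k : ℤ} (hk : k < 0) : qPochhammerInv q k = 0 :=
  if_neg hk.not_ge

lemma qPochhammerInv_sub_one (hq : ∀ n : ℕ, 1 - q ^ (n + 1) ≠ 0) (k : ℤ) :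
    qPochhammerInv q (k - 1) = (1 - q ^ k) * qPochhammerInv q k := by
  rcases lt_trichotomy k 0 with hk | rfl | hk
  · rw [qPochhammerInv_of_neg q hk, qPochhammerInv_of_neg q (by lia), mul_zero]
  · simp [qPochhammerInv_of_neg]
  · obtain ⟨n, rfl⟩ : ∃ n : ℕ, k = (n + 1 : ℕ) := ⟨(k - 1).toNat, by lia⟩
    rw [show ((n + 1 : ℕ) : ℤ) - 1 = n by lia, qPochhammerInv_natCast, qPochhammerInv_natCast,
      qPochhammer_succ, zpow_natCast, mul_inv_rev, mul_inv_cancel_left₀ (hq n)]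

lemma centralQBinomial_zero (q : K) (k : ℤ) : centralQBinomial q 0 k = if k = 0 then 1 else 0 := by
  rcases lt_trichotomy k 0 with hk | rfl | hk
  · simp [centralQBinomial, qPochhammerInv_of_neg q hk, hk.ne]
  · simp [centralQBinomial, qPochhammer, qPochhammerInv]
  · simp [centralQBinomial, qPochhammerInv_of_neg q (neg_lt_zero.mpr hk), hk.ne']

lemma centralQBinomial_succ (hq : ∀ n : ℕ, 1 - q ^ (n + 1) ≠ 0) (hq0 : q ≠ 0) (n : ℕ) (k : ℤ) :
    centralQBinomial q (n + 1) k = (1 + q ^ (2 * n + 1)) * centralQBinomial q n k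
      + q ^ ((n : ℤ) + 1 - k) * centralQBinomial q n (k - 1)
      + q ^ ((n : ℤ) + 1 + k) * centralQBinomial q n (k + 1) := by
  have lower (j : ℤ) : qPochhammerInv q j = (1 - q ^ (j + 1)) * qPochhammerInv q (j + 1) := by
    simpa using qPochhammerInv_sub_one hq (j + 1)
  have lower_two (j : ℤ) : qPochhammerInv q (j - 1) =
      (1 - q ^ (j + 1) / q) * ((1 - q ^ (j + 1)) * qPochhammerInv q (j + 1)) := by
    rw [qPochhammerInv_sub_one hq, ← lower, zpow_add_one₀ hq0, mul_div_cancel_right₀ _ hq0]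
  have pow_eq : q ^ (2 * n + 2) = q ^ ((n : ℤ) + k + 1) * q ^ ((n : ℤ) - k + 1) := by
    rw [← zpow_add₀ hq0, ← zpow_natCast]
    congr 1
    push_cast
    ring
  have pow_eq' : q ^ (2 * n + 1) = q ^ ((n : ℤ) + k + 1) * q ^ ((n : ℤ) - k + 1) / q := by
    rw [← pow_eq, pow_succ _ (2 * n + 1), mul_div_cancel_right₀ _ hq0]
  simp only [centralQBinomial, Nat.cast_succ]
  rw [show (n : ℤ) + 1 + k = n + k + 1 by ring, show (n : ℤ) + 1 - k = n - k + 1 by ring,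
    show (n : ℤ) + (k - 1) = n + k - 1 by ring, show (n : ℤ) - (k - 1) = n - k + 1 by ring,
    show (n : ℤ) + (k + 1) = n + k + 1 by ring, show (n : ℤ) - (k + 1) = n - k - 1 by ring,
    show 2 * (n + 1) = 2 * n + 1 + 1 by ring, qPochhammer_succ, qPochhammer_succ,
    lower_two (n + k), lower_two (n - k), lower (n + k), lower (n - k), pow_eq, pow_eq']
  field_simp
  ring

lemma tripleProductTerm_zero (q x : K) : tripleProductTerm q x 0 = 1 := by
  simp [tripleProductTerm]

lemma tripleProductTerm_add_one (hq0 : q ≠ 0) (hx : x ≠ 0) (k : ℤ) :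
    tripleProductTerm q x (k + 1) = -x * q ^ k * tripleProductTerm q x k := by
  have h : (k + 1) * (k + 1 - 1) / 2 = k + k * (k - 1) / 2 := by
    rw [show (k + 1) * (k + 1 - 1) = k * (k - 1) + k * 2 by ring,
      Int.add_mul_ediv_right _ _ two_ne_zero, add_comm]
  rw [tripleProductTerm, h, zpow_add_one₀ (neg_ne_zero.mpr hx), zpow_add₀ hq0, tripleProductTerm]
  ring

theorem hasSum_finite_jacobi_triple_product [TopologicalSpace K] [IsTopologicalRing K]
    (hq : ∀ n : ℕ, 1 - q ^ (n + 1) ≠ 0) (hq0 : q ≠ 0) (hx : x ≠ 0) (n : ℕ) :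
    HasSum (fun k => centralQBinomial q n k * tripleProductTerm q x k)
      (∏ j ∈ range n, (1 - x * q ^ j) * (1 - x⁻¹ * q ^ (j + 1))) := by
  induction n with
  | zero =>
    rw [prod_range_zero]
    refine (hasSum_ite_eq (0 : ℤ) (1 : K)).congr_fun fun k => ?_
    rcases eq_or_ne k 0 with rfl | hk
    · simp [centralQBinomial_zero, tripleProductTerm_zero]
    · simp [centralQBinomial_zero, hk]
  | succ n ih =>
    set P := ∏ j ∈ range n, (1 - x * q ^ j) * (1 - x⁻¹ * q ^ (j + 1))
    have shift_down := (Equiv.subRight (1 : ℤ)).hasSum_iff.mpr ih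
    have shift_up := (Equiv.addRight (1 : ℤ)).hasSum_iff.mpr ih
    have hP : P * ((1 - x * q ^ n) * (1 - x⁻¹ * q ^ (n + 1))) =
        (1 + q ^ (2 * n + 1)) * P + -x * q ^ n * P + -x⁻¹ * q ^ (n + 1) * P := by
      field_simp
      ring
    rw [prod_range_succ, hP]
    refine (((ih.mul_left _).add (shift_down.mul_left _)).add (shift_up.mul_left _)).congr_fun
      fun k => ?_
    have ht := tripleProductTerm_add_one hq0 hx (k - 1)
    rw [sub_add_cancel, zpow_sub_one₀ hq0] at ht
    simp only [Function.comp, Equiv.subRight_apply, Equiv.coe_addRight]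
    rw [centralQBinomial_succ hq hq0, tripleProductTerm_add_one hq0 hx k, ht, ← Nat.cast_succ,
      zpow_sub₀ hq0, zpow_add₀ hq0, zpow_natCast, Nat.succ_eq_add_one]
    have := zpow_ne_zero k hq0
    field_simp
    ring

end FiniteTripleProduct

section TripleProduct

variable {q x : ℂ}

lemma one_sub_pow_succ_ne_zero (hq : ‖q‖ < 1) (n : ℕ) : 1 - q ^ (n + 1) ≠ 0 := by
  refine sub_ne_zero.mpr fun h => ?_
  have : ‖q ^ (n + 1)‖ < 1 := by
    rw [norm_pow]
    exact pow_lt_one₀ (norm_nonneg q) hq n.succ_ne_zero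
  rw [← h, norm_one] at this
  exact lt_irrefl _ this

lemma tprod_one_sub_pow_succ_ne_zero (hq : ‖q‖ < 1) : ∏' n : ℕ, (1 - q ^ (n + 1)) ≠ 0 := by
  simp_rw [sub_eq_add_neg]
  refine tprod_one_add_ne_zero_of_summable ?_ ?_
  · exact fun n => by simpa only [sub_eq_add_neg] using one_sub_pow_succ_ne_zero hq n
  · simpa using (summable_nat_add_iff 1).mpr (summable_geometric_of_lt_one (norm_nonneg q) hq)

lemma tendsto_qPochhammer (hq : ‖q‖ < 1) :
    Tendsto (qPochhammer q) atTop (𝓝 (∏' n : ℕ, (1 - q ^ (n + 1)))) :=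
  (ModularForm.multipliable_one_sub_pow hq).hasProd.tendsto_prod_nat

lemma tendsto_qPochhammerInv (hq : ‖q‖ < 1) :
    Tendsto (qPochhammerInv q) atTop (𝓝 (∏' n : ℕ, (1 - q ^ (n + 1)))⁻¹) := by
  have toNat : Tendsto Int.toNat atTop atTop := tendsto_atTop_atTop.mpr fun b => ⟨b, by lia⟩
  refine (((tendsto_qPochhammer hq).inv₀ (tprod_one_sub_pow_succ_ne_zero hq)).comp toNat).congr' ?_
  filter_upwards [eventually_ge_atTop 0] with k hk
  exact (if_pos hk).symm

lemma exists_norm_qPochhammer_le (hq : ‖q‖ < 1) : ∃ C, ∀ n, ‖qPochhammer q n‖ ≤ C := by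
  simpa using (Metric.isBounded_range_of_tendsto _ (tendsto_qPochhammer hq)).exists_norm_le

lemma exists_norm_qPochhammerInv_le (hq : ‖q‖ < 1) : ∃ C, ∀ k, ‖qPochhammerInv q k‖ ≤ C := by
  obtain ⟨C, hC⟩ := (Metric.isBounded_range_of_tendsto _
    ((tendsto_qPochhammer hq).inv₀ (tprod_one_sub_pow_succ_ne_zero hq))).exists_norm_le
  refine ⟨C, fun k => ?_⟩
  rcases lt_or_ge k 0 with hk | hk
  · rw [qPochhammerInv_of_neg q hk, norm_zero]
    exact (norm_nonneg _).trans (hC _ ⟨0, rfl⟩)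
  · lift k to ℕ using hk
    rw [qPochhammerInv_natCast]
    exact hC _ ⟨k, rfl⟩

lemma tendsto_centralQBinomial (hq : ‖q‖ < 1) (k : ℤ) :
    Tendsto (fun n => centralQBinomial q n k) atTop (𝓝 (∏' n : ℕ, (1 - q ^ (n + 1)))⁻¹) := by
  have even : Tendsto (fun n => qPochhammer q (2 * n)) atTop (𝓝 (∏' n : ℕ, (1 - q ^ (n + 1)))) :=
    (tendsto_qPochhammer hq).comp (tendsto_id.const_mul_atTop' two_pos)
  have shift (j : ℤ) : Tendsto (fun n : ℕ => qPochhammerInv q (n + j)) atTop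
      (𝓝 (∏' n : ℕ, (1 - q ^ (n + 1)))⁻¹) :=
    (tendsto_qPochhammerInv hq).comp
      (tendsto_atTop_add_const_right _ j tendsto_natCast_atTop_atTop)
  have h := (even.mul (shift k)).mul (shift (-k))
  rw [mul_inv_cancel₀ (tprod_one_sub_pow_succ_ne_zero hq), one_mul] at h
  simpa only [centralQBinomial, ← sub_eq_add_neg] using h

lemma exists_norm_centralQBinomial_le (hq : ‖q‖ < 1) :
    ∃ C, ∀ n k, ‖centralQBinomial q n k‖ ≤ C := by
  obtain ⟨C, hC⟩ := exists_norm_qPochhammer_le hq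
  obtain ⟨D, hD⟩ := exists_norm_qPochhammerInv_le hq
  refine ⟨C * D * D, fun n k => ?_⟩
  have hC0 : 0 ≤ C := (norm_nonneg _).trans (hC 0)
  have hD0 : 0 ≤ D := (norm_nonneg _).trans (hD 0)
  rw [centralQBinomial, norm_mul, norm_mul]
  gcongr
  exacts [hC _, hD _, hD _]

lemma multipliable_one_sub_mul_pow (hq : ‖q‖ < 1) (x : ℂ) :
    Multipliable fun j : ℕ => 1 - x * q ^ j := by
  simp_rw [sub_eq_add_neg]
  refine multipliable_one_add_of_summable ?_
  simpa using (summable_geometric_of_lt_one (norm_nonneg q) hq).mul_left ‖x‖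

lemma multipliable_jacobi_triple_product (hq : ‖q‖ < 1) (x : ℂ) :
    Multipliable fun j : ℕ => (1 - x * q ^ j) * (1 - x⁻¹ * q ^ (j + 1)) := by
  refine (multipliable_one_sub_mul_pow hq x).mul ?_
  simpa only [pow_succ', mul_assoc] using multipliable_one_sub_mul_pow hq (x⁻¹ * q)

lemma tripleProductTerm_exp (ς τ : ℂ) (k : ℤ) :
    tripleProductTerm (exp (2 * π * I * τ)) (exp (2 * π * I * ς)) k =
      jacobiTheta₂_term k (ς + 1 / 2 - τ / 2) τ := by
  obtain ⟨j, hj⟩ := (Int.even_mul_pred_self k).two_dvd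
  have hjC : (k : ℂ) * (k - 1) = 2 * j := by exact_mod_cast hj
  have neg_exp : -exp (2 * π * I * ς) = exp (2 * π * I * ς + π * I) := by
    rw [exp_add, exp_pi_mul_I, mul_neg_one]
  rw [tripleProductTerm, hj, Int.mul_ediv_cancel_left _ two_ne_zero, neg_exp, ← exp_int_mul,
    ← exp_int_mul, ← exp_add, jacobiTheta₂_term]
  congr 1
  linear_combination (-π * I * τ) * hjC

lemma norm_exp_two_pi_I_mul_lt_one {τ : ℂ} (hτ : 0 < τ.im) : ‖exp (2 * π * I * τ)‖ < 1 :=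
  UpperHalfPlane.norm_exp_two_pi_I_lt_one ⟨τ, hτ⟩

lemma summable_tripleProductTerm (hq : ‖q‖ < 1) (hq0 : q ≠ 0) (hx : x ≠ 0) :
    Summable (tripleProductTerm q x) := by
  obtain ⟨τ, hτ, rfl⟩ : ∃ τ : ℂ, 0 < τ.im ∧ exp (2 * π * I * τ) = q :=
    ⟨_, Function.Periodic.im_invQParam_pos_of_norm_lt_one one_pos hq hq0,
      by simpa [Function.Periodic.qParam] using Function.Periodic.qParam_right_inv one_ne_zero hq0⟩
  obtain ⟨ς, rfl⟩ : ∃ ς : ℂ, exp (2 * π * I * ς) = x :=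
    ⟨_, by simpa [Function.Periodic.qParam] using Function.Periodic.qParam_right_inv one_ne_zero hx⟩
  exact ((summable_jacobiTheta₂_term_iff (ς + 1 / 2 - τ / 2) τ).mpr hτ).congr
    fun k => (tripleProductTerm_exp ς τ k).symm

theorem jacobi_triple_product (hq : ‖q‖ < 1) (hq0 : q ≠ 0) (hx : x ≠ 0) :
    (∏' j : ℕ, (1 - x * q ^ j) * (1 - x⁻¹ * q ^ (j + 1))) * ∏' n : ℕ, (1 - q ^ (n + 1))
      = ∑' k, tripleProductTerm q x k := by
  obtain ⟨C, hC⟩ := exists_norm_centralQBinomial_le hq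
  have limit_sum : Tendsto (fun n : ℕ => ∑' k, centralQBinomial q n k * tripleProductTerm q x k)
      atTop (𝓝 (∑' k, (∏' n : ℕ, (1 - q ^ (n + 1)))⁻¹ * tripleProductTerm q x k)) := by
    refine tendsto_tsum_of_dominated_convergence
      ((summable_tripleProductTerm hq hq0 hx).norm.mul_left C)
      (fun k => (tendsto_centralQBinomial hq k).mul_const _) (.of_forall fun n k => ?_)
    rw [norm_mul]
    gcongr
    exact hC n k
  have limit_prod : Tendsto (fun n : ℕ => ∑' k, centralQBinomial q n k * tripleProductTerm q x k)
      atTop (𝓝 (∏' j : ℕ, (1 - x * q ^ j) * (1 - x⁻¹ * q ^ (j + 1)))) := by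
    simp_rw [(hasSum_finite_jacobi_triple_product (one_sub_pow_succ_ne_zero hq) hq0 hx _).tsum_eq]
    exact (multipliable_jacobi_triple_product hq x).hasProd.tendsto_prod_nat
  rw [tendsto_nhds_unique limit_prod limit_sum, tsum_mul_left, mul_comm,
    mul_inv_cancel_left₀ (tprod_one_sub_pow_succ_ne_zero hq)]

end TripleProduct

section DedekindSum

/-- The Dedekind sum `s(d, c)` with a first argument `d` of either sign. -/
def intDedekindSum (d : ℤ) (c : ℕ) : ℝ :=
  ∑ n ∈ range c, saw (d * n / c) * saw (n / c)

lemma intDedekindSum_natCast (d c : ℕ) : intDedekindSum d c = dedekindSum d c := by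
  simp only [intDedekindSum, dedekindSum, Int.cast_natCast]

lemma saw_add_intCast (x : ℝ) (n : ℤ) : saw (x + n) = saw x := by
  simp only [saw, Int.fract_add_intCast]

lemma saw_neg (x : ℝ) : saw (-x) = -saw x := by
  rcases eq_or_ne (Int.fract x) 0 with h | h
  · rw [saw, saw, if_pos (Int.fract_neg_eq_zero.mpr h), if_pos h, neg_zero]
  · rw [saw, saw, if_neg (mt Int.fract_neg_eq_zero.mp h), if_neg h, Int.fract_neg h]
    ring

lemma intDedekindSum_neg (d : ℤ) (c : ℕ) : intDedekindSum (-d) c = -intDedekindSum d c := by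
  simp only [intDedekindSum, Int.cast_neg, neg_mul, neg_div, saw_neg, sum_neg_distrib]

lemma intDedekindSum_add_mul (d : ℤ) (c : ℕ) (j : ℤ) :
    intDedekindSum (d + c * j) c = intDedekindSum d c := by
  refine sum_congr rfl fun n hn => ?_
  have hc : (c : ℝ) ≠ 0 := Nat.cast_ne_zero.mpr (Nat.ne_zero_of_lt (mem_range.mp hn))
  rw [← saw_add_intCast (d * n / c) (j * n)]
  congr 2
  push_cast
  field_simp

lemma intDedekindSum_one_right (d : ℤ) : intDedekindSum d 1 = 0 := by
  simp [intDedekindSum, saw]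

lemma natCast_mod_eq_sub (a k : ℕ) : ((a % k : ℕ) : ℝ) = a - k * (a / k : ℕ) := by
  rw [eq_sub_iff_add_eq]
  exact_mod_cast Nat.mod_add_div a k

lemma saw_natCast_div {a k : ℕ} (hk : 0 < k) (ha : ¬k ∣ a) :
    saw (a / k) = (a % k : ℕ) / k - 1 / 2 := by
  have hmod : ((a % k : ℕ) : ℝ) ≠ 0 := Nat.cast_ne_zero.mpr (mt Nat.dvd_of_mod_eq_zero ha)
  have hk0 : (k : ℝ) ≠ 0 := Nat.cast_ne_zero.mpr hk.ne'
  rw [saw, Int.fract_div_natCast_eq_div_natCast_mod, if_neg (div_ne_zero hmod hk0)]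

lemma saw_zero : saw 0 = 0 := by
  simp [saw]

lemma sum_range_natCast (k : ℕ) : ∑ n ∈ range k, (n : ℝ) = k * (k - 1) / 2 := by
  induction k with
  | zero => simp
  | succ k ih =>
    rw [sum_range_succ, ih]
    push_cast
    ring

lemma sum_range_natCast_sq (k : ℕ) :
    ∑ n ∈ range k, (n : ℝ) ^ 2 = k * (k - 1) * (2 * k - 1) / 6 := by
  induction k with
  | zero => simp
  | succ k ih =>
    rw [sum_range_succ, ih]
    push_cast
    ring

variable {h k : ℕ}

lemma sum_range_mul_mod {M : Type*} [AddCommMonoid M] (hk : 0 < k) (hhk : h.Coprime k)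
    (f : ℕ → M) : ∑ n ∈ range k, f (h * n % k) = ∑ n ∈ range k, f n := by
  have maps : Set.MapsTo (fun n => h * n % k) (range k) (range k) :=
    fun n _ => mem_coe.mpr (mem_range.mpr (Nat.mod_lt _ hk))
  have inj : Set.InjOn (fun n => h * n % k) (range k) := fun a ha b hb hab =>
    Nat.ModEq.eq_of_lt_of_lt (Nat.ModEq.cancel_left_of_coprime hhk.symm hab)
      (mem_range.mp ha) (mem_range.mp hb)
  exact sum_nbij _ maps inj (surjOn_of_injOn_of_card_le _ maps inj le_rfl) fun _ _ => rfl

lemma sum_saw_div (k : ℕ) : ∑ n ∈ range k, saw (n / k) = 0 := by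
  cases k with
  | zero => exact sum_range_zero _
  | succ k =>
    have hsaw : ∀ n ∈ range k, saw ((n + 1 : ℕ) / (k + 1 : ℕ)) = (n + 1) / (k + 1) - 1 / 2 := by
      intro n hn
      have hlt : n + 1 < k + 1 := Nat.succ_lt_succ (mem_range.mp hn)
      rw [saw_natCast_div k.succ_pos (Nat.not_dvd_of_pos_of_lt n.succ_pos hlt),
        Nat.mod_eq_of_lt hlt]
      push_cast
      rfl
    rw [sum_range_succ', sum_congr rfl hsaw, Nat.cast_zero, zero_div, saw_zero, sum_sub_distrib,
      ← sum_div, sum_add_distrib, sum_range_natCast, sum_const, sum_const, card_range]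
    simp only [nsmul_eq_mul]
    field_simp
    ring

lemma sum_saw_mul_div (hk : 0 < k) (hhk : h.Coprime k) :
    ∑ n ∈ range k, saw (h * n / k) = 0 := by
  rw [← sum_saw_div k, ← sum_range_mul_mod hk hhk fun n => saw (n / k)]
  refine sum_congr rfl fun n _ => ?_
  rw [saw, saw, ← Nat.cast_mul, Int.fract_div_natCast_eq_div_natCast_mod,
    Int.fract_div_natCast_eq_div_natCast_mod, Nat.mod_mod]

lemma natCast_mul_intDedekindSum (hk : 0 < k) (hhk : h.Coprime k) :
    k * intDedekindSum h k = ∑ n ∈ range k, n * saw (h * n / k) := by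
  have hk0 : (k : ℝ) ≠ 0 := Nat.cast_ne_zero.mpr hk.ne'
  have hterm : ∀ n ∈ range k, k * (saw (h * n / k) * saw (n / k)) =
      n * saw (h * n / k) - k / 2 * saw (h * n / k) := by
    intro n hn
    have hlt := mem_range.mp hn
    rcases Nat.eq_zero_or_pos n with rfl | hpos
    · simp [saw_zero]
    · rw [saw_natCast_div hk (Nat.not_dvd_of_pos_of_lt hpos hlt), Nat.mod_eq_of_lt hlt]
      field_simp
  rw [intDedekindSum, mul_sum]
  simp only [Int.cast_natCast]
  rw [sum_congr rfl hterm, sum_sub_distrib, ← mul_sum, sum_saw_mul_div hk hhk, mul_zero, sub_zero]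

lemma intDedekindSum_eq_sum_floor (hk : 0 < k) (hhk : h.Coprime k) :
    k * intDedekindSum h k = h * (k - 1) * (2 * k - 1) / 6
      - ∑ n ∈ range k, (n : ℝ) * (h * n / k : ℕ) - k * (k - 1) / 4 := by
  have hk0 : (k : ℝ) ≠ 0 := Nat.cast_ne_zero.mpr hk.ne'
  have hterm : ∀ n ∈ range k, n * saw (h * n / k) =
      h / k * (n : ℝ) ^ 2 - n * (h * n / k : ℕ) - 1 / 2 * n := by
    intro n hn
    rcases Nat.eq_zero_or_pos n with rfl | hpos
    · simp
    · have hndvd : ¬k ∣ h * n := fun hdvd => Nat.not_dvd_of_pos_of_lt hpos (mem_range.mp hn)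
        (hhk.symm.dvd_of_dvd_mul_left hdvd)
      rw [← Nat.cast_mul, saw_natCast_div hk hndvd, natCast_mod_eq_sub]
      push_cast
      field_simp
  rw [natCast_mul_intDedekindSum hk hhk, sum_congr rfl hterm, sum_sub_distrib, sum_sub_distrib,
    ← mul_sum, ← mul_sum, sum_range_natCast, sum_range_natCast_sq]
  field_simp
  ring

lemma sum_floor (hk : 0 < k) (hhk : h.Coprime k) :
    ∑ n ∈ range k, ((h * n / k : ℕ) : ℝ) = (h - 1) * (k - 1) / 2 := by
  have hk0 : (k : ℝ) ≠ 0 := Nat.cast_ne_zero.mpr hk.ne'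
  have hperm := sum_range_mul_mod hk hhk (fun n => (n : ℝ))
  simp only [natCast_mod_eq_sub, Nat.cast_mul, sum_sub_distrib, ← mul_sum, sum_range_natCast]
    at hperm
  refine mul_left_cancel₀ hk0 ?_
  linear_combination -hperm

lemma sum_floor_sq (hk : 0 < k) (hhk : h.Coprime k) :
    k ^ 2 * ∑ n ∈ range k, ((h * n / k : ℕ) : ℝ) ^ 2 =
      2 * h * k * ∑ n ∈ range k, (n : ℝ) * (h * n / k : ℕ)
        - (h ^ 2 - 1) * (k * (k - 1) * (2 * k - 1) / 6) := by
  have hperm := sum_range_mul_mod hk hhk (fun n => (n : ℝ) ^ 2)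
  have hsq (n : ℕ) : ((h * n % k : ℕ) : ℝ) ^ 2 = h ^ 2 * (n : ℝ) ^ 2
      - 2 * h * k * (n * (h * n / k : ℕ)) + k ^ 2 * ((h * n / k : ℕ) : ℝ) ^ 2 := by
    rw [natCast_mod_eq_sub]
    push_cast
    ring
  simp only [hsq, sum_add_distrib, sum_sub_distrib, ← mul_sum, sum_range_natCast_sq] at hperm
  linear_combination hperm

lemma card_filter_le_floor (hh : 0 < h) (hk : 0 < k) (hhk : h.Coprime k) {ν : ℕ} (hν : 0 < ν)
    (hνh : ν < h) : #{n ∈ range k | ν ≤ h * n / k} + (k * ν / h + 1) = k := by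
  have hiff (n : ℕ) : ν ≤ h * n / k ↔ k * ν / h < n := by
    have hne : ν * k ≠ h * n := fun heq =>
      Nat.not_dvd_of_pos_of_lt hν hνh (hhk.dvd_of_dvd_mul_right ⟨n, heq⟩)
    rw [Nat.le_div_iff_mul_le hk, Nat.div_lt_iff_lt_mul hh, mul_comm k, mul_comm n]
    lia
  have hlt : k * ν / h < k := (Nat.div_lt_iff_lt_mul hh).mpr (Nat.mul_lt_mul_of_pos_left hνh hk)
  have hfilter : {n ∈ range k | ν ≤ h * n / k} = Ico (k * ν / h + 1) k := by
    ext n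
    rw [mem_filter, mem_range, mem_Ico, hiff, Nat.succ_le_iff, and_comm]
  rw [hfilter, Nat.card_Ico, Nat.sub_add_cancel hlt]

lemma sum_floor_mul_floor_add_one (hh : 0 < h) (hk : 0 < k) (hhk : h.Coprime k) :
    ∑ n ∈ range k, ((h * n / k : ℕ) : ℝ) * ((h * n / k : ℕ) + 1) =
      (k - 1) * (h * (h - 1)) - 2 * ∑ ν ∈ range h, (ν : ℝ) * (k * ν / h : ℕ) := by
  have htriangular : ∀ n ∈ range k, ((h * n / k : ℕ) : ℝ) * ((h * n / k : ℕ) + 1) =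
      2 * ∑ ν ∈ range h, if ν ≤ h * n / k then (ν : ℝ) else 0 := by
    intro n hn
    have hlt : h * n / k < h :=
      (Nat.div_lt_iff_lt_mul hk).mpr (Nat.mul_lt_mul_of_pos_left (mem_range.mp hn) hh)
    have hfilter : {ν ∈ range h | ν ≤ h * n / k} = range (h * n / k + 1) := by
      ext ν
      simp only [mem_filter, mem_range]
      lia
    rw [← sum_filter, hfilter, sum_range_natCast]
    push_cast
    ring
  have hcount : ∀ ν ∈ range h, (∑ n ∈ range k, if ν ≤ h * n / k then (ν : ℝ) else 0) =
      (k - 1) * ν - ν * (k * ν / h : ℕ) := by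
    intro ν hν
    rcases Nat.eq_zero_or_pos ν with rfl | hpos
    · simp
    · have hcard : (#{n ∈ range k | ν ≤ h * n / k} : ℝ) + ((k * ν / h : ℕ) + 1) = k := by
        exact_mod_cast card_filter_le_floor hh hk hhk hpos (mem_range.mp hν)
      rw [← sum_filter, sum_const, nsmul_eq_mul]
      linear_combination (ν : ℝ) * hcard
  rw [sum_congr rfl htriangular, ← mul_sum, sum_comm, sum_congr rfl hcount, sum_sub_distrib,
    ← mul_sum, sum_range_natCast]
  ring

lemma sum_mul_floor_reciprocity (hh : 0 < h) (hk : 0 < k) (hhk : h.Coprime k) :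
    12 * (h * ∑ n ∈ range k, (n : ℝ) * (h * n / k : ℕ)
      + k * ∑ ν ∈ range h, (ν : ℝ) * (k * ν / h : ℕ)) =
      (h - 1) * (k - 1) * (8 * h * k - h - k - 1) := by
  have hk0 : (k : ℝ) ≠ 0 := Nat.cast_ne_zero.mpr hk.ne'
  have hsq := sum_floor_sq hk hhk
  have hcount := sum_floor_mul_floor_add_one hh hk hhk
  simp only [mul_add, mul_one, ← sq, sum_add_distrib, sum_floor hk hhk] at hcount
  refine mul_left_cancel₀ hk0 ?_
  linear_combination 6 * k ^ 2 * hcount - 6 * hsq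

theorem intDedekindSum_reciprocity (hh : 0 < h) (hk : 0 < k) (hhk : h.Coprime k) :
    intDedekindSum h k + intDedekindSum k h =
      -1 / 4 + (h / k + k / h + 1 / (h * k)) / 12 := by
  have hh0 : (h : ℝ) ≠ 0 := Nat.cast_ne_zero.mpr hh.ne'
  have hk0 : (k : ℝ) ≠ 0 := Nat.cast_ne_zero.mpr hk.ne'
  have hsum_hk := intDedekindSum_eq_sum_floor hk hhk
  have hsum_kh := intDedekindSum_eq_sum_floor hh hhk.symm
  have hfloor := sum_mul_floor_reciprocity hh hk hhk
  field_simp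
  linear_combination 48 * h * hsum_hk + 48 * k * hsum_kh - 4 * hfloor

end DedekindSum

section ThetaQuotient

open scoped ModularForm

/-- The odd Jacobi theta function `∑ₖ (-1)^k exp(πi((k - 1/2)²τ + (2k - 1)ς))`, written as a
shift of `jacobiTheta₂`. -/
def thetaOne (ς τ : ℂ) : ℂ := exp (π * I * (τ / 4 - ς)) * jacobiTheta₂ (ς + 1 / 2 - τ / 2) τ

/-- The function `Zh`, normalised so as to be the quotient of `thetaOne` by the Dedekind eta
function. -/
def thetaQuot (ς τ : ℂ) : ℂ := exp (π * I * (τ / 6 - ς)) * Zh ς τ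

variable {τ : ℂ}

lemma thetaQuot_mul_eta (ς : ℂ) (hτ : 0 < τ.im) :
    thetaQuot ς τ * ModularForm.eta τ = thetaOne ς τ := by
  have triple : Zh ς τ * ∏' n : ℕ, (1 - exp (2 * π * I * τ) ^ (n + 1)) =
      jacobiTheta₂ (ς + 1 / 2 - τ / 2) τ := by
    rw [Zh, jacobi_triple_product (norm_exp_two_pi_I_mul_lt_one hτ) (exp_ne_zero _) (exp_ne_zero _)]
    exact tsum_congr (tripleProductTerm_exp ς τ)
  have hexp : exp (π * I * (τ / 4 - ς)) =
      exp (π * I * (τ / 6 - ς)) * Function.Periodic.qParam 24 τ := by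
    rw [Function.Periodic.qParam, ← exp_add]
    congr 1
    push_cast
    ring
  rw [thetaOne, ← triple, hexp, thetaQuot, ModularForm.eta]
  simp only [ModularForm.eta_q_eq_pow]
  ring

lemma neg_one_div_im_pos (hτ : 0 < τ.im) : 0 < (-1 / τ).im := by
  simpa using UpperHalfPlane.im_pnat_div_pos 1 ⟨τ, hτ⟩

lemma ne_zero_of_im_pos (hτ : 0 < τ.im) : τ ≠ 0 := by
  rintro rfl
  exact lt_irrefl _ hτ

lemma sqrt_I_inv_mul_sqrt (hτ : 0 < τ.im) : (sqrt I)⁻¹ * sqrt τ = (-I * τ) ^ (1 / 2 : ℂ) := by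
  have h0 := ne_zero_of_im_pos hτ
  have hlog : log (-I * τ) = log (-I) + log τ := by
    rw [log_mul_eq_add_log_iff (neg_ne_zero.mpr I_ne_zero) h0, arg_neg_I]
    have := arg_nonneg_iff.mpr hτ.le
    have := arg_le_pi τ
    have := Real.pi_pos
    constructor <;> linarith
  rw [sqrt_eq_exp I_ne_zero, sqrt_eq_exp h0,
    cpow_def_of_ne_zero (mul_ne_zero (neg_ne_zero.mpr I_ne_zero) h0), ← exp_neg, ← exp_add, hlog,
    log_neg_I, log_I]
  congr 1
  ring

lemma eta_neg_one_div (hτ : 0 < τ.im) :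
    ModularForm.eta (-1 / τ) = (-I * τ) ^ (1 / 2 : ℂ) * ModularForm.eta τ := by
  rw [← sqrt_I_inv_mul_sqrt hτ, mul_assoc]
  exact ModularForm.eta_comp_eq_csqrt_I_inv hτ

lemma thetaOne_div_neg_one_div (ς : ℂ) (h0 : τ ≠ 0) :
    thetaOne (ς / τ) (-1 / τ) =
      -I * exp (π * I * ς ^ 2 / τ) * (-I * τ) ^ (1 / 2 : ℂ) * thetaOne ς τ := by
  have hshift : (ς + 1 / 2 - τ / 2) / τ + 1 = ς / τ + 1 / 2 - -1 / τ / 2 := by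
    field_simp
    ring
  have hexp : exp (π * I * (-1 / τ / 4 - ς / τ)) =
      -I * exp (π * I * ς ^ 2 / τ) * exp (π * I * (τ / 4 - ς)) *
        exp (-π * I * (ς + 1 / 2 - τ / 2) ^ 2 / τ) := by
    rw [← exp_neg_pi_div_two_mul_I, ← exp_add, ← exp_add, ← exp_add]
    congr 1
    field_simp
    ring
  rw [thetaOne, thetaOne, jacobiTheta₂_functional_equation (ς + 1 / 2 - τ / 2) τ,
    ← jacobiTheta₂_add_left ((ς + 1 / 2 - τ / 2) / τ), hshift, hexp]
  field_simp

lemma thetaQuot_div_neg_one_div (ς : ℂ) (hτ : 0 < τ.im) :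
    thetaQuot (ς / τ) (-1 / τ) = -I * exp (π * I * ς ^ 2 / τ) * thetaQuot ς τ := by
  refine mul_right_cancel₀ (ModularForm.eta_ne_zero (neg_one_div_im_pos hτ)) ?_
  rw [thetaQuot_mul_eta _ (neg_one_div_im_pos hτ),
    thetaOne_div_neg_one_div ς (ne_zero_of_im_pos hτ), ← thetaQuot_mul_eta ς hτ,
    eta_neg_one_div hτ]
  ring

lemma thetaQuot_neg (ς : ℂ) (hτ : 0 < τ.im) : thetaQuot (-ς) τ = -thetaQuot ς τ := by
  have h0 := ne_zero_of_im_pos hτ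
  have h := thetaQuot_div_neg_one_div (ς / τ) (neg_one_div_im_pos hτ)
  have hς : ς / τ / (-1 / τ) = -ς := by field_simp
  have hτ' : -1 / (-1 / τ) = τ := by field_simp
  have hsum : π * I * (ς / τ) ^ 2 / (-1 / τ) + π * I * ς ^ 2 / τ = 0 := by
    field_simp
    ring
  have hexp : exp (π * I * (ς / τ) ^ 2 / (-1 / τ)) * exp (π * I * ς ^ 2 / τ) = 1 := by
    rw [← exp_add, hsum, exp_zero]
  rw [hς, hτ', thetaQuot_div_neg_one_div ς hτ] at h
  linear_combination h + I ^ 2 * thetaQuot ς τ * hexp + thetaQuot ς τ * I_sq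

lemma Zh_add_one (ς τ : ℂ) : Zh (ς + 1) τ = Zh ς τ := by
  have hexp : exp (2 * π * I * (ς + 1)) = exp (2 * π * I * ς) := by
    rw [mul_add, mul_one, exp_periodic]
  simp only [Zh, hexp]

lemma thetaQuot_add_one (ς τ : ℂ) : thetaQuot (ς + 1) τ = -thetaQuot ς τ := by
  have hexp : exp (π * I * (τ / 6 - (ς + 1))) = -exp (π * I * (τ / 6 - ς)) := by
    rw [← exp_antiperiodic.sub_eq]
    congr 1
    ring
  rw [thetaQuot, thetaQuot, Zh_add_one, hexp, neg_mul]

lemma antiperiodic_exp_mul_thetaQuot (hτ : 0 < τ.im) :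
    Function.Antiperiodic (fun ς => exp (π * I * ς ^ 2 / τ) * thetaQuot ς τ) τ := by
  have hS (ς : ℂ) : exp (π * I * ς ^ 2 / τ) * thetaQuot ς τ = I * thetaQuot (ς / τ) (-1 / τ) := by
    rw [thetaQuot_div_neg_one_div ς hτ]
    linear_combination (exp (π * I * ς ^ 2 / τ) * thetaQuot ς τ) * I_sq
  intro ς
  simp only [hS]
  rw [add_div, div_self (ne_zero_of_im_pos hτ), thetaQuot_add_one, mul_neg]

lemma thetaQuot_add_int_mul (ς : ℂ) (hτ : 0 < τ.im) (n : ℤ) :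
    thetaQuot (ς + n * τ) τ =
      (-1) ^ n * exp (-π * I * (2 * n * ς + n ^ 2 * τ)) * thetaQuot ς τ := by
  have h := (antiperiodic_exp_mul_thetaQuot hτ).add_int_mul_eq (x := ς) n
  have hexp : exp (π * I * ς ^ 2 / τ) =
      exp (π * I * (ς + n * τ) ^ 2 / τ) * exp (-π * I * (2 * n * ς + n ^ 2 * τ)) := by
    rw [← exp_add]
    congr 1
    have h0 := ne_zero_of_im_pos hτ
    field_simp
    ring
  refine mul_left_cancel₀ (exp_ne_zero (π * I * (ς + n * τ) ^ 2 / τ)) (h.trans ?_)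
  rw [Int.cast_negOnePow, hexp]
  ring

lemma Zh_add_intCast_right (ς τ : ℂ) (n : ℤ) : Zh ς (τ + n) = Zh ς τ := by
  have hexp : exp (2 * π * I * (τ + n)) = exp (2 * π * I * τ) := by
    rw [mul_add, mul_comm _ (n : ℂ)]
    exact exp_periodic.int_mul n _
  simp only [Zh, hexp]

lemma thetaQuot_add_intCast_right (ς τ : ℂ) (n : ℤ) :
    thetaQuot ς (τ + n) = exp (π * I * n / 6) * thetaQuot ς τ := by
  rw [thetaQuot, thetaQuot, Zh_add_intCast_right, ← mul_assoc, ← exp_add]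
  congr 2
  ring

end ThetaQuotient

section ModularLaw

/-- The transformation law of `thetaQuot` under the matrix `(a b; c d)`, with Dedekind's
multiplier. -/
def ThetaQuotLaw (a b : ℤ) (c : ℕ) (d : ℤ) : Prop :=
  ∀ ς τ : ℂ, 0 < τ.im → thetaQuot (ς / (c * τ + d)) ((a * τ + b) / (c * τ + d)) =
    -I * exp (2 * π * I * ((a + d) / (12 * c) - intDedekindSum d c)) *
      exp (π * I * c * ς ^ 2 / (c * τ + d)) * thetaQuot ς τ

variable {a b d : ℤ} {c : ℕ}

lemma natCast_mul_add_intCast_ne_zero {τ : ℂ} (hτ : 0 < τ.im) (hc : 0 < c) (d : ℤ) :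
    (c : ℂ) * τ + d ≠ 0 := by
  simpa using UpperHalfPlane.linear_ne_zero (cd := ![c, d]) ⟨τ, hτ⟩ fun h => by
    simpa [hc.ne'] using congrFun h 0

lemma thetaQuotLaw_one_zero (a : ℤ) : ThetaQuotLaw a (-1) 1 0 := by
  intro ς τ hτ
  have hmoebius : ((a : ℂ) * τ + (-1 : ℤ)) / ((1 : ℕ) * τ + (0 : ℤ)) = -1 / τ + a := by
    have := ne_zero_of_im_pos hτ
    push_cast
    rw [one_mul, add_zero]
    field_simp
    ring
  rw [hmoebius, thetaQuot_add_intCast_right, intDedekindSum_one_right]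
  simp only [Nat.cast_one, Int.cast_zero, one_mul, mul_one, add_zero, ofReal_zero, sub_zero]
  rw [thetaQuot_div_neg_one_div ς hτ]
  ring_nf

lemma ThetaQuotLaw.comp_translation (hc : 0 < c) (law : ThetaQuotLaw a b c d) (j : ℤ) :
    ThetaQuotLaw a (b + a * j) c (d + c * j) := by
  intro ς τ hτ
  have hc0 : (c : ℂ) ≠ 0 := Nat.cast_ne_zero.mpr hc.ne'
  have h := law ς (τ + j) (by simpa using hτ)
  have hden : (c : ℂ) * (τ + j) + d = c * τ + (d + c * j : ℤ) := by
    push_cast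
    ring
  have hnum : (a : ℂ) * (τ + j) + b = a * τ + (b + a * j : ℤ) := by
    push_cast
    ring
  have hexp : exp (2 * π * I * ((a + (d + c * j : ℤ)) / (12 * c) - intDedekindSum d c)) =
      exp (2 * π * I * ((a + d) / (12 * c) - intDedekindSum d c)) * exp (π * I * j / 6) := by
    rw [← exp_add]
    congr 1
    push_cast
    field_simp
    ring
  rw [hden, hnum, thetaQuot_add_intCast_right] at h
  rw [h, intDedekindSum_add_mul, hexp]
  ring

lemma exp_intDedekindSum_swap {a b : ℤ} {c d : ℕ} (hc : 0 < c) (hd : 0 < d)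
    (hdet : a * d - b * c = 1) :
    exp (2 * π * I * ((b + (-c : ℤ)) / (12 * d) - intDedekindSum (-c) d)) =
      -I * exp (2 * π * I * ((a + (d : ℤ)) / (12 * c) - intDedekindSum d c)) := by
  have hc0 : (c : ℂ) ≠ 0 := Nat.cast_ne_zero.mpr hc.ne'
  have hd0 : (d : ℂ) ≠ 0 := Nat.cast_ne_zero.mpr hd.ne'
  have hdetC : (a : ℂ) * d - b * c = 1 := by exact_mod_cast hdet
  have hcop : d.Coprime c := Nat.isCoprime_iff_coprime.mp ⟨a, -b, by linarith⟩
  have hrec : (intDedekindSum d c + intDedekindSum c d : ℂ) =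
      -1 / 4 + (d / c + c / d + 1 / (d * c)) / 12 := by
    have := congrArg ofReal (intDedekindSum_reciprocity hd hc hcop)
    push_cast at this
    exact this
  have hfrac : (b : ℂ) / d + 1 / (d * c) = a / c := by
    field_simp
    linear_combination -hdetC
  rw [← exp_neg_pi_div_two_mul_I, ← exp_add, intDedekindSum_neg]
  congr 1
  push_cast
  linear_combination (2 * π * I) * hrec + (π * I / 6) * hfrac

lemma thetaQuotLaw_of_swap {a b : ℤ} {c d : ℕ} (hc : 0 < c) (hd : 0 < d)
    (hdet : a * d - b * c = 1) (law : ThetaQuotLaw b (-a) d (-c)) : ThetaQuotLaw a b c d := by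
  intro ς τ hτ
  have hτ0 := ne_zero_of_im_pos hτ
  have hden := natCast_mul_add_intCast_ne_zero hτ hc d
  rw [mul_comm] at hden
  have h := law (-(ς / τ)) (-1 / τ) (neg_one_div_im_pos hτ)
  have hden' : (d : ℂ) * (-1 / τ) + (-c : ℤ) = -((c * τ + (d : ℤ)) / τ) := by
    push_cast
    field_simp
    ring
  have helliptic : -(ς / τ) / ((d : ℂ) * (-1 / τ) + (-c : ℤ)) = ς / (c * τ + (d : ℤ)) := by
    rw [hden']
    field_simp
  have hmodular : ((b : ℂ) * (-1 / τ) + (-a : ℤ)) / ((d : ℂ) * (-1 / τ) + (-c : ℤ)) =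
      (a * τ + b) / (c * τ + (d : ℤ)) := by
    rw [hden']
    push_cast at hden ⊢
    field_simp
    ring
  have hexp : exp (π * I * d * (-(ς / τ)) ^ 2 / (d * (-1 / τ) + (-c : ℤ))) *
      exp (π * I * ς ^ 2 / τ) = exp (π * I * c * ς ^ 2 / (c * τ + (d : ℤ))) := by
    rw [← exp_add, hden']
    congr 1
    push_cast at hden ⊢
    field_simp
    ring
  rw [helliptic, hmodular, exp_intDedekindSum_swap hc hd hdet,
    thetaQuot_neg _ (neg_one_div_im_pos hτ), thetaQuot_div_neg_one_div ς hτ] at h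
  rw [h, ← hexp]
  set E := exp (2 * π * I * ((a + (d : ℤ)) / (12 * c) - intDedekindSum d c))
  linear_combination (I * E * exp (π * I * d * (-(ς / τ)) ^ 2 / (d * (-1 / τ) + (-c : ℤ))) *
    exp (π * I * ς ^ 2 / τ) * thetaQuot ς τ) * I_sq

theorem thetaQuotLaw_of_det_eq_one (hc : 0 < c) (hdet : a * d - b * c = 1) :
    ThetaQuotLaw a b c d := by
  induction c using Nat.strong_induction_on generalizing a b d with
  | _ c ih =>
    obtain ⟨r, hr⟩ := Int.eq_ofNat_of_zero_le (Int.emod_nonneg d (Int.natCast_ne_zero.mpr hc.ne'))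
    have hrc : r < c := by
      have := Int.emod_lt_of_pos d (Int.natCast_pos.mpr hc)
      lia
    have hd : d = r + c * (d / c) := by rw [← hr, Int.emod_add_mul_ediv]
    have hdet' : a * r - (b - a * (d / c)) * c = 1 := by linear_combination hdet - a * hd
    suffices law : ThetaQuotLaw a (b - a * (d / c)) c r by
      have := law.comp_translation hc (d / c)
      rwa [sub_add_cancel, ← hd] at this
    rcases Nat.eq_zero_or_pos r with rfl | hrpos
    · have hdvd : (c : ℤ) ∣ 1 := ⟨-(b - a * (d / c)), by linear_combination -hdet'⟩
      obtain rfl : c = 1 := Nat.dvd_one.mp (by exact_mod_cast hdvd)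
      obtain hb : b - a * (d / (1 : ℕ)) = -1 := by linear_combination -hdet'
      rw [hb]
      exact thetaQuotLaw_one_zero a
    · exact thetaQuotLaw_of_swap hc hrpos hdet' (ih r hrc hrpos (by linarith))

theorem thetaQuot_div_sub_inv_div (hc : 0 < c) (hdet : a * d ≡ 1 [ZMOD c]) (ς : ℂ) {w : ℂ}
    (hw : 0 < w.im) : thetaQuot (ς / w) ((a - 1 / w) / c) =
      -I * exp (2 * π * I * ((a + d) / (12 * c) - intDedekindSum d c)) *
        exp (π * I * c * ς ^ 2 / w) * thetaQuot ς ((w - d) / c) := by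
  obtain ⟨b, hb⟩ := hdet.symm.dvd
  have hc0 : (c : ℂ) ≠ 0 := Nat.cast_ne_zero.mpr hc.ne'
  have hw0 := ne_zero_of_im_pos hw
  have hdetC : (a : ℂ) * d - 1 = c * b := by exact_mod_cast hb
  have him : 0 < ((w - d) / c).im := by
    rw [div_natCast_im, sub_im, intCast_im, sub_zero]
    positivity
  have hden : (c : ℂ) * ((w - d) / c) + d = w := by
    field_simp
    ring
  have hnum : (a * ((w - d) / c) + b) / w = (a - 1 / w) / c := by
    field_simp
    linear_combination -hdetC
  have law := thetaQuotLaw_of_det_eq_one (a := a) (b := b) (d := d) hc (by linarith) ς _ him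
  rwa [hden, hnum] at law

theorem Zh_sub_div (hc : 0 < c) (hdet : a * d ≡ 1 [ZMOD c]) (ς : ℂ) {w : ℂ} (hw : 0 < w.im)
    (n : ℤ) : Zh ς ((w - d) / c) = I * (-1) ^ n *
      exp (π * I * (ς - (w + 1 / w) / (6 * c) + 2 * intDedekindSum d c - c * ς ^ 2 / w
        + (2 * n - 1) * (ς / w) + (n ^ 2 - n) * ((a - 1 / w) / c))) *
      Zh (ς / w + n * ((a - 1 / w) / c)) ((a - 1 / w) / c) := by
  have him : 0 < ((a - 1 / w) / c).im := by
    have := neg_one_div_im_pos hw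
    rw [div_natCast_im, sub_eq_add_neg, ← neg_div, add_im, intCast_im, zero_add]
    positivity
  have hshift := thetaQuot_add_int_mul (ς / w) him n
  rw [thetaQuot_div_sub_inv_div hc hdet ς hw, thetaQuot, thetaQuot] at hshift
  set τ' := (a - 1 / w) / c with hτ'
  set N := exp (-π * I * (2 * n * (ς / w) + n ^ 2 * τ')) *
    exp (2 * π * I * ((a + d) / (12 * c) - intDedekindSum d c)) *
    exp (π * I * c * ς ^ 2 / w) * exp (π * I * ((w - d) / c / 6 - ς)) with hN
  have hN0 : N ≠ 0 := by simp only [hN, ne_eq, mul_eq_zero, exp_ne_zero, or_self, not_false_eq_true]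
  have hexp : exp (π * I * (ς - (w + 1 / w) / (6 * c) + 2 * intDedekindSum d c - c * ς ^ 2 / w
        + (2 * n - 1) * (ς / w) + (n ^ 2 - n) * τ')) * N =
      exp (π * I * (τ' / 6 - (ς / w + n * τ'))) := by
    simp only [hN, ← exp_add]
    congr 1
    rw [hτ']
    ring
  have hsign : (-1 : ℂ) ^ n * (-1) ^ n = 1 := by
    rw [← mul_zpow, neg_one_mul, neg_neg, one_zpow]
  refine mul_right_cancel₀ hN0 ?_
  linear_combination (-I * (-1) ^ n * Zh (ς / w + n * τ') τ') * hexp - I * (-1) ^ n * hshift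
    - N * Zh ς ((w - d) / c) * hsign + N * Zh ς ((w - d) / c) * ((-1) ^ n * (-1) ^ n) * I_sq

end ModularLaw

section CuspTransformation

variable {d m k h z : ℂ}

lemma modular_argument_eq (hd : d ≠ 0) (hk : k ≠ 0) :
    d * m * ((h + I * z) / (d * k)) = (I * m * z - -(m * h)) / k := by
  field_simp
  ring

lemma modular_image_eq (ℏ : ℂ) (hd : d ≠ 0) (hm : m ≠ 0) (hk : k ≠ 0) (hz : z ≠ 0) :
    ℏ * d / (d * k) + I * d ^ 2 / (d * m * (d * k) * z) = (ℏ - 1 / (I * m * z)) / k := by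
  field_simp
  linear_combination I_sq

lemma elliptic_image_eq (r l ℏ : ℂ) (hd : d ≠ 0) (hm : m ≠ 0) (hk : k ≠ 0) (hz : z ≠ 0) :
    r * d / (d * m * (d * k)) + l * ℏ * d / (d * k) +
        I * (l - r * h / d) * d ^ 2 / (d * m * (d * k) * z) =
      r * ((h + I * z) / (d * k)) / (I * m * z) + l * ((ℏ - 1 / (I * m * z)) / k) := by
  field_simp
  linear_combination (l * d - r * h) * I_sq

lemma exp_transformation_factor (r l ℏ s : ℂ) (hd : d ≠ 0) (hm : m ≠ 0) (hk : k ≠ 0)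
    (hz : z ≠ 0) :
    exp (π * I * (r * ((h + I * z) / (d * k)) - (I * m * z + 1 / (I * m * z)) / (6 * k)
        + 2 * -s - k * (r * ((h + I * z) / (d * k))) ^ 2 / (I * m * z)
        + (2 * l - 1) * (r * ((h + I * z) / (d * k)) / (I * m * z))
        + (l ^ 2 - l) * ((ℏ - 1 / (I * m * z)) / k))) =
      exp (-2 * π * I * s) *
        exp (π * I * (r * h / (d * k) - r * d / (d * m * (d * k)) +
          2 * r * d * (l - r * h / d) / (d * m * (d * k)) + ℏ * d / (d * k) * (l ^ 2 - l))) *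
        exp (π / (12 * (d * k)) * ((2 * (d * m) - 12 * r + 12 * r ^ 2 / (d * m)) * z -
          (2 * d ^ 2 / (d * m) + 12 * d ^ 2 / (d * m) * ((l - r * h / d) ^ 2 - (l - r * h / d))) *
            (1 / z))) := by
  rw [← exp_add, ← exp_add]
  congr 1
  field_simp
  linear_combination 12 * z ^ 2 * (6 * d * m * r - d ^ 2 * m ^ 2 - 6 * r ^ 2) * I_sq

end CuspTransformation

theorem Zh_transformation_general {m k d m' k' : ℕ} (hm : m = d * m') (hk : k = d * k')
    (hm0 : 0 < m) (hk0 : 0 < k) {h ℏ : ℤ} (hcong : ℏ * (m' * h) ≡ -1 [ZMOD k']) (l : ℤ)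
    (r : ℂ) {lStar : ℂ} (hlStar : lStar = l - r * h / d) {z : ℂ} (hz : 0 < z.re) :
    Zh (r * ((h + I * z) / k)) (m * ((h + I * z) / k)) =
      I * (-1) ^ l * exp (-2 * π * I * intDedekindSum (m' * h) k') *
        exp (π * I * (r * h / k - r * d / (m * k) + 2 * r * d * lStar / (m * k) +
          ℏ * d / k * (l ^ 2 - l))) *
        exp (π / (12 * k) * ((2 * m - 12 * r + 12 * r ^ 2 / m) * z -
          (2 * d ^ 2 / m + 12 * d ^ 2 / m * (lStar ^ 2 - lStar)) * (1 / z))) *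
        Zh (r * d / (m * k) + l * ℏ * d / k + I * lStar * d ^ 2 / (m * k * z))
          (ℏ * d / k + I * d ^ 2 / (m * k * z)) := by
  subst hm hk hlStar
  have hm' := Nat.pos_of_mul_pos_left hm0
  have hk' := Nat.pos_of_mul_pos_left hk0
  have hd0 : (d : ℂ) ≠ 0 := Nat.cast_ne_zero.mpr (Nat.pos_of_mul_pos_right hm0).ne'
  have hm0' : (m' : ℂ) ≠ 0 := Nat.cast_ne_zero.mpr hm'.ne'
  have hk0' : (k' : ℂ) ≠ 0 := Nat.cast_ne_zero.mpr hk'.ne'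
  have hz0 : z ≠ 0 := by
    rintro rfl
    exact lt_irrefl _ hz
  have hw : 0 < (I * m' * z).im := by
    rw [mul_assoc, I_mul_im, ← ofReal_natCast, re_ofReal_mul]
    positivity
  have hdet : ℏ * -(m' * h) ≡ 1 [ZMOD k'] := by simpa using hcong.neg
  have law := Zh_sub_div hk' hdet (r * ((h + I * z) / (d * k'))) hw l
  rw [intDedekindSum_neg] at law
  push_cast at law ⊢
  rw [modular_argument_eq hd0 hk0', modular_image_eq ℏ hd0 hm0' hk0' hz0,
    elliptic_image_eq r l ℏ hd0 hm0' hk0' hz0, law,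
    exp_transformation_factor r l ℏ _ hd0 hm0' hk0' hz0]
  ring

/-- The transformation formula for `Zh(rτ; mτ)` at the Farey fraction
`h/k`:
`Zh(rτ; mτ) = i·(−1)^λ·e^{−2πi·s(m'h,k')} · exp(πi(rh/k − rd/(mk) + 2rdλ*/(mk) + (ℏd/k)(λ² − λ)))
  · exp((π/(12k))((2m − 12r + 12r²/m)z − (2d²/m + (12d²/m)(λ*² − λ*))(1/z))) · Zh(ς̃; τ̃)`. -/
theorem Zh_transformation (m r h k : ℕ) (hm : 1 ≤ m) (hr : 1 ≤ r) (hrm : r < m)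
    (hhk : h < k) (hcop : Nat.gcd h k = 1) (ℏ : ℤ)
    (hcong : ℏ * (((m / Nat.gcd m k) * h : ℕ) : ℤ) ≡ -1 [ZMOD ((k / Nat.gcd m k : ℕ) : ℤ)])
    (z : ℂ) (hz : 0 < z.re) :
    Zh ((r : ℂ) * (((h : ℂ) + Complex.I * z) / (k : ℂ)))
        ((m : ℂ) * (((h : ℂ) + Complex.I * z) / (k : ℂ))) =
      Complex.I * (-1 : ℂ) ^ (lamF m r h k) *
        Complex.exp (-2 * (Real.pi : ℂ) * Complex.I *
          (dedekindSum ((m / Nat.gcd m k) * h) (k / Nat.gcd m k) : ℝ)) *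
        Complex.exp ((Real.pi : ℂ) * Complex.I *
          ((r : ℂ) * (h : ℂ) / (k : ℂ) -
            (r : ℂ) * (Nat.gcd m k : ℂ) / ((m : ℂ) * (k : ℂ)) +
            2 * (r : ℂ) * (Nat.gcd m k : ℂ) * ((lamStar m r h k : ℚ) : ℂ) /
              ((m : ℂ) * (k : ℂ)) +
            (ℏ : ℂ) * (Nat.gcd m k : ℂ) / (k : ℂ) *
              ((lamF m r h k : ℂ) ^ 2 - (lamF m r h k : ℂ)))) *
        Complex.exp ((Real.pi : ℂ) / (12 * (k : ℂ)) *
          ((2 * (m : ℂ) - 12 * (r : ℂ) + 12 * (r : ℂ) ^ 2 / (m : ℂ)) * z -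
            (2 * (Nat.gcd m k : ℂ) ^ 2 / (m : ℂ) +
              12 * (Nat.gcd m k : ℂ) ^ 2 / (m : ℂ) *
                (((lamStar m r h k : ℚ) : ℂ) ^ 2 - ((lamStar m r h k : ℚ) : ℂ))) *
              (1 / z))) *
        Zh ((r : ℂ) * (Nat.gcd m k : ℂ) / ((m : ℂ) * (k : ℂ)) +
            (lamF m r h k : ℂ) * (ℏ : ℂ) * (Nat.gcd m k : ℂ) / (k : ℂ) +
            Complex.I * ((lamStar m r h k : ℚ) : ℂ) * (Nat.gcd m k : ℂ) ^ 2 /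
              ((m : ℂ) * (k : ℂ) * z))
          ((ℏ : ℂ) * (Nat.gcd m k : ℂ) / (k : ℂ) +
            Complex.I * (Nat.gcd m k : ℂ) ^ 2 / ((m : ℂ) * (k : ℂ) * z)) := by
  have general := Zh_transformation_general (Nat.mul_div_cancel' (Nat.gcd_dvd_left m k)).symm
    (Nat.mul_div_cancel' (Nat.gcd_dvd_right m k)).symm hm (Nat.zero_lt_of_lt hhk)
    (h := h) (by exact_mod_cast hcong) (lamF m r h k) r (lStar := (lamStar m r h k : ℚ))
    (by simp [lamStar]) hz
  rw [← intDedekindSum_natCast]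
  push_cast at general ⊢
  exact general
end
end

section
/- Let p_{5,±1}(n) denote the number of partitions of n all of whose parts are congruent to 1 or 4 modulo 5. Then, as n → ∞, p_{5,±1}(n) is asymptotically equivalent to (csc(π/5)/(4·3^{1/4}·5^{1/4}))·(n − 1/60)^{−3/4}·exp((2π/√15)·√(n − 1/60)); that is, the ratio of the two sides tends to 1. -/
open Filter Topology

noncomputable section

/-- `p_{5,±1}(n)`: the number of partitions of `n` all of whose parts are congruent to
`1` or `4` modulo `5`. -/
def p51 (n : ℕ) : ℕ :=
  Nat.card {π : n.Partition // ∀ i ∈ π.parts, i % 5 = 1 ∨ i % 5 = 4}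

/-!
With `q = e^{-z}`, the generating function of the admissible partitions is `exp (L z)`, where
`L z = ∑ S (j z) / j` and `S w` is the sum of `e^{-kw}` over the admissible parts `k`. Near the
origin `S w ∼ 2 / (m w)`, for the modulus `m`. Removing these poles leaves `L z = A / z + R z`
with `A = π ^ 2 / (3 m)`, where `R z` is a Riemann sum of complex step `m z` for a kernel that is
regular at the origin. Inside a cone around the positive axis `R z` therefore converges to the
integral of that kernel, which Frullani integrals and the reflection formula of the Gamma function
evaluate to `-log (2 sin (π a / m))`.

In Cauchy's formula the exponent `A / z + n z` has its saddle point at `z = √(A / n)`, and rescaling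
the vertical line through it produces a Gaussian integral. The dominating function comes from
comparing `L (t + i θ)` with `L t`: each `j` contributes a nonnegative amount to
`L t - re L (t + i θ)`, and `j = 1` alone contributes `∑ e^{-kt} (1 - cos kθ)`. As `a` is coprime
to `m`, the parts `a + m j` are such that no `θ ≠ 0` in `[-π, π]` makes all these cosines equal to
`1`, and the sum is at least a constant times `min ((θ / t) ^ 2) 1 / t`. Shifting `n` to `n - s`
changes nothing in the limit, because `√n - √(n - s) → 0`.
-/

section PowerSeriesEvaluation

open scoped PowerSeries
open PowerSeries

variable {𝕜 : Type*} [NormedField 𝕜] {f g : 𝕜⟦X⟧} {q v w : 𝕜}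

/-- The power series `f` converges absolutely at `q`, with sum `v`. -/
def SumsAbsAt (f : 𝕜⟦X⟧) (q v : 𝕜) : Prop :=
  Summable (fun n ↦ ‖f.coeff n * q ^ n‖) ∧ HasSum (fun n ↦ f.coeff n * q ^ n) v

lemma SumsAbsAt.one (q : 𝕜) : SumsAbsAt 1 q 1 := by
  have coeff_eq_zero (n : ℕ) (hn : n ≠ 0) : (1 : 𝕜⟦X⟧).coeff n * q ^ n = 0 := by
    simp [coeff_one, hn]
  refine ⟨summable_of_ne_finset_zero (s := {0}) fun n hn ↦ ?_, ?_⟩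
  · rw [coeff_eq_zero n (by simpa using hn), norm_zero]
  · simpa using hasSum_single 0 coeff_eq_zero

lemma SumsAbsAt.mul [CompleteSpace 𝕜] (hf : SumsAbsAt f q v) (hg : SumsAbsAt g q w) :
    SumsAbsAt (f * g) q (v * w) := by
  have coeff_mul_pow (n : ℕ) : (f * g).coeff n * q ^ n =
      ∑ ij ∈ Finset.HasAntidiagonal.antidiagonal n,
        f.coeff ij.1 * q ^ ij.1 * (g.coeff ij.2 * q ^ ij.2) := by
    rw [coeff_mul, Finset.sum_mul]
    refine Finset.sum_congr rfl fun ij hij ↦ ?_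
    rw [← Finset.HasAntidiagonal.mem_antidiagonal.mp hij, pow_add]
    ring
  have summable_norm : Summable fun n ↦ ‖(f * g).coeff n * q ^ n‖ := by
    simpa only [coeff_mul_pow] using
      summable_norm_sum_mul_antidiagonal_of_summable_norm hf.1 hg.1
  have tsum_eq : ∑' n, (f * g).coeff n * q ^ n = v * w := by
    rw [← hf.2.tsum_eq, ← hg.2.tsum_eq,
      tsum_mul_tsum_eq_tsum_sum_antidiagonal_of_summable_norm hf.1 hg.1]
    exact tsum_congr coeff_mul_pow
  exact ⟨summable_norm, tsum_eq ▸ summable_norm.of_norm.hasSum⟩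

lemma SumsAbsAt.prod [CompleteSpace 𝕜] {ι : Type*} (s : Finset ι) {f : ι → 𝕜⟦X⟧} {v : ι → 𝕜}
    (hf : ∀ i ∈ s, SumsAbsAt (f i) q (v i)) : SumsAbsAt (∏ i ∈ s, f i) q (∏ i ∈ s, v i) := by
  classical
  induction s using Finset.induction_on with
  | empty => simpa using SumsAbsAt.one q
  | insert i s hi ih =>
    rw [Finset.prod_insert hi, Finset.prod_insert hi]
    exact (hf i (Finset.mem_insert_self i s)).mul
      (ih fun j hj ↦ hf j (Finset.mem_insert_of_mem hj))

open PowerSeries.WithPiTopology in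
lemma coeff_tsum_X_pow_mul {d : ℕ} (hd : d ≠ 0) (n : ℕ) :
    (∑' j : ℕ, (X : 𝕜⟦X⟧) ^ (d * j)).coeff n = if d ∣ n then 1 else 0 := by
  suffices h : HasSum (fun j : ℕ ↦ (X : 𝕜⟦X⟧) ^ (d * j))
      (PowerSeries.mk fun n ↦ if d ∣ n then 1 else 0) by
    rw [h.tsum_eq, coeff_mk]
  refine (hasSum_iff_hasSum_coeff (g := mk _)).mpr fun n ↦ ?_
  simp only [coeff_X_pow, coeff_mk]
  split_ifs with hdn
  · obtain ⟨c, rfl⟩ := hdn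
    simpa [hd, eq_comm] using hasSum_ite_eq c (1 : 𝕜)
  · have (j : ℕ) : n ≠ d * j := fun h ↦ hdn ⟨j, h⟩
    simp [this]

open PowerSeries.WithPiTopology in
lemma sumsAbsAt_tsum_X_pow_mul [CompleteSpace 𝕜] {d : ℕ} (hd : d ≠ 0) (hq : ‖q‖ < 1) :
    SumsAbsAt (∑' j : ℕ, (X : 𝕜⟦X⟧) ^ (d * j)) q (1 - q ^ d)⁻¹ := by
  simp only [SumsAbsAt, coeff_tsum_X_pow_mul hd]
  constructor
  · refine (summable_geometric_of_lt_one (norm_nonneg q) hq).of_nonneg_of_le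
      (fun _ ↦ norm_nonneg _) fun n ↦ ?_
    split_ifs <;> simp
  · have hqd : ‖q ^ d‖ < 1 := norm_pow q d ▸ pow_lt_one₀ (norm_nonneg q) hq hd
    have hinj : Function.Injective (d * · : ℕ → ℕ) := mul_right_injective₀ hd
    refine (hinj.hasSum_iff fun n hn ↦ ?_).mp ?_
    · rw [if_neg fun h ↦ hn (h.imp fun _ ↦ Eq.symm), zero_mul]
    · simpa [Function.comp_def, pow_mul] using hasSum_geometric_of_norm_lt_one hqd

end PowerSeriesEvaluation

section GeneratingFunction

open Nat.Partition

variable (P : ℕ → Prop) [DecidablePred P] {q : ℂ}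

open PowerSeries.WithPiTopology in
lemma hasSum_card_restricted_le (N : ℕ) (hq : ‖q‖ < 1) :
    HasSum (fun n ↦ ((restricted n fun k ↦ P k ∧ k ≤ N).card : ℂ) * q ^ n)
      (∏ i ∈ Finset.range N, if P (i + 1) then (1 - q ^ (i + 1))⁻¹ else 1) := by
  have series_eq : (PowerSeries.mk fun n ↦ ((restricted n fun k ↦ P k ∧ k ≤ N).card : ℂ)) =
      ∏ i ∈ Finset.range N,
        if P (i + 1) then ∑' j : ℕ, (PowerSeries.X : PowerSeries ℂ) ^ ((i + 1) * j) else 1 := by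
    refine (hasProd_powerSeriesMk_card_restricted ℂ fun k ↦ P k ∧ k ≤ N).unique ?_
    have truncate : ∀ i ∈ Finset.range N, (if P (i + 1) ∧ i + 1 ≤ N
        then ∑' j : ℕ, (PowerSeries.X : PowerSeries ℂ) ^ ((i + 1) * j) else 1) =
        if P (i + 1) then ∑' j : ℕ, (PowerSeries.X : PowerSeries ℂ) ^ ((i + 1) * j) else 1 :=
      fun i hi ↦ by simp only [Nat.succ_le_of_lt (Finset.mem_range.mp hi), and_true]
    rw [← Finset.prod_congr rfl truncate]
    exact hasProd_prod_of_ne_finset_one fun i hi ↦ if_neg fun h ↦ hi (Finset.mem_range.mpr h.2)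
  have hsum : SumsAbsAt (PowerSeries.mk fun n ↦ ((restricted n fun k ↦ P k ∧ k ≤ N).card : ℂ)) q
      (∏ i ∈ Finset.range N, if P (i + 1) then (1 - q ^ (i + 1))⁻¹ else 1) := by
    rw [series_eq]
    refine SumsAbsAt.prod _ fun i _ ↦ ?_
    split_ifs
    · exact sumsAbsAt_tsum_X_pow_mul i.succ_ne_zero hq
    · exact SumsAbsAt.one q
  simpa only [PowerSeries.coeff_mk] using hsum.2

lemma card_restricted_le_le (N n : ℕ) :
    (restricted n fun k ↦ P k ∧ k ≤ N).card ≤ (restricted n P).card :=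
  Finset.card_le_card <| Finset.monotone_filter_right _ fun _ _ h i hi ↦ (h i hi).1

lemma card_restricted_le_eq {N n : ℕ} (h : n ≤ N) :
    (restricted n fun k ↦ P k ∧ k ≤ N).card = (restricted n P).card := by
  refine congrArg Finset.card <| Finset.filter_congr fun π _ ↦
    ⟨fun hπ i hi ↦ (hπ i hi).1, fun hπ i hi ↦ ⟨hπ i hi, le_trans ?_ h⟩⟩
  simpa only [π.parts_sum] using Multiset.le_sum_of_mem hi

variable {P} in
lemma summable_card_restricted_mul_pow {r : ℝ} (hr : 0 ≤ r) (hr1 : r < 1) {v : ℂ}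
    (hv : Tendsto (fun N ↦ ∏ i ∈ Finset.range N,
      if P (i + 1) then (1 - (r : ℂ) ^ (i + 1))⁻¹ else 1) atTop (𝓝 v)) :
    Summable fun n ↦ ((restricted n P).card : ℝ) * r ^ n := by
  obtain ⟨B, hB⟩ := hv.norm.bddAbove_range
  refine summable_of_sum_range_le (c := B) (fun n ↦ by positivity) fun N ↦ ?_
  have hN := Complex.hasSum_re
    (hasSum_card_restricted_le P N (q := r) (by simpa [abs_of_nonneg hr]))
  have re_term (n : ℕ) : (((restricted n fun k ↦ P k ∧ k ≤ N).card : ℂ) * (r : ℂ) ^ n).re =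
      ((restricted n fun k ↦ P k ∧ k ≤ N).card : ℝ) * r ^ n := by
    exact_mod_cast Complex.ofReal_re _
  simp only [re_term] at hN
  calc ∑ n ∈ Finset.range N, ((restricted n P).card : ℝ) * r ^ n
      = ∑ n ∈ Finset.range N, ((restricted n fun k ↦ P k ∧ k ≤ N).card : ℝ) * r ^ n :=
        Finset.sum_congr rfl fun n hn ↦ by
          rw [card_restricted_le_eq P (Finset.mem_range.mp hn).le]
    _ ≤ _ := sum_le_hasSum _ (fun n _ ↦ by positivity) hN
    _ ≤ _ := Complex.re_le_norm _
    _ ≤ B := hB ⟨N, rfl⟩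

variable {P} in
lemma hasSum_card_restricted_mul_pow (hq : ‖q‖ < 1) {v : ℂ}
    (hsummable : Summable fun n ↦ ((restricted n P).card : ℝ) * ‖q‖ ^ n)
    (hv : Tendsto (fun N ↦ ∏ i ∈ Finset.range N,
      if P (i + 1) then (1 - q ^ (i + 1))⁻¹ else 1) atTop (𝓝 v)) :
    HasSum (fun n ↦ ((restricted n P).card : ℂ) * q ^ n) v := by
  have hlim : Tendsto (fun N ↦ ∑' n, ((restricted n fun k ↦ P k ∧ k ≤ N).card : ℂ) * q ^ n)
      atTop (𝓝 (∑' n, ((restricted n P).card : ℂ) * q ^ n)) := by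
    refine tendsto_tsum_of_dominated_convergence hsummable (fun n ↦ ?_) (.of_forall fun N n ↦ ?_)
    · refine tendsto_const_nhds.congr' ?_
      filter_upwards [eventually_ge_atTop n] with N hN
      rw [card_restricted_le_eq P hN]
    · rw [norm_mul, norm_pow, Complex.norm_natCast]
      exact mul_le_mul_of_nonneg_right (mod_cast card_restricted_le_le P N n) (by positivity)
  simp only [(hasSum_card_restricted_le P _ hq).tsum_eq] at hlim
  rw [tendsto_nhds_unique hv hlim]
  exact (Summable.of_norm <| by simpa using hsummable).hasSum

/-- The sum `∑ q ^ k` over the admissible parts `k`, that is, over the `k ≥ 1` satisfying `P`. -/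
def partSum (q : ℂ) : ℂ := ∑' k : ℕ, if P (k + 1) then q ^ (k + 1) else 0

/-- The logarithm `∑ q ^ (k j) / j` (over admissible parts `k` and `j ≥ 1`) of the generating
function `∏ (1 - q ^ k)⁻¹` of the partitions into parts satisfying `P`, grouped by `j`. -/
def logGenFun (q : ℂ) : ℂ := ∑' j : ℕ, partSum P (q ^ (j + 1)) / (j + 1)

lemma norm_pow_succ_lt_one (hq : ‖q‖ < 1) (k : ℕ) : ‖q ^ (k + 1)‖ < 1 :=
  norm_pow q (k + 1) ▸ pow_lt_one₀ (norm_nonneg q) hq k.succ_ne_zero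

lemma hasSum_partSum (hq : ‖q‖ < 1) :
    HasSum (fun k : ℕ ↦ if P (k + 1) then q ^ (k + 1) else 0) (partSum P q) := by
  refine (Summable.of_norm_bounded (summable_geometric_of_lt_one (norm_nonneg q) hq)
    fun k ↦ ?_).hasSum
  split_ifs
  · rw [norm_pow]
    exact pow_le_pow_of_le_one (norm_nonneg q) hq.le k.le_succ
  · simp

/-- The general term of the double series of `logGenFun`, at the part `k + 1` and `j + 1`. -/
def logGenFunTerm (q : ℂ) (k j : ℕ) : ℂ :=
  if P (k + 1) then q ^ ((k + 1) * (j + 1)) / (j + 1) else 0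

lemma summable_logGenFunTerm (hq : ‖q‖ < 1) :
    Summable fun kj : ℕ × ℕ ↦ logGenFunTerm P q kj.1 kj.2 := by
  have hgeom := summable_geometric_of_lt_one (norm_nonneg q) hq
  refine .of_norm_bounded (hgeom.mul_of_nonneg hgeom (fun _ ↦ by positivity)
    fun _ ↦ by positivity) fun ⟨k, j⟩ ↦ ?_
  simp only [logGenFunTerm]
  split_ifs
  · have one_le_norm : 1 ≤ ‖(j : ℂ) + 1‖ := by
      exact_mod_cast (Complex.norm_natCast (j + 1)).symm ▸ Nat.one_le_cast.mpr j.succ_pos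
    calc ‖q ^ ((k + 1) * (j + 1)) / (j + 1)‖ ≤ ‖q‖ ^ ((k + 1) * (j + 1)) := by
          rw [norm_div, norm_pow]
          exact div_le_self (by positivity) one_le_norm
      _ ≤ ‖q‖ ^ (k + j) := pow_le_pow_of_le_one (norm_nonneg q) hq.le (by nlinarith)
      _ = ‖q‖ ^ k * ‖q‖ ^ j := pow_add _ _ _
  · rw [norm_zero]
    positivity

lemma hasSum_logGenFunTerm_left (hq : ‖q‖ < 1) (j : ℕ) :
    HasSum (fun k ↦ logGenFunTerm P q k j) (partSum P (q ^ (j + 1)) / (j + 1)) := by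
  simpa only [logGenFunTerm, ← pow_mul, mul_comm (j + 1), ite_div, zero_div] using
    (hasSum_partSum P (norm_pow_succ_lt_one hq j)).div_const ((j : ℂ) + 1)

lemma hasSum_logGenFunTerm_right (hq : ‖q‖ < 1) (k : ℕ) :
    HasSum (fun j ↦ logGenFunTerm P q k j)
      (if P (k + 1) then -Complex.log (1 - q ^ (k + 1)) else 0) := by
  unfold logGenFunTerm
  split_ifs
  · have h := Complex.hasSum_taylorSeries_neg_log (norm_pow_succ_lt_one hq k)
    rw [← hasSum_nat_add_iff' 1] at h
    simpa [← pow_mul] using h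
  · exact hasSum_zero

lemma hasSum_logGenFun (hq : ‖q‖ < 1) :
    HasSum (fun j : ℕ ↦ partSum P (q ^ (j + 1)) / (j + 1)) (logGenFun P q) :=
  ((Equiv.prodComm ℕ ℕ).summable_iff.mpr (summable_logGenFunTerm P hq)).hasSum.prod_fiberwise
    (hasSum_logGenFunTerm_left P hq) |>.summable.hasSum

lemma hasSum_neg_log_logGenFun (hq : ‖q‖ < 1) :
    HasSum (fun k : ℕ ↦ if P (k + 1) then -Complex.log (1 - q ^ (k + 1)) else 0)
      (logGenFun P q) := by
  have hterm := (summable_logGenFunTerm P hq).hasSum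
  convert hterm.prod_fiberwise (hasSum_logGenFunTerm_right P hq) using 1
  exact ((Equiv.prodComm ℕ ℕ).hasSum_iff.mpr hterm).prod_fiberwise
    (hasSum_logGenFunTerm_left P hq) |>.tsum_eq

lemma tendsto_prod_exp_logGenFun (hq : ‖q‖ < 1) :
    Tendsto (fun N ↦ ∏ i ∈ Finset.range N, if P (i + 1) then (1 - q ^ (i + 1))⁻¹ else 1) atTop
      (𝓝 (Complex.exp (logGenFun P q))) := by
  refine ((Complex.continuous_exp.tendsto _).comp
    (hasSum_neg_log_logGenFun P hq).tendsto_sum_nat).congr fun N ↦ ?_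
  rw [Function.comp_apply, Complex.exp_sum]
  refine Finset.prod_congr rfl fun k _ ↦ ?_
  split_ifs
  · have hne : 1 - q ^ (k + 1) ≠ 0 := fun h ↦ by
      simpa [← sub_eq_zero.mp h] using norm_pow_succ_lt_one hq k
    rw [Complex.exp_neg, Complex.exp_log hne]
  · exact Complex.exp_zero

theorem hasSum_card_restricted_exp_logGenFun (hq : ‖q‖ < 1) :
    HasSum (fun n ↦ ((restricted n P).card : ℂ) * q ^ n) (Complex.exp (logGenFun P q)) :=
  hasSum_card_restricted_mul_pow hq
    (summable_card_restricted_mul_pow (norm_nonneg q) hq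
      (tendsto_prod_exp_logGenFun P (by simpa using hq)))
    (tendsto_prod_exp_logGenFun P hq)

lemma re_partSum_le (hq : ‖q‖ < 1) : (partSum P q).re ≤ (partSum P ‖q‖).re := by
  refine hasSum_le (fun k ↦ ?_) (Complex.hasSum_re (hasSum_partSum P hq))
    (Complex.hasSum_re (hasSum_partSum P (q := ‖q‖) (by simpa using hq)))
  split_ifs
  · exact (Complex.re_le_norm _).trans_eq (by rw [norm_pow]; norm_cast)
  · exact le_rfl

lemma re_logGenFun_le (hq : ‖q‖ < 1) :
    (logGenFun P q).re ≤ (logGenFun P ‖q‖).re - ((partSum P ‖q‖).re - (partSum P q).re) := by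
  have hdiff := (Complex.hasSum_re (hasSum_logGenFun P (q := ‖q‖) (by simpa using hq))).sub
    (Complex.hasSum_re (hasSum_logGenFun P hq))
  have first_term_le := le_hasSum hdiff 0 fun j _ ↦ by
    have hj : ((j : ℂ) + 1) = ((j + 1 : ℝ) : ℂ) := by push_cast; rfl
    have hle := re_partSum_le P (norm_pow_succ_lt_one hq j)
    rw [norm_pow, Complex.ofReal_pow] at hle
    rw [hj, Complex.div_ofReal_re, Complex.div_ofReal_re, sub_nonneg]
    gcongr
  norm_num at first_term_le
  linarith

end GeneratingFunction

section CoefficientIntegral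

open MeasureTheory Set
open scoped Real

lemma integral_exp_int_mul_I_eq_zero {m : ℤ} (hm : m ≠ 0) :
    ∫ θ in Ioc (-π) π, Complex.exp (m * (θ * Complex.I)) = 0 := by
  have hmI : (m : ℂ) * Complex.I ≠ 0 := mul_ne_zero (mod_cast hm) Complex.I_ne_zero
  have periodic : Complex.exp (m * Complex.I * π) = Complex.exp (m * Complex.I * (-π : ℝ)) :=
    Complex.exp_eq_exp_iff_exists_int.mpr ⟨m, by push_cast; ring⟩
  simp_rw [← intervalIntegral.integral_of_le (neg_le_self Real.pi_pos.le),
    mul_comm _ Complex.I, ← mul_assoc]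
  rw [integral_exp_mul_complex hmI, periodic, sub_self, zero_div]

variable {c : ℕ → ℂ} {F : ℝ → ℂ} {t : ℝ}

lemma measurable_of_hasSum_exp
    (hF : ∀ θ : ℝ, HasSum (fun k ↦ c k * Complex.exp (-(t + θ * Complex.I)) ^ k) (F θ)) :
    Measurable F := by
  have partialSum_measurable (N : ℕ) : Measurable fun θ : ℝ ↦
      ∑ k ∈ Finset.range N, c k * Complex.exp (-(t + θ * Complex.I)) ^ k :=
    Continuous.measurable (by fun_prop)
  exact measurable_of_tendsto_metrizable partialSum_measurable
    (tendsto_pi_nhds.mpr fun θ ↦ (hF θ).tendsto_sum_nat)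

lemma setIntegral_mul_exp_eq_coeff
    (hF : ∀ θ : ℝ, HasSum (fun k ↦ c k * Complex.exp (-(t + θ * Complex.I)) ^ k) (F θ)) (n : ℕ) :
    ∫ θ in Ioc (-π) π, F θ * Complex.exp (n * (t + θ * Complex.I)) = 2 * π * c n := by
  set f : ℕ → ℝ → ℂ := fun k θ ↦
    c k * Complex.exp (-(t + θ * Complex.I)) ^ k * Complex.exp (n * (t + θ * Complex.I)) with hf
  have f_eq (k : ℕ) (θ : ℝ) : f k θ = c k * Complex.exp (((n : ℤ) - k : ℤ) * t) *
      Complex.exp (((n : ℤ) - k : ℤ) * (θ * Complex.I)) := by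
    simp only [hf]
    rw [← Complex.exp_nat_mul, mul_assoc, mul_assoc, ← Complex.exp_add, ← Complex.exp_add]
    congr 2
    push_cast
    ring
  have norm_f (k : ℕ) (θ : ℝ) :
      ‖f k θ‖ = ‖c k * Complex.exp (-(t + (0 : ℝ) * Complex.I)) ^ k‖ * Real.exp (n * t) := by
    simp [hf, Complex.norm_exp]
  have integrable_f (k : ℕ) : Integrable (f k) (volume.restrict (Ioc (-π) π)) :=
    Continuous.integrableOn_Ioc (by fun_prop)
  have hswap := hasSum_integral_of_summable_integral_norm integrable_f (by
    simp_rw [norm_f, integral_const]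
    exact ((hF 0).summable.norm.mul_right _).const_smul _)
  have sum_f (θ : ℝ) : ∑' k, f k θ = F θ * Complex.exp (n * (t + θ * Complex.I)) :=
    ((hF θ).mul_right _).tsum_eq
  simp_rw [sum_f] at hswap
  rw [← hswap.tsum_eq, tsum_eq_single n]
  · simp only [f_eq, sub_self, Int.cast_zero, zero_mul, Complex.exp_zero, mul_one, integral_const,
      measureReal_restrict_apply_univ, Real.volume_real_Ioc, Complex.real_smul]
    rw [max_eq_left (by linarith [Real.pi_pos])]
    push_cast
    ring
  · intro k hk
    simp_rw [f_eq]
    rw [integral_const_mul, integral_exp_int_mul_I_eq_zero (by lia), mul_zero]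

end CoefficientIntegral

section RiemannSum

open MeasureTheory Set

lemma map_floor_volume_Ici : (volume.restrict (Ici (0 : ℝ))).map Nat.floor = Measure.count := by
  refine Measure.ext_of_singleton fun m ↦ ?_
  have preimage_eq : Nat.floor ⁻¹' {m} ∩ Ici (0 : ℝ) = Ico (m : ℝ) (m + 1) := by
    ext x
    refine ⟨fun ⟨hxm, hx⟩ ↦ (Nat.floor_eq_iff hx).mp hxm, fun hx ↦ ?_⟩
    have hx0 : 0 ≤ x := m.cast_nonneg.trans hx.1
    exact ⟨(Nat.floor_eq_iff hx0).mpr hx, hx0⟩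
  rw [Measure.map_apply Nat.measurable_floor (measurableSet_singleton m),
    Measure.restrict_apply (Nat.measurable_floor (measurableSet_singleton m)), preimage_eq]
  simp

variable {E : Type*} [NormedAddCommGroup E] [NormedSpace ℝ E] [CompleteSpace E]

lemma setIntegral_Ioi_floor {a : ℕ → E} (ha : Summable fun m ↦ ‖a m‖) :
    ∫ x in Ioi (0 : ℝ), a ⌊x⌋₊ = ∑' m, a m := by
  rw [← integral_Ici_eq_integral_Ioi,
    ← integral_map (f := a) Nat.measurable_floor.aemeasurable
      StronglyMeasurable.of_discrete.aestronglyMeasurable, map_floor_volume_Ici,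
    integral_countable (integrable_count_iff.mpr ha)]
  simp

lemma setIntegral_Ioi_floor_div {a : ℕ → E} (ha : Summable fun m ↦ ‖a m‖) {t : ℝ} (ht : 0 < t) :
    ∫ x in Ioi (0 : ℝ), a ⌊x / t⌋₊ = t • ∑' m, a m := by
  simpa [div_eq_inv_mul, setIntegral_Ioi_floor ha] using
    integral_comp_mul_left_Ioi (fun x : ℝ ↦ a ⌊x⌋₊) 0 (inv_pos.mpr ht)

lemma le_floor_div_add_one_mul (x : ℝ) {t : ℝ} (ht : 0 < t) : x ≤ (⌊x / t⌋₊ + 1) * t :=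
  (div_le_iff₀ ht).mp (Nat.lt_floor_add_one _).le

lemma tendsto_floor_div_add_one_mul {x : ℝ} (hx : 0 ≤ x) :
    Tendsto (fun t : ℝ ↦ (⌊x / t⌋₊ + 1) * t) (𝓝[>] 0) (𝓝 x) := by
  have hupper : Tendsto (fun t : ℝ ↦ x + t) (𝓝[>] 0) (𝓝 x) := by
    simpa using (tendsto_nhds_of_tendsto_nhdsWithin (tendsto_id (x := 𝓝[>] (0 : ℝ)))).const_add x
  refine tendsto_of_tendsto_of_tendsto_of_le_of_le' tendsto_const_nhds hupper ?_ ?_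
  · filter_upwards [self_mem_nhdsWithin] with t ht using le_floor_div_add_one_mul x ht
  · filter_upwards [self_mem_nhdsWithin] with t ht
    rw [add_mul, one_mul]
    gcongr
    exact (le_div_iff₀ ht).mp (Nat.floor_le (div_nonneg hx (le_of_lt ht)))

/-- The point `t + i t y` of the right half-plane, which approaches `0` inside a cone around the
positive axis as `t → 0⁺` and `y → 0`. -/
def conePoint (p : ℝ × ℝ) : ℂ := p.1 * (1 + p.2 * Complex.I)

@[simp] lemma conePoint_re (p : ℝ × ℝ) : (conePoint p).re = p.1 := by simp [conePoint]

@[simp] lemma conePoint_im (p : ℝ × ℝ) : (conePoint p).im = p.1 * p.2 := by simp [conePoint]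

lemma conePoint_mul (r : ℝ) (p : ℝ × ℝ) : conePoint (r * p.1, p.2) = r * conePoint p := by
  simp [conePoint, mul_assoc]

lemma tendsto_one_add_mul_I :
    Tendsto (fun y : ℝ ↦ 1 + (y : ℂ) * Complex.I) (𝓝 0) (𝓝 1) :=
  Continuous.tendsto' (by fun_prop) _ _ (by simp)

lemma eventually_pos_prod_abs_le_one :
    ∀ᶠ p : ℝ × ℝ in 𝓝[>] 0 ×ˢ 𝓝 0, 0 < p.1 ∧ |p.2| ≤ 1 :=
  (eventually_mem_nhdsWithin : ∀ᶠ t in 𝓝[>] (0 : ℝ), 0 < t).prod_mk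
    ((continuous_abs.tendsto' (0 : ℝ) 0 abs_zero).eventually (Iic_mem_nhds one_pos))

section ConeBound

variable {φ : ℂ → ℂ} {K : ℝ}
  (hbound : ∀ w : ℂ, 0 < w.re → |w.im| ≤ w.re → ‖φ w‖ ≤ K / (1 + w.re ^ 2))
include hbound

lemma coneBound_nonneg : 0 ≤ K := by
  have h := (norm_nonneg _).trans (hbound 1 (by simp) (by simp))
  norm_num at h
  linarith

lemma norm_comp_conePoint_le {p : ℝ × ℝ} (ht : 0 < p.1) (hy : |p.2| ≤ 1) :
    ‖φ (conePoint p)‖ ≤ K / (1 + p.1 ^ 2) := by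
  have him : |(conePoint p).im| ≤ (conePoint p).re := by
    rw [conePoint_im, conePoint_re, abs_mul, abs_of_pos ht]
    exact mul_le_of_le_one_right ht.le hy
  simpa using hbound (conePoint p) (by simpa using ht) him

lemma summable_norm_comp_conePoint {t y : ℝ} (ht : 0 < t) (hy : |y| ≤ 1) :
    Summable fun m : ℕ ↦ ‖φ (conePoint ((m + 1) * t, y))‖ := by
  have hsq : Summable fun m : ℕ ↦ K / t ^ 2 * (1 / ((m : ℝ) + 1) ^ 2) := by
    simpa using ((summable_nat_add_iff (f := fun n : ℕ ↦ 1 / (n : ℝ) ^ 2) 1).mpr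
      (Real.summable_one_div_nat_pow.mpr one_lt_two)).mul_left (K / t ^ 2)
  have hK := coneBound_nonneg hbound
  refine hsq.of_nonneg_of_le (fun _ ↦ norm_nonneg _) fun m ↦ ?_
  calc ‖φ (conePoint ((m + 1) * t, y))‖ ≤ K / (1 + ((m + 1) * t) ^ 2) :=
        norm_comp_conePoint_le hbound (p := ((m + 1) * t, y)) (by positivity) hy
    _ ≤ K / (t ^ 2 * (m + 1) ^ 2) := by
        gcongr
        linarith [mul_pow ((m : ℝ) + 1) t 2]
    _ = K / t ^ 2 * (1 / ((m : ℝ) + 1) ^ 2) := by rw [div_mul_div_comm, mul_one]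

lemma tendsto_setIntegral_floor_conePoint (hcont : ∀ x : ℝ, 0 < x → ContinuousAt φ x) :
    Tendsto (fun p : ℝ × ℝ ↦ ∫ x in Ioi (0 : ℝ), φ (conePoint ((⌊x / p.1⌋₊ + 1) * p.1, p.2)))
      (𝓝[>] 0 ×ˢ 𝓝 0) (𝓝 (∫ x in Ioi (0 : ℝ), φ x)) := by
  have hK := coneBound_nonneg hbound
  refine tendsto_integral_filter_of_dominated_convergence (fun x : ℝ ↦ K / (1 + x ^ 2))
    (.of_forall fun p ↦ ?_) ?_ ?_ ?_
  · have hmeas : StronglyMeasurable fun m : ℕ ↦ φ (conePoint ((m + 1) * p.1, p.2)) := .of_discrete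
    exact (hmeas.comp_measurable
      (Nat.measurable_floor.comp (measurable_id.div_const p.1))).aestronglyMeasurable
  · filter_upwards [eventually_pos_prod_abs_le_one] with p ⟨ht, hy⟩
    refine (ae_restrict_iff' measurableSet_Ioi).mpr (ae_of_all _ fun x (hx : 0 < x) ↦ ?_)
    refine (norm_comp_conePoint_le hbound (p := ((⌊x / p.1⌋₊ + 1) * p.1, p.2)) (by positivity)
      hy).trans ?_
    gcongr
    exact le_floor_div_add_one_mul x ht
  · simpa only [div_eq_mul_inv] using (integrable_inv_one_add_sq.const_mul K).restrict
  · refine (ae_restrict_iff' measurableSet_Ioi).mpr (ae_of_all _ fun x (hx : 0 < x) ↦ ?_)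
    have hpoint : Tendsto (fun p : ℝ × ℝ ↦ conePoint ((⌊x / p.1⌋₊ + 1) * p.1, p.2))
        (𝓝[>] 0 ×ˢ 𝓝 0) (𝓝 x) := by
      simpa [conePoint, Function.comp_def] using ((Complex.continuous_ofReal.tendsto x).comp
        ((tendsto_floor_div_add_one_mul hx.le).comp tendsto_fst)).mul
        (tendsto_one_add_mul_I.comp tendsto_snd)
    exact (hcont x hx).tendsto.comp hpoint

lemma tendsto_conePoint_mul_tsum (hcont : ∀ x : ℝ, 0 < x → ContinuousAt φ x) :
    Tendsto (fun p : ℝ × ℝ ↦ conePoint p * ∑' m : ℕ, φ ((m + 1) * conePoint p))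
      (𝓝[>] 0 ×ˢ 𝓝 0) (𝓝 (∫ x in Ioi (0 : ℝ), φ x)) := by
  have hlim := (tendsto_one_add_mul_I.comp (tendsto_snd (f := 𝓝[>] (0 : ℝ)))).mul
    (tendsto_setIntegral_floor_conePoint hbound hcont)
  rw [one_mul] at hlim
  refine hlim.congr' ?_
  filter_upwards [eventually_pos_prod_abs_le_one] with p ⟨ht, hy⟩
  have hpoint (m : ℕ) : conePoint ((m + 1) * p.1, p.2) = (m + 1) * conePoint p := by
    exact_mod_cast conePoint_mul (m + 1) p
  rw [setIntegral_Ioi_floor_div (a := fun m : ℕ ↦ φ (conePoint ((m + 1) * p.1, p.2)))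
    (summable_norm_comp_conePoint hbound ht hy) ht, Complex.real_smul]
  simp only [hpoint, Function.comp_apply]
  rw [← mul_assoc, mul_comm _ (p.1 : ℂ)]
  rfl

end ConeBound

end RiemannSum

section FrullaniExp

open MeasureTheory Set

lemma integrableOn_inv_smul_exp_sub_exp_of_le {a b : ℝ} (ha : 0 < a) (hab : a ≤ b) :
    IntegrableOn (fun x ↦ x⁻¹ • (Real.exp (-(a * x)) - Real.exp (-(b * x)))) (Ioi 0) := by
  have hdom : IntegrableOn (fun x : ℝ ↦ (b - a) * Real.exp (-a * x)) (Ioi 0) :=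
    (integrableOn_exp_mul_Ioi (neg_neg_of_pos ha) 0).const_mul (b - a)
  refine Integrable.mono' hdom (Measurable.aestronglyMeasurable (by fun_prop))
    ((ae_restrict_iff' measurableSet_Ioi).mpr (ae_of_all _ fun x (hx : 0 < x) ↦ ?_))
  have hmono : Real.exp (-(b * x)) ≤ Real.exp (-(a * x)) := by gcongr
  have hdiff : Real.exp (-(a * x)) - Real.exp (-(b * x)) ≤
      Real.exp (-(a * x)) * ((b - a) * x) := by
    have hsplit : Real.exp (-(b * x)) = Real.exp (-(a * x)) * Real.exp (-((b - a) * x)) := by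
      rw [← Real.exp_add]; ring_nf
    rw [hsplit]
    nlinarith [Real.add_one_le_exp (-((b - a) * x)), Real.exp_pos (-(a * x))]
  rw [smul_eq_mul, Real.norm_of_nonneg (mul_nonneg (by positivity) (sub_nonneg.mpr hmono))]
  calc x⁻¹ * (Real.exp (-(a * x)) - Real.exp (-(b * x)))
      ≤ x⁻¹ * (Real.exp (-(a * x)) * ((b - a) * x)) := by gcongr
    _ = (b - a) * Real.exp (-a * x) := by rw [neg_mul]; field_simp

lemma integrableOn_inv_smul_exp_sub_exp {a b : ℝ} (ha : 0 < a) (hb : 0 < b) :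
    IntegrableOn (fun x ↦ x⁻¹ • (Real.exp (-(a * x)) - Real.exp (-(b * x)))) (Ioi 0) := by
  rcases le_total a b with hab | hba
  · exact integrableOn_inv_smul_exp_sub_exp_of_le ha hab
  · refine (integrableOn_inv_smul_exp_sub_exp_of_le hb hba).neg.congr (ae_of_all _ fun x ↦ ?_)
    simp only [Pi.neg_apply, smul_eq_mul]
    ring

lemma integral_inv_smul_exp_sub_exp {a b : ℝ} (ha : 0 < a) (hb : 0 < b) :
    ∫ x in Ioi (0 : ℝ), x⁻¹ • (Real.exp (-(a * x)) - Real.exp (-(b * x))) = Real.log (b / a) := by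
  have hzero : Tendsto (fun x : ℝ ↦ Real.exp (-x)) (𝓝[>] 0) (𝓝 1) :=
    (Continuous.tendsto' (by fun_prop) _ _ (by simp)).mono_left nhdsWithin_le_nhds
  have hloc : LocallyIntegrableOn (fun x : ℝ ↦ Real.exp (-x)) (Ioi 0) :=
    ContinuousOn.locallyIntegrableOn (by fun_prop) measurableSet_Ioi
  simpa using Frullani.integral_Ioi_eq hloc ha hb hzero Real.tendsto_exp_neg_atTop_nhds_zero
    (integrableOn_inv_smul_exp_sub_exp ha hb)

end FrullaniExp

section RegularizedKernel

/-- The sum `∑ e^{-jw}` over all `j > 0` in `(α + ℤ) ∪ (-α + ℤ)`, in closed form: the generating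
function of the admissible parts, rescaled so that the modulus becomes `1`. -/
def pairKernel (α : ℝ) (w : ℂ) : ℂ :=
  (Complex.exp (-(α * w)) + Complex.exp (-((1 - α) * w))) / (1 - Complex.exp (-w))

/-- `pairKernel` with its pole at the origin removed, divided by `w`. -/
def regKernel (α : ℝ) (w : ℂ) : ℂ := (pairKernel α w - 2 / w) / w

lemma div_one_add_le_norm_one_sub_exp_neg {w : ℂ} (hw : 0 < w.re) :
    w.re / (1 + w.re) ≤ ‖1 - Complex.exp (-w)‖ := by
  have hexp : Real.exp (-w.re) ≤ 1 / (1 + w.re) := by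
    rw [Real.exp_neg, ← one_div]
    gcongr
    linarith [Real.add_one_le_exp w.re]
  have htri := norm_sub_norm_le 1 (Complex.exp (-w))
  rw [norm_one, Complex.norm_exp, Complex.neg_re] at htri
  have hid : w.re / (1 + w.re) = 1 - 1 / (1 + w.re) := by field_simp; ring
  linarith

lemma one_sub_exp_neg_ne_zero {w : ℂ} (hw : 0 < w.re) : 1 - Complex.exp (-w) ≠ 0 :=
  norm_pos_iff.mp ((div_pos hw (by linarith)).trans_le (div_one_add_le_norm_one_sub_exp_neg hw))

variable {α : ℝ}

lemma norm_exp_neg_sub_linear_le (w : ℂ) (hα0 : 0 ≤ α) (hα1 : α ≤ 1) :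
    ‖Complex.exp (-(α * w)) - (1 - α * w)‖ ≤ ‖w‖ ^ 2 * Real.exp ‖w‖ := by
  have hαw : ‖(α : ℂ) * w‖ ≤ ‖w‖ := by
    rw [norm_mul, Complex.norm_of_nonneg hα0]
    exact mul_le_of_le_one_left (norm_nonneg w) hα1
  have h := Complex.norm_exp_sub_sum_le_norm_mul_exp (-(α * w)) 2
  simp only [Finset.sum_range_succ, Finset.sum_range_zero, norm_neg, Nat.factorial, zero_add,
    pow_zero, pow_one, Nat.cast_one, mul_one, div_one, ← sub_eq_add_neg] at h
  exact h.trans (by gcongr)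

lemma norm_regKernel_numerator_le (w : ℂ) (hα0 : 0 ≤ α) (hα1 : α ≤ 1) :
    ‖w * (Complex.exp (-(α * w)) + Complex.exp (-((1 - α) * w))) -
      2 * (1 - Complex.exp (-w))‖ ≤ 4 * ‖w‖ ^ 3 * Real.exp ‖w‖ := by
  have h₁ := norm_exp_neg_sub_linear_le w hα0 hα1
  have h₂ := norm_exp_neg_sub_linear_le (α := 1 - α) w (by linarith) (by linarith)
  have h₃ := Complex.norm_exp_sub_sum_le_norm_mul_exp (-w) 3
  simp only [Finset.sum_range_succ, Finset.sum_range_zero, norm_neg, Nat.factorial_zero,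
    Nat.factorial_one, Nat.factorial_two, zero_add, pow_zero, pow_one, Nat.cast_one, div_one,
    Nat.cast_ofNat, Complex.ofReal_sub, Complex.ofReal_one] at h₂ h₃
  set ρ₁ := Complex.exp (-(α * w)) - (1 - α * w) with hρ₁
  set ρ₂ := Complex.exp (-((1 - α) * w)) - (1 - (1 - α) * w) with hρ₂
  set ρ₃ := Complex.exp (-w) - (1 + -w + (-w) ^ 2 / 2) with hρ₃
  calc ‖w * (Complex.exp (-(α * w)) + Complex.exp (-((1 - α) * w))) -
          2 * (1 - Complex.exp (-w))‖
      = ‖w * (ρ₁ + ρ₂) + 2 * ρ₃‖ := by rw [hρ₁, hρ₂, hρ₃]; ring_nf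
    _ ≤ ‖w‖ * (‖ρ₁‖ + ‖ρ₂‖) + 2 * ‖ρ₃‖ := by
        grw [norm_add_le, norm_mul, norm_mul, norm_add_le, Complex.norm_ofNat]
    _ ≤ ‖w‖ * (‖w‖ ^ 2 * Real.exp ‖w‖ + ‖w‖ ^ 2 * Real.exp ‖w‖) +
          2 * (‖w‖ ^ 3 * Real.exp ‖w‖) := by gcongr
    _ = 4 * ‖w‖ ^ 3 * Real.exp ‖w‖ := by ring

lemma norm_regKernel_le_of_re_le_one (hα0 : 0 ≤ α) (hα1 : α ≤ 1) {w : ℂ} (hw : 0 < w.re)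
    (him : |w.im| ≤ w.re) (hw1 : w.re ≤ 1) : ‖regKernel α w‖ ≤ 16 * Real.exp 2 := by
  have hw0 : w ≠ 0 := fun h ↦ by simp [h] at hw
  have hnorm : ‖w‖ ≤ 2 * w.re := by
    linarith [Complex.norm_le_abs_re_add_abs_im w, abs_of_pos hw]
  have hden : w.re / 2 ≤ ‖1 - Complex.exp (-w)‖ :=
    (by gcongr; linarith : w.re / 2 ≤ w.re / (1 + w.re)).trans
      (div_one_add_le_norm_one_sub_exp_neg hw)
  have hne := one_sub_exp_neg_ne_zero hw
  have hquot : regKernel α w = (w * (Complex.exp (-(α * w)) + Complex.exp (-((1 - α) * w))) -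
      2 * (1 - Complex.exp (-w))) / (w ^ 2 * (1 - Complex.exp (-w))) := by
    rw [regKernel, pairKernel]
    field_simp
  rw [hquot, norm_div, norm_mul, norm_pow, div_le_iff₀ (by positivity)]
  calc _ ≤ 4 * ‖w‖ ^ 3 * Real.exp ‖w‖ := norm_regKernel_numerator_le w hα0 hα1
    _ ≤ 4 * (‖w‖ ^ 2 * (2 * w.re)) * Real.exp 2 := by
        rw [pow_succ]
        gcongr
        linarith
    _ = 16 * Real.exp 2 * (‖w‖ ^ 2 * (w.re / 2)) := by ring
    _ ≤ 16 * Real.exp 2 * (‖w‖ ^ 2 * ‖1 - Complex.exp (-w)‖) := by gcongr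

lemma norm_exp_neg_ofReal_mul_le {a : ℝ} (ha : 0 < a) {w : ℂ} (hw : 0 < w.re) :
    ‖Complex.exp (-(a * w))‖ ≤ a⁻¹ / w.re := by
  rw [Complex.norm_exp, Complex.neg_re, Complex.re_ofReal_mul, Real.exp_neg, ← one_div,
    inv_eq_one_div, div_div]
  gcongr
  linarith [Real.add_one_le_exp (a * w.re)]

lemma norm_regKernel_le_of_one_le_re (hα0 : 0 < α) (hα1 : α < 1) {w : ℂ} (hw1 : 1 ≤ w.re) :
    ‖regKernel α w‖ ≤ (2 * (α⁻¹ + (1 - α)⁻¹) + 2) / w.re ^ 2 := by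
  have hw : 0 < w.re := by linarith
  have hnorm : w.re ≤ ‖w‖ := Complex.re_le_norm w
  have hden : 1 / 2 ≤ ‖1 - Complex.exp (-w)‖ :=
    ((div_le_div_iff₀ two_pos (by positivity)).mpr (by linarith)).trans
      (div_one_add_le_norm_one_sub_exp_neg hw)
  have h₁ := norm_exp_neg_ofReal_mul_le hα0 hw
  have h₂ := norm_exp_neg_ofReal_mul_le (sub_pos.mpr hα1) hw
  rw [Complex.ofReal_sub, Complex.ofReal_one] at h₂
  calc ‖regKernel α w‖
      ≤ (‖pairKernel α w‖ + ‖2 / w‖) / ‖w‖ := by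
        rw [regKernel, norm_div]
        gcongr
        exact norm_sub_le _ _
    _ ≤ ((α⁻¹ / w.re + (1 - α)⁻¹ / w.re) / (1 / 2) + 2 / w.re) / w.re := by
        rw [pairKernel, norm_div, norm_div, Complex.norm_ofNat]
        gcongr
        exact (norm_add_le _ _).trans (add_le_add h₁ h₂)
    _ = (2 * (α⁻¹ + (1 - α)⁻¹) + 2) / w.re ^ 2 := by field_simp

lemma exists_norm_regKernel_le (hα0 : 0 < α) (hα1 : α < 1) :
    ∃ K : ℝ, ∀ w : ℂ, 0 < w.re → |w.im| ≤ w.re → ‖regKernel α w‖ ≤ K / (1 + w.re ^ 2) := by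
  have : 0 < 1 - α := sub_pos.mpr hα1
  set C := 2 * (α⁻¹ + (1 - α)⁻¹) + 2
  have hC : 0 < C := by positivity
  refine ⟨2 * (16 * Real.exp 2 + C), fun w hw him ↦ ?_⟩
  rw [le_div_iff₀ (by positivity)]
  rcases le_total w.re 1 with hw1 | hw1
  · calc ‖regKernel α w‖ * (1 + w.re ^ 2) ≤ (16 * Real.exp 2 + C) * (1 + 1 ^ 2) := by
          gcongr
          linarith [norm_regKernel_le_of_re_le_one hα0.le hα1.le hw him hw1]
      _ = 2 * (16 * Real.exp 2 + C) := by ring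
  · have hsq : 1 ≤ w.re ^ 2 := one_le_pow₀ hw1
    calc ‖regKernel α w‖ * (1 + w.re ^ 2) ≤ C / w.re ^ 2 * (w.re ^ 2 + w.re ^ 2) := by
          gcongr
          exact norm_regKernel_le_of_one_le_re hα0 hα1 hw1
      _ = 2 * C := by field_simp; ring
      _ ≤ 2 * (16 * Real.exp 2 + C) := by linarith [Real.exp_pos 2]

lemma continuousAt_regKernel {w : ℂ} (hw : 0 < w.re) : ContinuousAt (regKernel α) w := by
  have hw0 : w ≠ 0 := fun h ↦ by simp [h] at hw
  have hne := one_sub_exp_neg_ne_zero hw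
  unfold regKernel pairKernel
  fun_prop (disch := assumption)

open MeasureTheory Set

lemma integrableOn_regKernel (hα0 : 0 < α) (hα1 : α < 1) :
    IntegrableOn (fun x : ℝ ↦ regKernel α x) (Ioi 0) := by
  obtain ⟨K, hK⟩ := exists_norm_regKernel_le hα0 hα1
  have hmeas : AEStronglyMeasurable (fun x : ℝ ↦ regKernel α x) (volume.restrict (Ioi 0)) := by
    refine ContinuousOn.aestronglyMeasurable (fun x (hx : 0 < x) ↦ ?_) measurableSet_Ioi
    exact (ContinuousAt.comp (continuousAt_regKernel (by simpa using hx))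
      Complex.continuous_ofReal.continuousAt).continuousWithinAt
  refine Integrable.mono' (integrable_inv_one_add_sq.const_mul K).integrableOn hmeas
    ((ae_restrict_iff' measurableSet_Ioi).mpr (ae_of_all _ fun x (hx : 0 < x) ↦ ?_))
  simpa [div_eq_mul_inv] using hK x (by simpa using hx) (by simpa using hx.le)

/-- The `k`-th term of the expansion of `regKernel α x - regKernel (1 / 2) x` into exponentials. -/
def frullaniTerm (α : ℝ) (k : ℕ) (x : ℝ) : ℝ :=
  x⁻¹ • (Real.exp (-((k + α) * x)) - Real.exp (-((k + 1 / 2) * x))) +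
    x⁻¹ • (Real.exp (-((k + (1 - α)) * x)) - Real.exp (-((k + 1 / 2) * x)))

/-- The value of the Frullani integral of `frullaniTerm α k`. -/
def frullaniLog (α : ℝ) (k : ℕ) : ℝ :=
  Real.log ((k + 1 / 2) / (k + α)) + Real.log ((k + 1 / 2) / (k + (1 - α)))

lemma integrableOn_frullaniTerm (hα0 : 0 < α) (hα1 : α < 1) (k : ℕ) :
    IntegrableOn (frullaniTerm α k) (Ioi 0) := by
  have : 0 < 1 - α := sub_pos.mpr hα1
  exact (integrableOn_inv_smul_exp_sub_exp (by positivity) (by positivity)).add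
    (integrableOn_inv_smul_exp_sub_exp (by positivity) (by positivity))

lemma integral_frullaniTerm (hα0 : 0 < α) (hα1 : α < 1) (k : ℕ) :
    ∫ x in Ioi 0, frullaniTerm α k x = frullaniLog α k := by
  have : 0 < 1 - α := sub_pos.mpr hα1
  unfold frullaniTerm
  rw [integral_add (integrableOn_inv_smul_exp_sub_exp (by positivity) (by positivity))
      (integrableOn_inv_smul_exp_sub_exp (by positivity) (by positivity)),
    integral_inv_smul_exp_sub_exp (by positivity) (by positivity),
    integral_inv_smul_exp_sub_exp (by positivity) (by positivity), frullaniLog]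

lemma frullaniTerm_nonneg (α : ℝ) (k : ℕ) {x : ℝ} (hx : 0 ≤ x) : 0 ≤ frullaniTerm α k x := by
  have hshift (c : ℝ) : Real.exp (-((k + c) * x)) =
      Real.exp (-((k + 1 / 2) * x)) * Real.exp ((1 / 2 - c) * x) := by
    rw [← Real.exp_add]; ring_nf
  rw [frullaniTerm, hshift α, hshift (1 - α), smul_eq_mul, smul_eq_mul, ← mul_add]
  refine mul_nonneg (inv_nonneg.mpr hx) ?_
  nlinarith [Real.add_one_le_exp ((1 / 2 - α) * x), Real.add_one_le_exp ((1 / 2 - (1 - α)) * x),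
    Real.exp_pos (-((k + 1 / 2) * x))]

lemma frullaniLog_nonneg (hα0 : 0 < α) (hα1 : α < 1) (k : ℕ) : 0 ≤ frullaniLog α k := by
  rw [← integral_frullaniTerm hα0 hα1]
  exact setIntegral_nonneg measurableSet_Ioi fun x hx ↦ frullaniTerm_nonneg α k (le_of_lt hx)

lemma sin_pi_mul_pos (hα0 : 0 < α) (hα1 : α < 1) : 0 < Real.sin (Real.pi * α) :=
  Real.sin_pos_of_pos_of_lt_pi (by positivity) (mul_lt_of_lt_one_right Real.pi_pos hα1)

lemma log_Gamma_add_log_Gamma_one_sub (hα0 : 0 < α) (hα1 : α < 1) :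
    Real.log (Real.Gamma α) + Real.log (Real.Gamma (1 - α)) =
      Real.log Real.pi - Real.log (Real.sin (Real.pi * α)) := by
  rw [← Real.log_mul (Real.Gamma_pos_of_pos hα0).ne'
      (Real.Gamma_pos_of_pos (sub_pos.mpr hα1)).ne', Real.Gamma_mul_Gamma_one_sub,
    Real.log_div Real.pi_ne_zero (sin_pi_mul_pos hα0 hα1).ne']

lemma sum_frullaniLog (hα0 : 0 < α) (hα1 : α < 1) (n : ℕ) :
    ∑ k ∈ Finset.range (n + 1), frullaniLog α k =
      Real.BohrMollerup.logGammaSeq α n + Real.BohrMollerup.logGammaSeq (1 - α) n -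
        2 * Real.BohrMollerup.logGammaSeq (1 / 2) n := by
  have : 0 < 1 - α := sub_pos.mpr hα1
  have hterm (k : ℕ) : frullaniLog α k =
      2 * Real.log (1 / 2 + k) - Real.log (α + k) - Real.log (1 - α + k) := by
    rw [frullaniLog, Real.log_div (by positivity) (by positivity),
      Real.log_div (by positivity) (by positivity)]
    simp only [add_comm (k : ℝ)]
    ring
  simp only [hterm, Finset.sum_sub_distrib, ← Finset.mul_sum, Real.BohrMollerup.logGammaSeq]
  ring

lemma hasSum_frullaniLog (hα0 : 0 < α) (hα1 : α < 1) :
    HasSum (frullaniLog α) (-Real.log (Real.sin (Real.pi * α))) := by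
  rw [hasSum_iff_tendsto_nat_of_nonneg (frullaniLog_nonneg hα0 hα1), ← tendsto_add_atTop_iff_nat 1]
  have hlim := ((Real.BohrMollerup.tendsto_log_gamma hα0).add
    (Real.BohrMollerup.tendsto_log_gamma (sub_pos.mpr hα1))).sub
    ((Real.BohrMollerup.tendsto_log_gamma one_half_pos).const_mul 2)
  have hvalue : Real.log (Real.Gamma α) + Real.log (Real.Gamma (1 - α)) -
      2 * Real.log (Real.Gamma (1 / 2)) = -Real.log (Real.sin (Real.pi * α)) := by
    rw [log_Gamma_add_log_Gamma_one_sub hα0 hα1, Real.Gamma_one_half_eq,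
      Real.log_sqrt Real.pi_pos.le]
    ring
  rw [hvalue] at hlim
  exact hlim.congr fun n ↦ (sum_frullaniLog hα0 hα1 n).symm

lemma hasSum_frullaniTerm (α : ℝ) {x : ℝ} (hx : 0 < x) :
    HasSum (fun k ↦ (frullaniTerm α k x : ℂ)) (regKernel α x - regKernel (1 / 2 : ℝ) x) := by
  have hterm (k : ℕ) : (frullaniTerm α k x : ℂ) =
      (x : ℂ)⁻¹ * (Complex.exp (-(α * x)) + Complex.exp (-((1 - α) * x)) -
        2 * Complex.exp (-(1 / 2 * x))) * Complex.exp (-x) ^ k := by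
    have hsplit (c : ℂ) : Complex.exp (-((k + c) * x)) =
        Complex.exp (-(c * x)) * Complex.exp (-x) ^ k := by
      rw [← Complex.exp_nat_mul, ← Complex.exp_add]; ring_nf
    simp only [frullaniTerm, smul_eq_mul]
    push_cast
    rw [hsplit, hsplit, hsplit]
    ring
  have hvalue : regKernel α x - regKernel (1 / 2 : ℝ) x =
      (x : ℂ)⁻¹ * (Complex.exp (-(α * x)) + Complex.exp (-((1 - α) * x)) -
        2 * Complex.exp (-(1 / 2 * x))) * (1 - Complex.exp (-x))⁻¹ := by
    simp only [regKernel, pairKernel]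
    push_cast
    ring_nf
  have hnorm : ‖Complex.exp (-x)‖ < 1 := by
    rw [Complex.norm_exp]
    simpa using hx
  simp only [hterm, hvalue]
  exact (hasSum_geometric_of_norm_lt_one hnorm).mul_left _

lemma integral_regKernel_sub_half (hα0 : 0 < α) (hα1 : α < 1) :
    ∫ x in Ioi (0 : ℝ), (regKernel α x - regKernel (1 / 2 : ℝ) x) =
      ((-Real.log (Real.sin (Real.pi * α)) : ℝ) : ℂ) := by
  have hnorm (k : ℕ) : ∫ x in Ioi (0 : ℝ), ‖frullaniTerm α k x‖ = frullaniLog α k := by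
    rw [← integral_frullaniTerm hα0 hα1]
    exact setIntegral_congr_fun measurableSet_Ioi fun x hx ↦
      Real.norm_of_nonneg (frullaniTerm_nonneg α k (le_of_lt hx))
  have hlog := hasSum_frullaniLog hα0 hα1
  have hswap := hasSum_integral_of_summable_integral_norm (integrableOn_frullaniTerm hα0 hα1)
    (by simpa only [hnorm] using hlog.summable)
  simp only [integral_frullaniTerm hα0 hα1] at hswap
  rw [← hswap.unique hlog, ← integral_complex_ofReal]
  refine setIntegral_congr_fun measurableSet_Ioi fun x hx ↦ ?_
  exact ((Complex.ofReal_tsum _).trans (hasSum_frullaniTerm α hx).tsum_eq).symm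

/-- The function `coth x - 1 / x`, which turns `regKernel (1 / 2)` into a Frullani integrand. -/
def langevin (x : ℝ) : ℝ := Real.cosh x / Real.sinh x - x⁻¹

lemma sinh_le_mul_cosh {x : ℝ} (hx : 0 ≤ x) : Real.sinh x ≤ x * Real.cosh x := by
  have hmono : MonotoneOn (fun y ↦ y * Real.cosh y - Real.sinh y) (Ici 0) := by
    refine monotoneOn_of_deriv_nonneg (convex_Ici 0) (by fun_prop) (by fun_prop) fun y hy ↦ ?_
    have hderiv : HasDerivAt (fun y ↦ y * Real.cosh y - Real.sinh y) (y * Real.sinh y) y := by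
      simpa using ((hasDerivAt_id' y).fun_mul (Real.hasDerivAt_cosh y)).fun_sub
        (Real.hasDerivAt_sinh y)
    rw [interior_Ici] at hy
    rw [hderiv.deriv]
    exact mul_nonneg (le_of_lt hy) (Real.sinh_nonneg_iff.mpr (le_of_lt hy))
  simpa using hmono self_mem_Ici hx hx

lemma langevin_nonneg {x : ℝ} (hx : 0 < x) : 0 ≤ langevin x := by
  rw [langevin, sub_nonneg, inv_eq_one_div, div_le_div_iff₀ hx (Real.sinh_pos_iff.mpr hx), one_mul,
    mul_comm]
  exact sinh_le_mul_cosh hx.le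

lemma langevin_le {x : ℝ} (hx : 0 < x) : langevin x ≤ Real.sinh x := by
  have hsinh := Real.sinh_pos_iff.mpr hx
  rw [langevin, sub_le_iff_le_add, div_le_iff₀ hsinh]
  have hle : 1 ≤ x⁻¹ * Real.sinh x := by
    rw [← div_eq_inv_mul, one_le_div hx]
    exact Real.self_le_sinh_iff.mpr hx.le
  nlinarith [Real.cosh_sq x, Real.one_le_cosh x]

lemma tendsto_langevin_zero : Tendsto langevin (𝓝[>] 0) (𝓝 0) := by
  have hsinh : Tendsto Real.sinh (𝓝[>] 0) (𝓝 0) :=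
    (Real.continuous_sinh.tendsto' 0 0 Real.sinh_zero).mono_left nhdsWithin_le_nhds
  refine tendsto_of_tendsto_of_tendsto_of_le_of_le' tendsto_const_nhds hsinh ?_ ?_
  · filter_upwards [self_mem_nhdsWithin] with x hx using langevin_nonneg hx
  · filter_upwards [self_mem_nhdsWithin] with x hx using langevin_le hx

lemma tendsto_langevin_atTop : Tendsto langevin atTop (𝓝 1) := by
  have hexp : Tendsto (fun x : ℝ ↦ Real.exp (-(2 * x))) atTop (𝓝 0) :=
    Real.tendsto_exp_neg_atTop_nhds_zero.comp (tendsto_id.const_mul_atTop two_pos)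
  have hlim : Tendsto (fun x : ℝ ↦ (1 + Real.exp (-(2 * x))) / (1 - Real.exp (-(2 * x))) - x⁻¹)
      atTop (𝓝 1) := by
    simpa using ((hexp.const_add 1).div (hexp.const_sub 1) (by simp)).sub tendsto_inv_atTop_zero
  refine hlim.congr fun x ↦ ?_
  have hcosh : Real.cosh x = Real.exp x / 2 * (1 + Real.exp (-(2 * x))) := by
    rw [Real.cosh_eq, show -x = x + -(2 * x) by ring, Real.exp_add]; ring
  have hsinh : Real.sinh x = Real.exp x / 2 * (1 - Real.exp (-(2 * x))) := by
    rw [Real.sinh_eq, show -x = x + -(2 * x) by ring, Real.exp_add]; ring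
  rw [langevin, hcosh, hsinh, mul_div_mul_left _ _ (by positivity)]

lemma pairKernel_half (w : ℂ) : pairKernel (1 / 2 : ℝ) w = (Complex.sinh (w / 2))⁻¹ := by
  have hsq : Complex.exp (-w) = Complex.exp (-(w / 2)) * Complex.exp (-(w / 2)) := by
    rw [← Complex.exp_add]; ring_nf
  have hhalf : Complex.exp (-((1 - (1 / 2 : ℝ)) * w)) = Complex.exp (-(w / 2)) := by
    push_cast; ring_nf
  have hhalf' : Complex.exp (-((1 / 2 : ℝ) * w)) = Complex.exp (-(w / 2)) := by
    push_cast; ring_nf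
  rw [pairKernel, hhalf, hhalf', hsq, Complex.sinh, Complex.exp_neg]
  have hne := Complex.exp_ne_zero (w / 2)
  field_simp
  ring

lemma langevin_sub_langevin_two_mul {x : ℝ} (hx : x ≠ 0) :
    langevin x - langevin (2 * x) = (Real.sinh (2 * x))⁻¹ - (2 * x)⁻¹ := by
  have hsinh : Real.sinh x ≠ 0 := Real.sinh_ne_zero.mpr hx
  have hcosh : Real.cosh x ≠ 0 := (Real.cosh_pos x).ne'
  rw [langevin, langevin, Real.sinh_two_mul, Real.cosh_two_mul, Real.cosh_sq]
  field_simp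
  linear_combination 2 * x * Real.cosh_sq x

lemma regKernel_half {x : ℝ} (hx : x ≠ 0) :
    regKernel (1 / 2 : ℝ) x = ((x⁻¹ • (langevin (1 / 4 * x) - langevin (1 / 2 * x)) : ℝ) : ℂ) := by
  have hdouble : 1 / 2 * x = 2 * (1 / 4 * x) := by ring
  rw [hdouble, langevin_sub_langevin_two_mul (by positivity), regKernel, pairKernel_half]
  have hcast : Complex.sinh (x / 2) = (Real.sinh (2 * (1 / 4 * x)) : ℂ) := by
    push_cast
    ring_nf
  rw [hcast, smul_eq_mul]
  push_cast
  ring_nf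

lemma integral_regKernel_half :
    ∫ x in Ioi (0 : ℝ), regKernel (1 / 2 : ℝ) x = ((-Real.log 2 : ℝ) : ℂ) := by
  have hcongr : EqOn (fun x : ℝ ↦ regKernel (1 / 2 : ℝ) x)
      (fun x ↦ ((x⁻¹ • (langevin (1 / 4 * x) - langevin (1 / 2 * x)) : ℝ) : ℂ)) (Ioi 0) :=
    fun x hx ↦ regKernel_half (ne_of_gt hx)
  have hint : IntegrableOn
      (fun x : ℝ ↦ x⁻¹ • (langevin (1 / 4 * x) - langevin (1 / 2 * x))) (Ioi 0) := by
    simpa [IntegrableOn] using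
      ((integrableOn_regKernel one_half_pos one_half_lt_one).congr_fun hcongr measurableSet_Ioi).re
  have hloc : LocallyIntegrableOn langevin (Ioi 0) := by
    refine ContinuousOn.locallyIntegrableOn (fun x (hx : 0 < x) ↦ ?_) measurableSet_Ioi
    have hsinh : Real.sinh x ≠ 0 := (Real.sinh_pos_iff.mpr hx).ne'
    refine ContinuousAt.continuousWithinAt ?_
    unfold langevin
    fun_prop (disch := first | assumption | exact hx.ne')
  rw [setIntegral_congr_fun measurableSet_Ioi hcongr, integral_complex_ofReal,
    Frullani.integral_Ioi_eq hloc (by norm_num) (by norm_num) tendsto_langevin_zero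
      tendsto_langevin_atTop hint]
  norm_num

theorem integral_regKernel (hα0 : 0 < α) (hα1 : α < 1) :
    ∫ x in Ioi (0 : ℝ), regKernel α x =
      ((-Real.log (2 * Real.sin (Real.pi * α)) : ℝ) : ℂ) := by
  have hhalf := integrableOn_regKernel one_half_pos one_half_lt_one
  have hsub := integral_regKernel_sub_half hα0 hα1
  rw [integral_sub (integrableOn_regKernel hα0 hα1) hhalf, integral_regKernel_half,
    sub_eq_iff_eq_add] at hsub
  rw [hsub, Real.log_mul two_ne_zero (sin_pi_mul_pos hα0 hα1).ne', neg_add, add_comm]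
  push_cast
  rfl

end RegularizedKernel

section MinorArcs

open Finset

lemma one_sub_cos_eq_two_mul_sin_sq (x : ℝ) : 1 - Real.cos x = 2 * Real.sin (x / 2) ^ 2 := by
  rw [Real.sin_sq_eq_half_sub, mul_div_cancel₀ _ two_ne_zero]
  ring

lemma one_sub_cos_sub_le (x y : ℝ) :
    1 - Real.cos (x - y) ≤ 2 * (1 - Real.cos x) + 2 * (1 - Real.cos y) := by
  rw [Real.cos_sub]
  nlinarith [sq_nonneg (Real.sin x + Real.sin y), sq_nonneg (Real.cos x + Real.cos y - 2),
    Real.sin_sq_add_cos_sq x, Real.sin_sq_add_cos_sq y]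

lemma abs_sin_nat_mul_le (k : ℕ) (x : ℝ) : |Real.sin (k * x)| ≤ k * |Real.sin x| := by
  induction k with
  | zero => simp
  | succ k ih =>
    calc |Real.sin ((k + 1 : ℕ) * x)|
        = |Real.sin (k * x) * Real.cos x + Real.cos (k * x) * Real.sin x| := by
          rw [← Real.sin_add]; push_cast; ring_nf
      _ ≤ |Real.sin (k * x)| * |Real.cos x| + |Real.cos (k * x)| * |Real.sin x| := by
          rw [← abs_mul, ← abs_mul]
          exact abs_add_le _ _
      _ ≤ k * |Real.sin x| * 1 + 1 * |Real.sin x| := by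
          gcongr
          exacts [Real.abs_cos_le_one x, Real.abs_cos_le_one _]
      _ = (k + 1 : ℕ) * |Real.sin x| := by push_cast; ring

lemma one_sub_cos_nat_mul_le (k : ℕ) (x : ℝ) :
    1 - Real.cos (k * x) ≤ k ^ 2 * (1 - Real.cos x) := by
  rw [one_sub_cos_eq_two_mul_sin_sq, one_sub_cos_eq_two_mul_sin_sq x, mul_left_comm, ← mul_pow,
    mul_div_assoc]
  gcongr 2 * ?_
  rw [sq_le_sq, abs_mul, Nat.abs_cast]
  exact abs_sin_nat_mul_le k (x / 2)

lemma two_div_pi_sq_mul_sq_le {x : ℝ} (hx : |x| ≤ Real.pi) :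
    2 / Real.pi ^ 2 * x ^ 2 ≤ 1 - Real.cos x := by
  linarith [Real.cos_le_one_sub_mul_cos_sq hx]

/-- How much cancellation a sum of the unit vectors in the directions `x + j y`, `j < 2M`, has:
this bounds from below the loss on the minor arcs. -/
def cosDefectSum (M : ℕ) (x y : ℝ) : ℝ := ∑ j ∈ range (2 * M), (1 - Real.cos (x + j * y))

variable {M : ℕ} (x y : ℝ)

lemma sum_shift_le_cosDefectSum {d : ℕ} (hd : d ≤ M) :
    ∑ j ∈ range M, (1 - Real.cos (x + (d + j : ℕ) * y)) ≤ cosDefectSum M x y := by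
  have hreindex := sum_Ico_eq_sum_range (fun j : ℕ ↦ 1 - Real.cos (x + j * y)) d (d + M)
  rw [Nat.add_sub_cancel_left] at hreindex
  rw [← hreindex, cosDefectSum, range_eq_Ico]
  exact sum_le_sum_of_subset_of_nonneg (Ico_subset_Ico d.zero_le (by lia))
    fun _ _ _ ↦ sub_nonneg.mpr (Real.cos_le_one _)

lemma mul_one_sub_cos_mul_le_cosDefectSum {d : ℕ} (hd : d ≤ M) :
    M * (1 - Real.cos (d * y)) ≤ 4 * cosDefectSum M x y := by
  have hsplit (j : ℕ) : 1 - Real.cos (d * y) ≤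
      2 * (1 - Real.cos (x + (d + j : ℕ) * y)) + 2 * (1 - Real.cos (x + (0 + j : ℕ) * y)) := by
    convert one_sub_cos_sub_le (x + (d + j : ℕ) * y) (x + (0 + j : ℕ) * y) using 3
    push_cast
    ring
  have hsum := sum_le_sum fun j (_ : j ∈ range M) ↦ hsplit j
  rw [sum_const, card_range, nsmul_eq_mul, sum_add_distrib, ← mul_sum, ← mul_sum] at hsum
  linarith [sum_shift_le_cosDefectSum x y hd, sum_shift_le_cosDefectSum x y M.zero_le]

lemma mul_one_sub_cos_le_cosDefectSum :
    M * (1 - Real.cos x) ≤ 10 * cosDefectSum M x y := by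
  rcases M.eq_zero_or_pos with rfl | hM
  · simp [cosDefectSum]
  have hmul (j : ℕ) (hj : j ∈ range M) :
      1 - Real.cos (j * y) ≤ 4 * cosDefectSum M x y / M := by
    rw [le_div_iff₀' (by positivity)]
    exact mul_one_sub_cos_mul_le_cosDefectSum x y (mem_range.mp hj).le
  have hsplit (j : ℕ) : 1 - Real.cos x ≤
      2 * (1 - Real.cos (x + (0 + j : ℕ) * y)) + 2 * (1 - Real.cos (j * y)) := by
    simpa using one_sub_cos_sub_le (x + j * y) (j * y)
  have hsum := sum_le_sum fun j (hj : j ∈ range M) ↦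
    (hsplit j).trans (add_le_add_right (mul_le_mul_of_nonneg_left (hmul j hj) zero_le_two) _)
  rw [sum_const, card_range, nsmul_eq_mul, sum_add_distrib, ← mul_sum, sum_const, card_range,
    nsmul_eq_mul] at hsum
  have hcancel : (M : ℝ) * (2 * (4 * cosDefectSum M x y / M)) = 8 * cosDefectSum M x y := by
    field_simp
    ring
  linarith [sum_shift_le_cosDefectSum x y M.zero_le]

lemma mul_one_sub_cos_combination_le_cosDefectSum (hM : 1 ≤ M) (u v : ℕ) :
    M * (1 - Real.cos (u * x - v * y)) ≤ (20 * u ^ 2 + 8 * v ^ 2) * cosDefectSum M x y := by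
  have hy := mul_one_sub_cos_mul_le_cosDefectSum x y hM
  have hx := mul_one_sub_cos_le_cosDefectSum (M := M) x y
  rw [Nat.cast_one, one_mul] at hy
  calc M * (1 - Real.cos (u * x - v * y))
      ≤ M * (2 * (u ^ 2 * (1 - Real.cos x)) + 2 * (v ^ 2 * (1 - Real.cos y))) := by
        grw [one_sub_cos_sub_le, one_sub_cos_nat_mul_le, one_sub_cos_nat_mul_le]
    _ = 2 * u ^ 2 * (M * (1 - Real.cos x)) + 2 * v ^ 2 * (M * (1 - Real.cos y)) := by ring
    _ ≤ 2 * u ^ 2 * (10 * cosDefectSum M x y) + 2 * v ^ 2 * (4 * cosDefectSum M x y) := by gcongr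
    _ = (20 * u ^ 2 + 8 * v ^ 2) * cosDefectSum M x y := by ring

variable {y}

lemma exists_le_abs_mul_le_pi_min_sq_le (M : ℕ) (hy : |y| ≤ Real.pi) :
    ∃ d ≤ M, |d * y| ≤ Real.pi ∧ min ((M * y) ^ 2) 1 ≤ (d * y) ^ 2 := by
  rcases le_or_gt |M * y| Real.pi with hMy | hMy
  · exact ⟨M, le_rfl, hMy, min_le_left _ _⟩
  rw [abs_mul, Nat.abs_cast] at hMy
  have hy0 : 0 < |y| := by
    by_contra! h
    nlinarith [Real.pi_pos, abs_nonneg y, M.cast_nonneg (α := ℝ)]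
  set d := ⌊Real.pi / |y|⌋₊
  have hdpi : d * |y| ≤ Real.pi := (le_div_iff₀ hy0).mp (Nat.floor_le (by positivity))
  have hdM : d ≤ M := by
    refine Nat.floor_le_of_le ?_
    exact ((div_lt_iff₀ hy0).mpr hMy).le
  have hlt : Real.pi < (d + 1) * |y| := (div_lt_iff₀ hy0).mp (Nat.lt_floor_add_one _)
  have hd1 : (1 : ℝ) ≤ d := by
    exact_mod_cast Nat.le_floor (by rwa [Nat.cast_one, one_le_div hy0])
  refine ⟨d, hdM, by rwa [abs_mul, Nat.abs_cast], (min_le_right _ _).trans ?_⟩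
  rw [← sq_abs, abs_mul, Nat.abs_cast]
  have hhalf : 1 ≤ d * |y| := by nlinarith [Real.pi_gt_three]
  exact one_le_pow₀ hhalf

lemma mul_min_sq_one_le_cosDefectSum (hy : |y| ≤ Real.pi) :
    M * min ((M * y) ^ 2) 1 ≤ 2 * Real.pi ^ 2 * cosDefectSum M x y := by
  obtain ⟨d, hdM, hdpi, hmin⟩ := exists_le_abs_mul_le_pi_min_sq_le M hy
  calc M * min ((M * y) ^ 2) 1
      ≤ M * (d * y) ^ 2 := by gcongr
    _ = Real.pi ^ 2 / 2 * (M * (2 / Real.pi ^ 2 * (d * y) ^ 2)) := by field_simp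
    _ ≤ Real.pi ^ 2 / 2 * (M * (1 - Real.cos (d * y))) := by
        gcongr
        exact two_div_pi_sq_mul_sq_le hdpi
    _ ≤ Real.pi ^ 2 / 2 * (4 * cosDefectSum M x y) :=
        mul_le_mul_of_nonneg_left (mul_one_sub_cos_mul_le_cosDefectSum x y hdM) (by positivity)
    _ = 2 * Real.pi ^ 2 * cosDefectSum M x y := by ring

lemma cosDefectSum_nonneg (M : ℕ) (x y : ℝ) : 0 ≤ cosDefectSum M x y :=
  sum_nonneg fun _ _ ↦ sub_nonneg.mpr (Real.cos_le_one _)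

lemma one_le_mul_one_sub_cos_of_pi_lt {m θ : ℝ} (hθ : |θ| ≤ Real.pi) (hmθ : Real.pi < |m * θ|) :
    1 ≤ m ^ 2 / 2 * (1 - Real.cos θ) := by
  have hsq : Real.pi ^ 2 ≤ (m * θ) ^ 2 := by
    rw [← sq_abs (m * θ)]
    gcongr
  calc (1 : ℝ) = 1 / Real.pi ^ 2 * Real.pi ^ 2 := by field_simp
    _ ≤ 1 / Real.pi ^ 2 * (m * θ) ^ 2 := by gcongr
    _ = m ^ 2 / 2 * (2 / Real.pi ^ 2 * θ ^ 2) := by ring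
    _ ≤ m ^ 2 / 2 * (1 - Real.cos θ) := by
      gcongr
      exact two_div_pi_sq_mul_sq_le hθ

lemma exists_mul_min_sq_one_le_cosDefectSum {a m : ℕ} (hm : 1 < m) (hcop : a.Coprime m) :
    ∃ C > 0, ∀ M : ℕ, 1 ≤ M → ∀ θ : ℝ, |θ| ≤ Real.pi →
      M * min ((M * θ) ^ 2) 1 ≤ C * cosDefectSum M (a * θ) (m * θ) := by
  obtain ⟨u, -, hu⟩ := Nat.exists_mul_mod_eq_one_of_coprime hcop hm
  set v := a * u / m
  have hbezout : (a * u : ℝ) = m * v + 1 := by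
    have := Nat.div_add_mod (a * u) m
    rw [hu] at this
    exact_mod_cast this.symm
  have hm0 : (1 : ℝ) ≤ m := by exact_mod_cast hm.le
  refine ⟨2 * Real.pi ^ 2 + m ^ 2 / 2 * (20 * u ^ 2 + 8 * v ^ 2), by positivity,
    fun M hM θ hθ ↦ ?_⟩
  have hS := cosDefectSum_nonneg M (a * θ) (m * θ)
  rw [add_mul]
  rcases le_or_gt |m * θ| Real.pi with hmθ | hmθ
  · refine le_add_of_le_of_nonneg (le_trans ?_ (mul_min_sq_one_le_cosDefectSum _ hmθ))
      (by positivity)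
    gcongr M * min ?_ 1
    rw [sq_le_sq, mul_left_comm, abs_mul (m : ℝ), Nat.abs_cast]
    exact le_mul_of_one_le_left (abs_nonneg _) hm0
  · refine le_add_of_nonneg_of_le (by positivity) ?_
    have hθ_eq : u * (a * θ) - v * (m * θ) = θ := by linear_combination θ * hbezout
    have hcomb := mul_one_sub_cos_combination_le_cosDefectSum (a * θ) (m * θ) hM u v
    rw [hθ_eq] at hcomb
    calc M * min ((M * θ) ^ 2) 1 ≤ M * (m ^ 2 / 2 * (1 - Real.cos θ)) := by
          gcongr
          exact (min_le_right _ _).trans (one_le_mul_one_sub_cos_of_pi_lt hθ hmθ)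
      _ = m ^ 2 / 2 * (M * (1 - Real.cos θ)) := by ring
      _ ≤ m ^ 2 / 2 * ((20 * u ^ 2 + 8 * v ^ 2) * cosDefectSum M (a * θ) (m * θ)) := by gcongr
      _ = _ := by ring

variable (P : ℕ → Prop) [DecidablePred P]

lemma hasSum_re_partSum_sub {t : ℝ} (ht : 0 < t) (θ : ℝ) :
    HasSum (fun k : ℕ ↦
        if P (k + 1) then Real.exp (-t) ^ (k + 1) * (1 - Real.cos ((k + 1 : ℕ) * θ)) else 0)
      ((partSum P (Complex.exp (-t))).re -
        (partSum P (Complex.exp (-(t + θ * Complex.I)))).re) := by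
  have hre := (Complex.hasSum_re (hasSum_partSum P (q := Complex.exp (-t))
    (by simpa [Complex.norm_exp] using ht))).sub
    (Complex.hasSum_re (hasSum_partSum P (q := Complex.exp (-(t + θ * Complex.I)))
    (by simpa [Complex.norm_exp] using ht)))
  refine hre.congr_fun fun k ↦ ?_
  split_ifs
  · have hreal : Complex.exp (-t) ^ (k + 1) = ((Real.exp (-t) ^ (k + 1) : ℝ) : ℂ) := by
      push_cast; rfl
    have hrot : Complex.exp (-(t + θ * Complex.I)) ^ (k + 1) =
        ((Real.exp (-t) ^ (k + 1) : ℝ) : ℂ) *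
          Complex.exp (((-((k + 1 : ℕ) * θ) : ℝ) : ℂ) * Complex.I) := by
      rw [neg_add, Complex.exp_add, mul_pow, hreal, ← Complex.exp_nat_mul]
      push_cast
      ring_nf
    rw [hrot, hreal, Complex.re_ofReal_mul, Complex.ofReal_re, Complex.exp_ofReal_mul_I_re,
      Real.cos_neg]
    ring
  · simp

variable {P} {a m : ℕ}

lemma sum_exp_mul_one_sub_cos_le (ha : 0 < a) (hm : 0 < m) (hP : ∀ j, P (a + m * j)) {t : ℝ}
    (ht : 0 < t) (θ : ℝ) (N : ℕ) :
    ∑ j ∈ range N, Real.exp (-t) ^ (a + m * j) * (1 - Real.cos ((a + m * j : ℕ) * θ)) ≤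
      (partSum P (Complex.exp (-t))).re - (partSum P (Complex.exp (-(t + θ * Complex.I)))).re := by
  obtain ⟨b, rfl⟩ := Nat.exists_eq_succ_of_ne_zero ha.ne'
  have hinj : Function.Injective fun j : ℕ ↦ b + m * j := fun i j hij ↦ by
    simpa [hm.ne'] using hij
  have hle := sum_le_hasSum ((range N).map ⟨_, hinj⟩) (fun k _ ↦ ?_)
    (hasSum_re_partSum_sub P ht θ)
  · rw [sum_map] at hle
    refine (sum_congr rfl fun j _ ↦ ?_).trans_le hle
    have hindex : b.succ + m * j = b + m * j + 1 := Nat.succ_add b (m * j)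
    have hPj : P (b + m * j + 1) := hindex ▸ hP j
    simp only [Function.Embedding.coeFn_mk, hindex, if_pos hPj]
  · split_ifs
    · exact mul_nonneg (by positivity) (sub_nonneg.mpr (Real.cos_le_one _))
    · exact le_rfl

lemma exp_neg_le_exp_neg_pow {t : ℝ} (ht : 0 ≤ t) (ht1 : t ≤ 1) {M j : ℕ} (hM : M * t ≤ 2)
    (hj : j ≤ 2 * M) : Real.exp (-(a + 4 * m)) ≤ Real.exp (-t) ^ (a + m * j) := by
  have hj' : (j : ℝ) ≤ 2 * M := by exact_mod_cast hj
  rw [← Real.exp_nat_mul, Real.exp_le_exp, mul_neg, neg_le_neg_iff]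
  push_cast
  calc (a + m * j) * t ≤ (a + m * (2 * M)) * t := by gcongr
    _ = a * t + 2 * m * (M * t) := by ring
    _ ≤ a * 1 + 2 * m * 2 := by gcongr
    _ = a + 4 * m := by ring

theorem exists_min_sq_div_le_re_partSum_sub (ha : 0 < a) (hm : 1 < m) (hcop : a.Coprime m)
    (hP : ∀ j, P (a + m * j)) :
    ∃ c > 0, ∀ t θ : ℝ, 0 < t → t ≤ 1 → |θ| ≤ Real.pi → c * (min ((θ / t) ^ 2) 1 / t) ≤
      (partSum P (Complex.exp (-t))).re - (partSum P (Complex.exp (-(t + θ * Complex.I)))).re := by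
  obtain ⟨C, hC, hbound⟩ := exists_mul_min_sq_one_le_cosDefectSum hm hcop
  refine ⟨Real.exp (-(a + 4 * m)) / C, by positivity, fun t θ ht ht1 hθ ↦ ?_⟩
  set M := ⌈1 / t⌉₊
  have hM_ge : 1 / t ≤ M := Nat.le_ceil _
  have hM_le : M * t ≤ 2 := by
    have hlt : (M : ℝ) < 1 / t + 1 := Nat.ceil_lt_add_one (by positivity)
    calc M * t ≤ (1 / t + 1) * t := by gcongr
      _ = 1 + t := by field_simp
      _ ≤ 2 := by linarith
  calc Real.exp (-(a + 4 * m)) / C * (min ((θ / t) ^ 2) 1 / t)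
      = Real.exp (-(a + 4 * m)) / C * (1 / t * min ((1 / t * θ) ^ 2) 1) := by ring_nf
    _ ≤ Real.exp (-(a + 4 * m)) / C * (M * min ((M * θ) ^ 2) 1) := by
        rw [mul_pow, mul_pow]
        gcongr
    _ ≤ Real.exp (-(a + 4 * m)) / C * (C * cosDefectSum M (a * θ) (m * θ)) :=
        mul_le_mul_of_nonneg_left (hbound M (Nat.ceil_pos.mpr (by positivity)) θ hθ)
          (by positivity)
    _ = ∑ j ∈ range (2 * M),
          Real.exp (-(a + 4 * m)) * (1 - Real.cos ((a + m * j : ℕ) * θ)) := by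
        rw [← mul_assoc, div_mul_cancel₀ _ hC.ne', cosDefectSum, mul_sum]
        refine sum_congr rfl fun j _ ↦ ?_
        push_cast
        ring_nf
    _ ≤ ∑ j ∈ range (2 * M),
          Real.exp (-t) ^ (a + m * j) * (1 - Real.cos ((a + m * j : ℕ) * θ)) :=
        sum_le_sum fun j hj ↦ mul_le_mul_of_nonneg_right
          (exp_neg_le_exp_neg_pow ht.le ht1 hM_le (mem_range.mp hj).le)
          (sub_nonneg.mpr (Real.cos_le_one _))
    _ ≤ _ := sum_exp_mul_one_sub_cos_le ha (by lia) hP ht θ (2 * M)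

end MinorArcs

section SaddlePoint

open MeasureTheory Set

lemma exists_exp_neg_mul_min_sq_le {c : ℝ} (hc : 0 < c) {B : ℝ} (hB : 0 ≤ B) :
    ∃ K > 0, ∀ N u : ℝ, 0 ≤ N → u ^ 2 ≤ B * N ^ 3 →
      Real.exp (-(c * min (u ^ 2) N)) ≤ K * (1 + u ^ 2)⁻¹ := by
  refine ⟨1 + 1 / c + 6 * B / c ^ 3, by positivity, fun N u hN hu ↦ ?_⟩
  rw [← div_eq_mul_inv, le_div_iff₀ (by positivity), Real.exp_neg, inv_mul_le_iff₀ (by positivity)]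
  rcases le_total (u ^ 2) N with h | h
  · rw [min_eq_left h]
    calc 1 + u ^ 2 ≤ 1 + u ^ 2 + (c * u ^ 2 + 1 / c + (c * u ^ 2 + 1) * (6 * B / c ^ 3)) :=
          le_add_of_nonneg_right (by positivity)
      _ = (c * u ^ 2 + 1) * (1 + 1 / c + 6 * B / c ^ 3) := by field_simp; ring
      _ ≤ _ := by gcongr; exact Real.add_one_le_exp _
  · rw [min_eq_right h]
    have hone : 1 ≤ Real.exp (c * N) := Real.one_le_exp (by positivity)
    have hcube : (c * N) ^ 3 / 6 ≤ Real.exp (c * N) := by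
      simpa [Nat.factorial] using Real.pow_div_factorial_le_exp (c * N) (by positivity) 3
    calc 1 + u ^ 2 ≤ 1 + B * N ^ 3 := by gcongr
      _ = 1 + (c * N) ^ 3 / 6 * (6 * B / c ^ 3) := by field_simp
      _ ≤ Real.exp (c * N) + Real.exp (c * N) * (1 / c) +
          Real.exp (c * N) * (6 * B / c ^ 3) := by
        gcongr
        exact hone.trans (le_add_of_nonneg_right (by positivity))
      _ = _ := by ring

/-- The integrand `exp (Λ z + n z - 2 N)` of Cauchy's formula on the line `re z = A / N`, where
`n = N ^ 2 / A`. The function `A / z + n z` has its saddle point at `z = A / N`, with value `2 N`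
there. -/
def saddleIntegrand (Λ : ℂ → ℂ) (A N θ : ℝ) : ℂ :=
  Complex.exp (Λ ((A / N : ℝ) + θ * Complex.I) +
    (N ^ 2 / A : ℝ) * ((A / N : ℝ) + θ * Complex.I) - (2 * N : ℝ))

/-- The width of the saddle: the scale of `θ` on which `saddleIntegrand` becomes Gaussian. -/
def saddleWidth (A N : ℝ) : ℝ := A / (N * √N)

/-- The part of `saddleIntegrand` over `-π < θ ≤ π`, in the variable `u = θ / saddleWidth A N`. -/
def rescaledIntegrand (Λ : ℂ → ℂ) (A N u : ℝ) : ℂ :=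
  (Ioc (-Real.pi) Real.pi).indicator (saddleIntegrand Λ A N) (u * saddleWidth A N)

variable {Λ : ℂ → ℂ} {A : ℝ} {ℓ : ℂ}

lemma saddleWidth_pos (hA : 0 < A) {N : ℝ} (hN : 0 < N) : 0 < saddleWidth A N :=
  div_pos hA (mul_pos hN (Real.sqrt_pos.mpr hN))

lemma tendsto_saddleWidth : Tendsto (saddleWidth A) atTop (𝓝 0) :=
  (tendsto_id.atTop_mul_atTop₀ Real.tendsto_sqrt_atTop).const_div_atTop A

lemma saddleIntegrand_mul_saddleWidth (hA : A ≠ 0) {N : ℝ} (hN : 0 < N) (u : ℝ) :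
    saddleIntegrand Λ A N (u * saddleWidth A N) =
      Complex.exp (Λ (conePoint (A / N, u / √N)) - A / conePoint (A / N, u / √N) -
        u ^ 2 / (1 + (u / √N : ℝ) * Complex.I)) := by
  have : √N ≠ 0 := (Real.sqrt_pos.mpr hN).ne'
  have hpoint : ((A / N : ℝ) : ℂ) + (u * saddleWidth A N : ℝ) * Complex.I =
      conePoint (A / N, u / √N) := by
    simp only [saddleWidth, conePoint]
    push_cast
    field_simp
  rw [saddleIntegrand, hpoint]
  congr 1
  set y := u / √N with hy
  have hu : u ^ 2 = N * y ^ 2 := by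
    rw [hy, div_pow, Real.sq_sqrt hN.le]
    field_simp
  have hden : 1 + (y : ℂ) * Complex.I ≠ 0 := fun h ↦ by simpa using congrArg Complex.re h
  have hA' : (A : ℂ) ≠ 0 := mod_cast hA
  have hN' : (N : ℂ) ≠ 0 := mod_cast hN.ne'
  have hphase : N * (1 + y * Complex.I) - 2 * N =
      -(N / (1 + y * Complex.I)) - N * y ^ 2 / (1 + y * Complex.I) := by
    field_simp
    linear_combination (y : ℂ) ^ 2 * Complex.I_sq
  have hlinear : ((N ^ 2 / A : ℝ) : ℂ) * conePoint (A / N, y) = N * (1 + y * Complex.I) := by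
    simp only [conePoint]
    push_cast
    field_simp
  have hpole : (A : ℂ) / conePoint (A / N, y) = N / (1 + y * Complex.I) := by
    simp only [conePoint]
    push_cast
    field_simp
  rw [hlinear, hpole, ← Complex.ofReal_pow u, hu]
  push_cast
  linear_combination hphase

lemma tendsto_saddle_conePoint (hA : 0 < A) (u : ℝ) :
    Tendsto (fun N : ℝ ↦ (A / N, u / √N)) atTop (𝓝[>] 0 ×ˢ 𝓝 0) := by
  refine Tendsto.prodMk (tendsto_nhdsWithin_iff.mpr ⟨tendsto_id.const_div_atTop A, ?_⟩)
    (Real.tendsto_sqrt_atTop.const_div_atTop u)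
  filter_upwards [eventually_gt_atTop 0] with N hN using div_pos hA hN

lemma tendsto_rescaledIntegrand (hA : 0 < A)
    (hΛ : Tendsto (fun p ↦ Λ (conePoint p) - A / conePoint p) (𝓝[>] 0 ×ˢ 𝓝 0) (𝓝 ℓ)) (u : ℝ) :
    Tendsto (fun N ↦ rescaledIntegrand Λ A N u) atTop
      (𝓝 (Complex.exp ℓ * (Real.exp (-u ^ 2) : ℝ))) := by
  have hcone := tendsto_saddle_conePoint hA u
  have hden := tendsto_one_add_mul_I.comp (tendsto_snd.comp hcone)
  have hexp := ((hΛ.comp hcone).sub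
    ((tendsto_const_nhds (x := (u : ℂ) ^ 2)).div hden one_ne_zero)).cexp
  have hvalue : Complex.exp (ℓ - (u : ℂ) ^ 2 / 1) = Complex.exp ℓ * (Real.exp (-u ^ 2) : ℝ) := by
    rw [div_one, sub_eq_add_neg, Complex.exp_add]
    push_cast
    rfl
  rw [hvalue] at hexp
  have hθ : Tendsto (fun N ↦ u * saddleWidth A N) atTop (𝓝 0) := by
    simpa using tendsto_saddleWidth.const_mul u
  refine hexp.congr' ?_
  filter_upwards [eventually_gt_atTop 0,
    hθ.eventually (Ioo_mem_nhds (neg_lt_zero.mpr Real.pi_pos) Real.pi_pos)] with N hN hmem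
  rw [rescaledIntegrand, indicator_of_mem (Ioo_subset_Ioc_self hmem),
    saddleIntegrand_mul_saddleWidth hA.ne' hN]
  rfl

lemma norm_saddleIntegrand (hA : A ≠ 0) (N θ : ℝ) :
    ‖saddleIntegrand Λ A N θ‖ = Real.exp ((Λ ((A / N : ℝ) + θ * Complex.I)).re - N) := by
  have hmul : N ^ 2 / A * (A / N) = N := by rw [div_mul_div_cancel₀ hA, sq, mul_self_div_self]
  rw [saddleIntegrand, Complex.norm_exp]
  congr 1
  simp only [Complex.sub_re, Complex.add_re, Complex.re_ofReal_mul, Complex.ofReal_re,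
    Complex.I_re, mul_zero, add_zero, hmul]
  ring

lemma tendsto_re_sub_of_tendsto_conePoint (hA : 0 < A)
    (hΛ : Tendsto (fun p ↦ Λ (conePoint p) - A / conePoint p) (𝓝[>] 0 ×ˢ 𝓝 0) (𝓝 ℓ)) :
    Tendsto (fun N : ℝ ↦ (Λ (A / N : ℝ)).re - N) atTop (𝓝 ℓ.re) := by
  refine ((Complex.continuous_re.tendsto _).comp
    (hΛ.comp (tendsto_saddle_conePoint hA 0))).congr fun N ↦ ?_
  have hpole : (A : ℂ) / ((A / N : ℝ) : ℂ) = (N : ℝ) := by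
    rw [← Complex.ofReal_div, div_div_cancel₀ hA.ne']
  simp only [Function.comp, conePoint, zero_div, Complex.ofReal_zero, zero_mul, add_zero, mul_one,
    hpole, Complex.sub_re, Complex.ofReal_re]

lemma min_sq_div_saddleWidth (hA : 0 < A) {N : ℝ} (hN : 0 < N) (u : ℝ) :
    min ((u * saddleWidth A N / (A / N)) ^ 2) 1 / (A / N) = A⁻¹ * min (u ^ 2) N := by
  have hsq : (u * saddleWidth A N / (A / N)) ^ 2 = u ^ 2 / N := by
    have hsqrt := Real.sq_sqrt hN.le
    have hsqrt0 : √N ≠ 0 := (Real.sqrt_pos.mpr hN).ne'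
    rw [saddleWidth]
    field_simp
    rw [hsqrt]
  rw [hsq, ← div_self hN.ne', min_div_div_right hN.le]
  field_simp

lemma sq_le_of_abs_mul_saddleWidth_le (hA : 0 < A) {N : ℝ} (hN : 0 < N) {u R : ℝ}
    (hu : |u * saddleWidth A N| ≤ R) : u ^ 2 ≤ R ^ 2 / A ^ 2 * N ^ 3 := by
  have hsq : (u * saddleWidth A N) ^ 2 = u ^ 2 * A ^ 2 / N ^ 3 := by
    rw [saddleWidth, mul_pow, div_pow, mul_pow, Real.sq_sqrt hN.le]
    ring
  have hle : u ^ 2 * A ^ 2 / N ^ 3 ≤ R ^ 2 := hsq ▸ sq_le_sq' (abs_le.mp hu).1 (abs_le.mp hu).2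
  rw [div_le_iff₀ (by positivity)] at hle
  rw [div_mul_eq_mul_div, le_div_iff₀ (by positivity)]
  exact hle

lemma exists_norm_rescaledIntegrand_le (hA : 0 < A)
    (hΛ : Tendsto (fun p ↦ Λ (conePoint p) - A / conePoint p) (𝓝[>] 0 ×ˢ 𝓝 0) (𝓝 ℓ)) {c : ℝ}
    (hc : 0 < c) (hdecay : ∀ᶠ t : ℝ in 𝓝[>] 0, ∀ θ : ℝ, |θ| ≤ Real.pi →
      (Λ (t + θ * Complex.I)).re ≤ (Λ t).re - c * (min ((θ / t) ^ 2) 1 / t)) :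
    ∃ K, ∀ᶠ N in atTop, ∀ u, ‖rescaledIntegrand Λ A N u‖ ≤ K * (1 + u ^ 2)⁻¹ := by
  obtain ⟨K, hK, hgauss⟩ := exists_exp_neg_mul_min_sq_le (mul_pos hc (inv_pos.mpr hA))
    (B := Real.pi ^ 2 / A ^ 2) (by positivity)
  refine ⟨Real.exp (ℓ.re + 1) * K, ?_⟩
  have hsaddle : Tendsto (fun N : ℝ ↦ A / N) atTop (𝓝[>] 0) :=
    tendsto_fst.comp (tendsto_saddle_conePoint hA 0)
  filter_upwards [eventually_gt_atTop 0, hsaddle.eventually hdecay,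
    (tendsto_re_sub_of_tendsto_conePoint hA hΛ).eventually (gt_mem_nhds (lt_add_one ℓ.re))]
    with N hN hdecayN hreal u
  rw [rescaledIntegrand]
  by_cases hmem : u * saddleWidth A N ∈ Ioc (-Real.pi) Real.pi
  · have habs : |u * saddleWidth A N| ≤ Real.pi := abs_le.mpr ⟨hmem.1.le, hmem.2⟩
    have hdecayθ := hdecayN _ habs
    rw [min_sq_div_saddleWidth hA hN, ← mul_assoc] at hdecayθ
    rw [indicator_of_mem hmem, norm_saddleIntegrand hA.ne']
    calc _ ≤ Real.exp (ℓ.re + 1 + -(c * A⁻¹ * min (u ^ 2) N)) :=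
          Real.exp_le_exp.mpr (by linarith)
      _ = Real.exp (ℓ.re + 1) * Real.exp (-(c * A⁻¹ * min (u ^ 2) N)) := Real.exp_add _ _
      _ ≤ Real.exp (ℓ.re + 1) * (K * (1 + u ^ 2)⁻¹) := by
          gcongr
          exact hgauss N u hN.le (sq_le_of_abs_mul_saddleWidth_le hA hN habs)
      _ = _ := (mul_assoc _ _ _).symm
  · rw [indicator_of_notMem hmem, norm_zero]
    positivity

lemma measurable_rescaledIntegrand {N : ℝ}
    (hmeas : Measurable fun θ : ℝ ↦ Complex.exp (Λ ((A / N : ℝ) + θ * Complex.I))) :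
    Measurable (rescaledIntegrand Λ A N) := by
  have hsaddle : Measurable (saddleIntegrand Λ A N) := by
    have hprod := hmeas.mul (g := fun θ : ℝ ↦ Complex.exp
      ((N ^ 2 / A : ℝ) * ((A / N : ℝ) + θ * Complex.I) - (2 * N : ℝ))) (by fun_prop)
    simp only [Pi.mul_def, ← Complex.exp_add, ← add_sub_assoc] at hprod
    exact hprod
  exact (hsaddle.indicator measurableSet_Ioc).comp (measurable_id.mul_const _)

lemma tendsto_integral_rescaledIntegrand (hA : 0 < A)
    (hmeas : ∀ t : ℝ, 0 < t → Measurable fun θ : ℝ ↦ Complex.exp (Λ (t + θ * Complex.I)))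
    (hΛ : Tendsto (fun p ↦ Λ (conePoint p) - A / conePoint p) (𝓝[>] 0 ×ˢ 𝓝 0) (𝓝 ℓ)) {c : ℝ}
    (hc : 0 < c) (hdecay : ∀ᶠ t : ℝ in 𝓝[>] 0, ∀ θ : ℝ, |θ| ≤ Real.pi →
      (Λ (t + θ * Complex.I)).re ≤ (Λ t).re - c * (min ((θ / t) ^ 2) 1 / t)) :
    Tendsto (fun N ↦ ∫ u, rescaledIntegrand Λ A N u) atTop
      (𝓝 (Complex.exp ℓ * (√Real.pi : ℝ))) := by
  obtain ⟨K, hK⟩ := exists_norm_rescaledIntegrand_le hA hΛ hc hdecay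
  have hgauss : ∫ u : ℝ, Complex.exp ℓ * (Real.exp (-u ^ 2) : ℝ) =
      Complex.exp ℓ * (√Real.pi : ℝ) := by
    rw [integral_const_mul, integral_complex_ofReal]
    simpa using congrArg (fun x : ℝ ↦ Complex.exp ℓ * x) (integral_gaussian 1)
  rw [← hgauss]
  refine tendsto_integral_filter_of_dominated_convergence (fun u ↦ K * (1 + u ^ 2)⁻¹) ?_
    (hK.mono fun N hN ↦ ae_of_all _ hN) (integrable_inv_one_add_sq.const_mul K)
    (ae_of_all _ (tendsto_rescaledIntegrand hA hΛ))
  filter_upwards [eventually_gt_atTop 0] with N hN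
  exact (measurable_rescaledIntegrand (hmeas _ (div_pos hA hN))).aestronglyMeasurable

variable {c : ℕ → ℂ}

lemma integral_rescaledIntegrand (hA : 0 < A)
    (hsum : ∀ z : ℂ, 0 < z.re → HasSum (fun n ↦ c n * Complex.exp (-z) ^ n) (Complex.exp (Λ z)))
    {n : ℕ} (hn : 0 < n) :
    ∫ u, rescaledIntegrand Λ A √(A * n) u =
      (2 * Real.pi * Real.exp (-(2 * √(A * n))) / saddleWidth A √(A * n) : ℝ) * c n := by
  have hAn : 0 < A * n := by positivity
  set N := √(A * n)
  have hN : 0 < N := Real.sqrt_pos.mpr hAn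
  have hindex : N ^ 2 / A = n := by rw [Real.sq_sqrt hAn.le, mul_div_cancel_left₀ _ hA.ne']
  have hcauchy := setIntegral_mul_exp_eq_coeff (t := A / N)
    (F := fun θ ↦ Complex.exp (Λ ((A / N : ℝ) + θ * Complex.I)))
    (fun θ ↦ hsum _ (by simpa using div_pos hA hN)) n
  have hfactor (θ : ℝ) : saddleIntegrand Λ A N θ =
      Complex.exp (Λ ((A / N : ℝ) + θ * Complex.I)) *
        Complex.exp (n * ((A / N : ℝ) + θ * Complex.I)) * Complex.exp (-(2 * N : ℝ)) := by
    rw [saddleIntegrand, hindex, sub_eq_add_neg, Complex.exp_add, Complex.exp_add]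
    push_cast
    rfl
  simp only [rescaledIntegrand]
  rw [Measure.integral_comp_mul_right, integral_indicator measurableSet_Ioc]
  simp_rw [hfactor]
  rw [integral_mul_const, hcauchy, abs_of_pos (inv_pos.mpr (saddleWidth_pos hA hN)),
    Complex.real_smul]
  push_cast
  ring

lemma saddleWidth_sqrt_mul {x : ℝ} (hA : 0 < A) (hx : 0 < x) :
    saddleWidth A √(A * x) = A ^ (1 / 4 : ℝ) * x ^ (-3 / 4 : ℝ) := by
  have hAx : 0 < A * x := mul_pos hA hx
  rw [saddleWidth, Real.sqrt_eq_rpow, Real.sqrt_eq_rpow, ← Real.rpow_mul hAx.le,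
    ← Real.rpow_add hAx, Real.mul_rpow hA.le hx.le, ← div_div, div_eq_mul_inv,
    ← Real.rpow_neg hx.le, ← Real.rpow_one_sub' hA.le (by norm_num)]
  norm_num

theorem tendsto_coeff_mul_rpow_mul_exp (hA : 0 < A)
    (hsum : ∀ z : ℂ, 0 < z.re → HasSum (fun n ↦ c n * Complex.exp (-z) ^ n) (Complex.exp (Λ z)))
    (hΛ : Tendsto (fun p ↦ Λ (conePoint p) - A / conePoint p) (𝓝[>] 0 ×ˢ 𝓝 0) (𝓝 ℓ)) {κ : ℝ}
    (hκ : 0 < κ) (hdecay : ∀ᶠ t : ℝ in 𝓝[>] 0, ∀ θ : ℝ, |θ| ≤ Real.pi →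
      (Λ (t + θ * Complex.I)).re ≤ (Λ t).re - κ * (min ((θ / t) ^ 2) 1 / t)) :
    Tendsto (fun n : ℕ ↦ c n * ((n : ℝ) ^ (3 / 4 : ℝ) * Real.exp (-(2 * √(A * n))) : ℝ)) atTop
      (𝓝 (Complex.exp ℓ * (A ^ (1 / 4 : ℝ) / (2 * √Real.pi) : ℝ))) := by
  have hmeas (t : ℝ) (ht : 0 < t) :
      Measurable fun θ : ℝ ↦ Complex.exp (Λ (t + θ * Complex.I)) :=
    measurable_of_hasSum_exp fun θ ↦ hsum _ (by simpa using ht)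
  have hsqrt : Tendsto (fun n : ℕ ↦ √(A * n)) atTop atTop :=
    Real.tendsto_sqrt_atTop.comp (tendsto_natCast_atTop_atTop.const_mul_atTop hA)
  have hlim := ((tendsto_integral_rescaledIntegrand hA hmeas hΛ hκ hdecay).comp hsqrt).mul_const
    ((A ^ (1 / 4 : ℝ) / (2 * Real.pi) : ℝ) : ℂ)
  have hvalue : Complex.exp ℓ * (√Real.pi : ℝ) * ((A ^ (1 / 4 : ℝ) / (2 * Real.pi) : ℝ) : ℂ) =
      Complex.exp ℓ * (A ^ (1 / 4 : ℝ) / (2 * √Real.pi) : ℝ) := by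
    rw [mul_assoc, ← Complex.ofReal_mul]
    congr 2
    nth_rw 2 [← Real.mul_self_sqrt Real.pi_pos.le]
    field_simp
  rw [hvalue] at hlim
  refine hlim.congr' ?_
  filter_upwards [eventually_gt_atTop 0] with n hn
  have hn' : (0 : ℝ) < n := mod_cast hn
  simp only [Function.comp]
  rw [integral_rescaledIntegrand hA hsum hn, saddleWidth_sqrt_mul hA hn', mul_comm _ (c n),
    mul_assoc, ← Complex.ofReal_mul]
  congr 2
  rw [neg_div, Real.rpow_neg hn'.le]
  field_simp

end SaddlePoint

section SymmetricResidueClasses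

/-- The admissible parts: for `a < m`, the natural numbers congruent to `a` or `-a` modulo `m`. -/
abbrev IsModEqPM (m a k : ℕ) : Prop := k % m = a ∨ k % m = m - a

lemma hasSum_ite_mod_eq {r m : ℕ} (hr : 0 < r) (hrm : r < m) {q : ℂ} (hq : ‖q‖ < 1) :
    HasSum (fun k ↦ if (k + 1) % m = r then q ^ (k + 1) else 0) (q ^ r / (1 - q ^ m)) := by
  obtain ⟨b, rfl⟩ := Nat.exists_eq_succ_of_ne_zero hr.ne'
  have hinj : Function.Injective fun j : ℕ ↦ m * j + b := fun i j hij ↦ by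
    simpa [(Nat.zero_lt_of_lt hrm).ne'] using hij
  have hqm : ‖q ^ m‖ < 1 :=
    norm_pow q m ▸ pow_lt_one₀ (norm_nonneg q) hq (Nat.zero_lt_of_lt hrm).ne'
  rw [← hinj.hasSum_iff]
  · have hterm (j : ℕ) : ((fun k ↦ if (k + 1) % m = b.succ then q ^ (k + 1) else 0) ∘
        fun j ↦ m * j + b) j = q ^ b.succ * (q ^ m) ^ j := by
      have hmod : (m * j + b + 1) % m = b.succ := by
        rw [add_assoc, Nat.mul_add_mod, Nat.mod_eq_of_lt hrm]
      simp only [Function.comp, if_pos hmod]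
      rw [← pow_mul, ← pow_add]
      congr 1
      lia
    simp only [funext hterm, div_eq_mul_inv]
    exact (hasSum_geometric_of_norm_lt_one hqm).mul_left _
  · intro k hk
    refine if_neg fun hmod ↦ hk ⟨(k + 1) / m, ?_⟩
    have hdiv := Nat.div_add_mod (k + 1) m
    simp only
    lia

variable {m a : ℕ}

lemma partSum_isModEqPM (ha : 0 < a) (ham : a < m) (hne : 2 * a ≠ m) {q : ℂ} (hq : ‖q‖ < 1) :
    partSum (IsModEqPM m a) q = (q ^ a + q ^ (m - a)) / (1 - q ^ m) := by
  have hsum := (hasSum_ite_mod_eq ha ham hq).add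
    (hasSum_ite_mod_eq (Nat.sub_pos_of_lt ham) (Nat.sub_lt (ha.trans ham) ha) hq)
  rw [add_div]
  refine (hasSum_partSum (IsModEqPM m a) hq).unique (hsum.congr_fun fun k ↦ ?_)
  by_cases hk : (k + 1) % m = a
  · rw [if_pos (Or.inl hk), if_pos hk, if_neg (by lia), add_zero]
  · simp only [IsModEqPM, hk, false_or, if_false, zero_add]

lemma partSum_isModEqPM_exp_neg (ha : 0 < a) (ham : a < m) (hne : 2 * a ≠ m) {w : ℂ}
    (hw : 0 < w.re) :
    partSum (IsModEqPM m a) (Complex.exp (-w)) = pairKernel (a / m : ℝ) (m * w) := by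
  have hm : (m : ℂ) ≠ 0 := by exact_mod_cast (ha.trans ham).ne'
  rw [partSum_isModEqPM ha ham hne (by simpa [Complex.norm_exp] using hw), pairKernel]
  simp only [← Complex.exp_nat_mul]
  push_cast [Nat.cast_sub ham.le]
  congr 3
  · field_simp
  · field_simp
  · exact mul_neg _ _

lemma hasSum_regKernel_logGenFun (ha : 0 < a) (ham : a < m) (hne : 2 * a ≠ m) {z : ℂ}
    (hz : 0 < z.re) :
    HasSum (fun k : ℕ ↦ m * z * regKernel (a / m : ℝ) ((k + 1) * (m * z)))
      (logGenFun (IsModEqPM m a) (Complex.exp (-z)) - (Real.pi ^ 2 / (3 * m) : ℝ) / z) := by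
  have hm : (m : ℂ) ≠ 0 := by exact_mod_cast (ha.trans ham).ne'
  have hz0 : z ≠ 0 := fun h ↦ by simp [h] at hz
  have hzeta : HasSum (fun k : ℕ ↦ 1 / ((k : ℂ) + 1) ^ 2) ((Real.pi : ℂ) ^ 2 / 6) := by
    have hreal := (hasSum_nat_add_iff' 1).mpr hasSum_zeta_two
    simpa using Complex.hasSum_ofReal.mpr hreal
  have hsum := (hasSum_logGenFun (IsModEqPM m a) (q := Complex.exp (-z))
    (by simpa [Complex.norm_exp] using hz)).sub (hzeta.mul_left (2 / (m * z)))
  have hvalue : 2 / (m * z) * ((Real.pi : ℂ) ^ 2 / 6) = (Real.pi ^ 2 / (3 * m) : ℝ) / z := by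
    push_cast
    field_simp
    norm_num
  rw [hvalue] at hsum
  refine hsum.congr_fun fun k ↦ ?_
  have hk : (k : ℂ) + 1 ≠ 0 := by exact_mod_cast k.succ_ne_zero
  have hre : 0 < ((k + 1) * z).re := by
    have hcast : (k + 1) * z = ((k + 1 : ℝ) : ℂ) * z := by push_cast; rfl
    rw [hcast, Complex.re_ofReal_mul]
    positivity
  have hpow : Complex.exp (-z) ^ (k + 1) = Complex.exp (-((k + 1) * z)) := by
    rw [← Complex.exp_nat_mul]
    push_cast
    ring_nf
  rw [hpow, partSum_isModEqPM_exp_neg ha ham hne hre, regKernel, mul_left_comm (m : ℂ)]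
  field_simp

lemma tendsto_logGenFun_sub (ha : 0 < a) (ham : a < m) (hne : 2 * a ≠ m) :
    Tendsto (fun p ↦ logGenFun (IsModEqPM m a) (Complex.exp (-conePoint p)) -
      (Real.pi ^ 2 / (3 * m) : ℝ) / conePoint p) (𝓝[>] 0 ×ˢ 𝓝 0)
      (𝓝 ((-Real.log (2 * Real.sin (Real.pi * (a / m))) : ℝ) : ℂ)) := by
  have hm : (0 : ℝ) < m := by exact_mod_cast ha.trans ham
  have hα0 : (0 : ℝ) < a / m := by positivity
  have hα1 : (a / m : ℝ) < 1 := (div_lt_one hm).mpr (by exact_mod_cast ham)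
  obtain ⟨K, hK⟩ := exists_norm_regKernel_le hα0 hα1
  have hscale : Tendsto (fun p : ℝ × ℝ ↦ ((m : ℝ) * p.1, p.2)) (𝓝[>] 0 ×ˢ 𝓝 0)
      (𝓝[>] 0 ×ˢ 𝓝 0) := by
    refine Tendsto.prodMk (Tendsto.comp ?_ tendsto_fst) tendsto_snd
    refine tendsto_nhdsWithin_iff.mpr ⟨?_, ?_⟩
    · exact tendsto_nhdsWithin_of_tendsto_nhds
        ((continuous_const_mul (m : ℝ)).tendsto' 0 0 (mul_zero _))
    · filter_upwards [self_mem_nhdsWithin] with t ht using mul_pos hm ht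
  rw [← integral_regKernel hα0 hα1]
  refine ((tendsto_conePoint_mul_tsum hK fun x hx ↦
    continuousAt_regKernel (by simpa using hx)).comp hscale).congr' ?_
  filter_upwards [eventually_pos_prod_abs_le_one] with p ⟨hp, _⟩
  rw [← (hasSum_regKernel_logGenFun ha ham hne (z := conePoint p) (by simpa using hp)).tsum_eq,
    tsum_mul_left, Function.comp, conePoint_mul, Complex.ofReal_natCast]

lemma exists_re_logGenFun_le (ha : 0 < a) (ham : a < m) (hcop : a.Coprime m) :
    ∃ c > 0, ∀ᶠ t : ℝ in 𝓝[>] 0, ∀ θ : ℝ, |θ| ≤ Real.pi →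
      (logGenFun (IsModEqPM m a) (Complex.exp (-(t + θ * Complex.I)))).re ≤
        (logGenFun (IsModEqPM m a) (Complex.exp (-t))).re - c * (min ((θ / t) ^ 2) 1 / t) := by
  obtain ⟨c, hc, hle⟩ := exists_min_sq_div_le_re_partSum_sub (P := IsModEqPM m a) ha (by lia) hcop
    fun j ↦ Or.inl (by rw [Nat.add_mul_mod_self_left, Nat.mod_eq_of_lt ham])
  refine ⟨c, hc, ?_⟩
  filter_upwards [Ioc_mem_nhdsGT one_pos] with t ht θ hθ
  have hnorm : ‖Complex.exp (-(t + θ * Complex.I))‖ = Real.exp (-t) := by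
    simp [Complex.norm_exp]
  have hre := re_logGenFun_le (IsModEqPM m a) (q := Complex.exp (-(t + θ * Complex.I)))
    (hnorm.trans_lt (by simpa using ht.1))
  rw [hnorm, Complex.ofReal_exp, Complex.ofReal_neg] at hre
  exact hre.trans (sub_le_sub_left (hle t θ ht.1 ht.2 hθ) _)

lemma rpow_quarter_div_two_sqrt_pi (x : ℝ) (hx : 0 < x) :
    (Real.pi ^ 2 / (3 * x)) ^ (1 / 4 : ℝ) / (2 * √Real.pi) =
      1 / (2 * 3 ^ (1 / 4 : ℝ) * x ^ (1 / 4 : ℝ)) := by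
  have hsqrt : (Real.pi ^ 2) ^ (1 / 4 : ℝ) = √Real.pi := by
    rw [← Real.rpow_natCast, ← Real.rpow_mul Real.pi_pos.le, Real.sqrt_eq_rpow]
    norm_num
  rw [Real.div_rpow (by positivity) (by positivity), Real.mul_rpow (by norm_num) hx.le, hsqrt]
  field_simp

theorem tendsto_card_restricted_isModEqPM (ha : 0 < a) (ham : a < m) (hne : 2 * a ≠ m)
    (hcop : a.Coprime m) :
    Tendsto (fun n : ℕ ↦ ((Nat.Partition.restricted n (IsModEqPM m a)).card : ℝ) *
      (n : ℝ) ^ (3 / 4 : ℝ) * Real.exp (-(2 * Real.pi / √(3 * m) * √n))) atTop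
      (𝓝 ((Real.sin (Real.pi * a / m))⁻¹ / (4 * 3 ^ (1 / 4 : ℝ) * m ^ (1 / 4 : ℝ)))) := by
  have hm : (0 : ℝ) < m := by exact_mod_cast ha.trans ham
  have hsin : 0 < Real.sin (Real.pi * (a / m)) :=
    sin_pi_mul_pos (by positivity) ((div_lt_one hm).mpr (by exact_mod_cast ham))
  obtain ⟨c, hc, hdecay⟩ := exists_re_logGenFun_le ha ham hcop
  have hlim := tendsto_coeff_mul_rpow_mul_exp (A := Real.pi ^ 2 / (3 * m)) (by positivity)
    (fun z hz ↦ hasSum_card_restricted_exp_logGenFun (IsModEqPM m a) (q := Complex.exp (-z))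
      (by simpa [Complex.norm_exp] using hz)) (tendsto_logGenFun_sub ha ham hne) hc hdecay
  have hreal := (Complex.continuous_re.tendsto _).comp hlim
  rw [← Complex.ofReal_exp, ← Complex.ofReal_mul, Complex.ofReal_re, Real.exp_neg,
    Real.exp_log (by positivity), rpow_quarter_div_two_sqrt_pi _ hm, ← mul_div_assoc] at hreal
  convert hreal using 2 with n
  · have hexponent : 2 * √(Real.pi ^ 2 / (3 * m) * n) = 2 * Real.pi / √(3 * m) * √n := by
      rw [Real.sqrt_mul (by positivity), Real.sqrt_div (by positivity),
        Real.sqrt_sq Real.pi_pos.le]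
      ring
    rw [Function.comp, ← Complex.ofReal_natCast, ← Complex.ofReal_mul, Complex.ofReal_re,
      hexponent, mul_assoc]
  · field_simp
    norm_num

end SymmetricResidueClasses

section ShiftedArgument

lemma tendsto_sub_div_self (s : ℝ) : Tendsto (fun x : ℝ ↦ (x - s) / x) atTop (𝓝 1) := by
  have hlim : Tendsto (fun x : ℝ ↦ 1 - s / x) atTop (𝓝 1) := by
    simpa using (tendsto_id.const_div_atTop s).const_sub 1
  refine hlim.congr' ?_
  filter_upwards [eventually_ne_atTop 0] with x hx
  rw [sub_div, div_self hx]

lemma tendsto_sqrt_sub_sqrt_sub (s : ℝ) : Tendsto (fun x : ℝ ↦ √x - √(x - s)) atTop (𝓝 0) := by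
  have hshift : Tendsto (fun x : ℝ ↦ √(x - s)) atTop atTop :=
    Real.tendsto_sqrt_atTop.comp (tendsto_atTop_add_const_right _ _ tendsto_id)
  refine ((Real.tendsto_sqrt_atTop.atTop_add_atTop hshift).const_div_atTop s).congr' ?_
  filter_upwards [eventually_gt_atTop 0, eventually_ge_atTop s] with x hx hxs
  have hden : √x + √(x - s) ≠ 0 := by positivity
  rw [div_eq_iff hden]
  linear_combination -Real.sq_sqrt hx.le + Real.sq_sqrt (sub_nonneg.mpr hxs)

lemma tendsto_div_rpow_mul_exp_sqrt_sub {f : ℕ → ℝ} {L β r : ℝ} (hL : L ≠ 0)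
    (hf : Tendsto (fun n : ℕ ↦ f n * (n : ℝ) ^ β * Real.exp (-(r * √n))) atTop (𝓝 L)) (s : ℝ) :
    Tendsto (fun n : ℕ ↦ f n / (L * (n - s) ^ (-β) * Real.exp (r * √(n - s)))) atTop (𝓝 1) := by
  have hratio := ((tendsto_sub_div_self s).comp tendsto_natCast_atTop_atTop).rpow_const (p := β)
    (Or.inl one_ne_zero)
  have hexp := (((tendsto_sqrt_sub_sqrt_sub s).comp
    tendsto_natCast_atTop_atTop).const_mul r).rexp
  have hlim := ((hf.div_const L).mul hratio).mul hexp
  rw [div_self hL, Real.one_rpow, mul_zero, Real.exp_zero, one_mul, one_mul] at hlim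
  refine hlim.congr' ?_
  filter_upwards [eventually_gt_atTop 0,
    tendsto_natCast_atTop_atTop.eventually (eventually_gt_atTop s)] with n hn hns
  have hn' : (0 : ℝ) < n := mod_cast hn
  have hns' : (0 : ℝ) < n - s := sub_pos.mpr hns
  simp only [Function.comp]
  rw [Real.div_rpow hns'.le hn'.le, Real.rpow_neg hns'.le, mul_sub, Real.exp_sub, Real.exp_neg]
  field_simp

end ShiftedArgument

theorem p51_asymptotic_general {m a : ℕ} (hm : 2 < m) (ham : a < m) (hcop : a.Coprime m) (s : ℝ) :
    Tendsto (fun n : ℕ ↦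
      (Nat.card {π : n.Partition // ∀ i ∈ π.parts, i % m = a ∨ i % m = m - a} : ℝ) /
        ((Real.sin (Real.pi * a / m))⁻¹ / (4 * 3 ^ (1 / 4 : ℝ) * m ^ (1 / 4 : ℝ)) *
          (n - s) ^ (-(3 / 4) : ℝ) * Real.exp (2 * Real.pi / √(3 * m) * √(n - s))))
      atTop (𝓝 1) := by
  have ha : 0 < a := Nat.pos_of_ne_zero fun h ↦ by
    simp [h] at hcop
    lia
  have hne : 2 * a ≠ m := fun h ↦ by
    have hdvd : a ∣ 1 := hcop ▸ Nat.dvd_gcd dvd_rfl ⟨2, by lia⟩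
    have := Nat.dvd_one.mp hdvd
    lia
  have hcard (n : ℕ) : (Nat.Partition.restricted n (IsModEqPM m a)).card =
      Nat.card {π : n.Partition // ∀ i ∈ π.parts, i % m = a ∨ i % m = m - a} := by
    rw [Nat.card_eq_fintype_card, Fintype.card_subtype]
    rfl
  have hsin : 0 < Real.sin (Real.pi * a / m) := by
    have hm0 : (0 : ℝ) < m := by positivity
    rw [mul_div_assoc]
    exact sin_pi_mul_pos (by positivity) ((div_lt_one hm0).mpr (by exact_mod_cast ham))
  simpa only [hcard] using tendsto_div_rpow_mul_exp_sqrt_sub (by positivity)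
    (tendsto_card_restricted_isModEqPM ha ham hne hcop) s

/-- As `n → ∞`,
`p_{5,±1}(n) ∼ (csc(π/5)/(4·3^{1/4}·5^{1/4}))·(n − 1/60)^{−3/4}·exp((2π/√15)·√(n − 1/60))`. -/
theorem p51_asymptotic :
    Tendsto (fun n : ℕ =>
      (p51 n : ℝ) /
        ((Real.sin (Real.pi / 5))⁻¹ / (4 * (3 : ℝ) ^ ((1 : ℝ) / 4) * (5 : ℝ) ^ ((1 : ℝ) / 4)) *
          ((n : ℝ) - 1 / 60) ^ (-(3 : ℝ) / 4) *
          Real.exp (2 * Real.pi / Real.sqrt 15 * Real.sqrt ((n : ℝ) - 1 / 60))))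
      atTop (nhds 1) := by
  have h := p51_asymptotic_general (m := 5) (a := 1) (by norm_num) (by norm_num) (by norm_num)
    (1 / 60)
  norm_num [p51] at h ⊢
  exact h
end
end
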